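/- In the degenerate case σ = 0, ρ = 1, for every 0 < t < ∞ the following filtration relations hold: 𝔉^{(R₁,R₂)}(t) = 𝔉^V(t) = 𝔉^{X₁+X₂}(t) ⊊ 𝔉^{(X₁,X₂)}(t) = 𝔉^Y(t) = 𝔉^{X₁−X₂}(t) = 𝔉^W(t), where the middle inclusion is strict. -/

import Mathlib

open MeasureTheory ProbabilityTheory Filter Set

noncomputable section

namespace SDEPaper

/-- The signum convention of the paper: `psgn y = 1` for `y > 0`, `= -1` for `y ≤ 0`. -/
def psgn (y : ℝ) : ℝ := if 0 < y then 1 else -1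

variable {Ω : Type*} [m : MeasurableSpace Ω]

/-- The σ-algebra generated by the process `Ξ` on the time interval `[0, t]`. -/
def natSA {E : Type*} [MeasurableSpace E] (Ξ : ℝ → Ω → E) (t : ℝ) : MeasurableSpace Ω :=
  ⨆ s ∈ Icc (0 : ℝ) t, MeasurableSpace.comap (Ξ s) inferInstance

/-- The `μ`-augmentation of a σ-algebra. -/
def augSA (μ : Measure Ω) (m' : MeasurableSpace Ω) : MeasurableSpace Ω :=
  m' ⊔ MeasurableSpace.generateFrom {A : Set Ω | μ A = 0}

/-- `𝔉^Ξ(t)`: the `μ`-augmented σ-algebra generated by the process `Ξ` up to time `t`. -/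
def natFilt {E : Type*} [MeasurableSpace E] (μ : Measure Ω) (Ξ : ℝ → Ω → E) (t : ℝ) :
    MeasurableSpace Ω := augSA μ (natSA Ξ t)

/-- Dyadic left-point Riemann sum of `H` against `X` on `[0,t]`. -/
def rsum (H X : ℝ → Ω → ℝ) (t : ℝ) (n : ℕ) (ω : Ω) : ℝ :=
  ∑ i ∈ Finset.range (2 ^ n),
    H (t * i / 2 ^ n) ω * (X (t * (i + 1) / 2 ^ n) ω - X (t * i / 2 ^ n) ω)

/-- `I = ∫₀^· H dX`: dyadic Riemann sums converge in probability, and `I 0 = 0` a.s. -/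
def IsSI (μ : Measure Ω) (H X I : ℝ → Ω → ℝ) : Prop :=
  (∀ᵐ ω ∂μ, I 0 ω = 0) ∧
  ∀ t : ℝ, 0 ≤ t → TendstoInMeasure μ (fun n => rsum H X t n) atTop (I t)

/-- `I = ∫₀^· H₁ dX₁ + ∫₀^· H₂ dX₂` in the sense of convergence in probability
of dyadic Riemann sums. -/
def IsSI2 (μ : Measure Ω) (H₁ X₁ H₂ X₂ I : ℝ → Ω → ℝ) : Prop :=
  (∀ᵐ ω ∂μ, I 0 ω = 0) ∧
  ∀ t : ℝ, 0 ≤ t →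
    TendstoInMeasure μ (fun n ω => rsum H₁ X₁ t n ω + rsum H₂ X₂ t n ω) atTop (I t)

/-- Dyadic sums of products of increments. -/
def qsum (X Y : ℝ → Ω → ℝ) (t : ℝ) (n : ℕ) (ω : Ω) : ℝ :=
  ∑ i ∈ Finset.range (2 ^ n),
    (X (t * (i + 1) / 2 ^ n) ω - X (t * i / 2 ^ n) ω) *
      (Y (t * (i + 1) / 2 ^ n) ω - Y (t * i / 2 ^ n) ω)

/-- `C = ⟨X,Y⟩`: the quadratic covariation, as a limit in probability of dyadic sums. -/
def IsQV (μ : Measure Ω) (X Y C : ℝ → Ω → ℝ) : Prop :=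
  ∀ t : ℝ, 0 ≤ t → TendstoInMeasure μ (fun n => qsum X Y t n) atTop (C t)

/-- `W` is a standard one-dimensional Brownian motion with respect to the family of
σ-algebras `F` (a filtration contained in the ambient σ-algebra). -/
structure IsBM (μ : Measure Ω) (F : ℝ → MeasurableSpace Ω) (W : ℝ → Ω → ℝ) : Prop where
  le : ∀ t : ℝ, F t ≤ m
  mono : Monotone F
  adapted : ∀ t : ℝ, 0 ≤ t → MeasurableSpace.comap (W t) inferInstance ≤ F t
  init : ∀ᵐ ω ∂μ, W 0 ω = 0
  cont : ∀ᵐ ω ∂μ, Continuous fun t => W t ω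
  law : ∀ s t : ℝ, 0 ≤ s → s ≤ t →
    μ.map (fun ω => W t ω - W s ω) = gaussianReal 0 ((t - s).toNNReal)
  indep : ∀ s t : ℝ, 0 ≤ s → s ≤ t →
    Indep (MeasurableSpace.comap (fun ω => W t ω - W s ω) inferInstance) (F s) μ

/-- `(B₁, B₂)` is a planar Brownian motion: two independent standard Brownian motions
with respect to the common filtration `F`. -/
def IsPlanarBM (μ : Measure Ω) (F : ℝ → MeasurableSpace Ω) (B₁ B₂ : ℝ → Ω → ℝ) : Prop :=
  IsBM μ F B₁ ∧ IsBM μ F B₂ ∧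
    IndepFun (fun ω => (fun t => B₁ t ω)) (fun ω => (fun t => B₂ t ω)) μ

/-- `L` is the (right) local time at the origin of the process `Y`:
`L t = lim_{ε ↓ 0} (4ε)⁻¹ ∫₀ᵗ 1{|Y(s)| < ε} ds`. -/
def IsLocalTime (μ : Measure Ω) (Y L : ℝ → Ω → ℝ) : Prop :=
  ∀ᵐ ω ∂μ, ∀ t : ℝ, 0 ≤ t →
    Tendsto (fun ε : ℝ =>
        (4 * ε)⁻¹ * ∫ s in (0:ℝ)..t, (if |Y s ω| < ε then (1:ℝ) else 0))
      (nhdsWithin 0 (Ioi 0)) (nhds (L t ω))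

/-- A continuous local martingale with respect to the filtration `F`. -/
def IsContLocMart (μ : Measure Ω) (F : Filtration ℝ m) (M : ℝ → Ω → ℝ) : Prop :=
  (∀ᵐ ω ∂μ, Continuous fun t => M t ω) ∧ StronglyAdapted F M ∧
    ∃ τ : ℕ → Ω → ℝ, (∀ n, IsStoppingTime F (fun ω => (τ n ω : WithTop ℝ))) ∧
      (∀ᵐ ω ∂μ, Tendsto (fun n => τ n ω) atTop atTop) ∧
      ∀ n, Martingale (fun t ω => M (min t (τ n ω)) ω) F μ

/-- Orthogonality: the cross-variation `⟨M,N⟩` vanishes identically. -/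
def Orthogonal (μ : Measure Ω) (M N : ℝ → Ω → ℝ) : Prop :=
  IsQV μ M N fun _ _ => 0

/-- Domination: `⟨M⟩(t) = ∫₀ᵗ q(s) d⟨N⟩(s)` for a progressively measurable
process `q` with values in `[0,c]`. -/
def Dominated (μ : Measure Ω) (F : Filtration ℝ m) (M N : ℝ → Ω → ℝ) (c : ℝ) : Prop :=
  ∃ QM QN q : ℝ → Ω → ℝ, IsQV μ M M QM ∧ IsQV μ N N QN ∧
    ProgMeasurable F q ∧ (∀ t ω, q t ω ∈ Icc (0:ℝ) c) ∧
    ∀ᵐ ω ∂μ, ∃ ν : Measure ℝ,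
      (∀ a b : ℝ, 0 ≤ a → a ≤ b → ν (Ioc a b) = ENNReal.ofReal (QN b ω - QN a ω)) ∧
      ∀ t : ℝ, 0 ≤ t → QM t ω = ∫ s in Ioc (0:ℝ) t, q s ω ∂ν

/-- The law of the two-dimensional process `(X₁, X₂)` on path space. -/
def pathLaw (μ : Measure Ω) (X₁ X₂ : ℝ → Ω → ℝ) : Measure (ℝ → ℝ × ℝ) :=
  μ.map fun ω => (fun t => (X₁ t ω, X₂ t ω))
/-- `(X₁, X₂)` solves the system (1.1)-(1.2) driven by `(B₁, B₂)`. -/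
def Solves11 (μ : Measure Ω) (F : ℝ → MeasurableSpace Ω) (g h ρ σ x₁ x₂ : ℝ)
    (B₁ B₂ X₁ X₂ : ℝ → Ω → ℝ) : Prop :=
  (∀ t : ℝ, 0 ≤ t →
    MeasurableSpace.comap (fun ω => (X₁ t ω, X₂ t ω)) inferInstance ≤ F t) ∧
  (∀ᵐ ω ∂μ, Continuous (fun t => X₁ t ω) ∧ Continuous (fun t => X₂ t ω)) ∧
  ∃ I₁ I₂ : ℝ → Ω → ℝ,
    IsSI μ (fun s ω => if X₁ s ω ≤ X₂ s ω then σ else ρ) B₁ I₁ ∧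
    IsSI μ (fun s ω => if X₁ s ω ≤ X₂ s ω then ρ else σ) B₂ I₂ ∧
    ∀ᵐ ω ∂μ, ∀ t : ℝ, 0 ≤ t →
      X₁ t ω = x₁ + (∫ s in (0:ℝ)..t, (if X₁ s ω ≤ X₂ s ω then g else -h)) + I₁ t ω ∧
      X₂ t ω = x₂ + (∫ s in (0:ℝ)..t, (if X₁ s ω ≤ X₂ s ω then -h else g)) + I₂ t ω

/-- `(X₁, X₂)` solves the system (4.7)-(4.8), driven by the single Brownian motion `W`. -/
def Solves47 (μ : Measure Ω) (F : ℝ → MeasurableSpace Ω) (g h x₁ x₂ : ℝ)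
    (W X₁ X₂ : ℝ → Ω → ℝ) : Prop :=
  (∀ t : ℝ, 0 ≤ t →
    MeasurableSpace.comap (fun ω => (X₁ t ω, X₂ t ω)) inferInstance ≤ F t) ∧
  (∀ᵐ ω ∂μ, Continuous (fun t => X₁ t ω) ∧ Continuous (fun t => X₂ t ω)) ∧
  ∃ I₁ I₂ : ℝ → Ω → ℝ,
    IsSI μ (fun s ω => if X₁ s ω ≤ X₂ s ω then (0:ℝ) else 1) W I₁ ∧
    IsSI μ (fun s ω => if X₁ s ω ≤ X₂ s ω then (-1:ℝ) else 0) W I₂ ∧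
    ∀ᵐ ω ∂μ, ∀ t : ℝ, 0 ≤ t →
      X₁ t ω = x₁ + (∫ s in (0:ℝ)..t, (if X₁ s ω ≤ X₂ s ω then g else -h)) + I₁ t ω ∧
      X₂ t ω = x₂ + (∫ s in (0:ℝ)..t, (if X₁ s ω ≤ X₂ s ω then -h else g)) + I₂ t ω

/-- `(X₁, X₂)` solves the system (4.9)-(4.10), driven by the single Brownian motion `V`. -/
def Solves49 (μ : Measure Ω) (F : ℝ → MeasurableSpace Ω) (g h x₁ x₂ : ℝ)
    (V X₁ X₂ : ℝ → Ω → ℝ) : Prop :=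
  (∀ t : ℝ, 0 ≤ t →
    MeasurableSpace.comap (fun ω => (X₁ t ω, X₂ t ω)) inferInstance ≤ F t) ∧
  (∀ᵐ ω ∂μ, Continuous (fun t => X₁ t ω) ∧ Continuous (fun t => X₂ t ω)) ∧
  ∃ I₁ I₂ : ℝ → Ω → ℝ,
    IsSI μ (fun s ω => if X₁ s ω ≤ X₂ s ω then (0:ℝ) else 1) V I₁ ∧
    IsSI μ (fun s ω => if X₁ s ω ≤ X₂ s ω then (1:ℝ) else 0) V I₂ ∧
    ∀ᵐ ω ∂μ, ∀ t : ℝ, 0 ≤ t →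
      X₁ t ω = x₁ + (∫ s in (0:ℝ)..t, (if X₁ s ω ≤ X₂ s ω then g else -h)) + I₁ t ω ∧
      X₂ t ω = x₂ + (∫ s in (0:ℝ)..t, (if X₁ s ω ≤ X₂ s ω then -h else g)) + I₂ t ω

/-- `(X₁, X₂)` solves the system (2.12)-(2.13), driven by the planar BM `(W₁, W₂)`. -/
def Solves212 (μ : Measure Ω) (F : ℝ → MeasurableSpace Ω) (g h ρ σ x₁ x₂ : ℝ)
    (W₁ W₂ X₁ X₂ : ℝ → Ω → ℝ) : Prop :=
  (∀ t : ℝ, 0 ≤ t →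
    MeasurableSpace.comap (fun ω => (X₁ t ω, X₂ t ω)) inferInstance ≤ F t) ∧
  (∀ᵐ ω ∂μ, Continuous (fun t => X₁ t ω) ∧ Continuous (fun t => X₂ t ω)) ∧
  ∃ I₁ I₂ : ℝ → Ω → ℝ,
    IsSI2 μ (fun s ω => if X₁ s ω ≤ X₂ s ω then 0 else ρ) W₁
            (fun s ω => if X₁ s ω ≤ X₂ s ω then σ else 0) W₂ I₁ ∧
    IsSI2 μ (fun s ω => if X₁ s ω ≤ X₂ s ω then -ρ else 0) W₁
            (fun s ω => if X₁ s ω ≤ X₂ s ω then 0 else -σ) W₂ I₂ ∧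
    ∀ᵐ ω ∂μ, ∀ t : ℝ, 0 ≤ t →
      X₁ t ω = x₁ + (∫ s in (0:ℝ)..t, (if X₁ s ω ≤ X₂ s ω then g else -h)) + I₁ t ω ∧
      X₂ t ω = x₂ + (∫ s in (0:ℝ)..t, (if X₁ s ω ≤ X₂ s ω then -h else g)) + I₂ t ω

/-- `(X₁, X₂)` solves the system (2.14)-(2.15), driven by the planar BM `(V₁, V₂)`. -/
def Solves214 (μ : Measure Ω) (F : ℝ → MeasurableSpace Ω) (g h ρ σ x₁ x₂ : ℝ)
    (V₁ V₂ X₁ X₂ : ℝ → Ω → ℝ) : Prop :=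
  (∀ t : ℝ, 0 ≤ t →
    MeasurableSpace.comap (fun ω => (X₁ t ω, X₂ t ω)) inferInstance ≤ F t) ∧
  (∀ᵐ ω ∂μ, Continuous (fun t => X₁ t ω) ∧ Continuous (fun t => X₂ t ω)) ∧
  ∃ I₁ I₂ : ℝ → Ω → ℝ,
    IsSI2 μ (fun s ω => if X₁ s ω ≤ X₂ s ω then 0 else ρ) V₁
            (fun s ω => if X₁ s ω ≤ X₂ s ω then σ else 0) V₂ I₁ ∧
    IsSI2 μ (fun s ω => if X₁ s ω ≤ X₂ s ω then ρ else 0) V₁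
            (fun s ω => if X₁ s ω ≤ X₂ s ω then 0 else σ) V₂ I₂ ∧
    ∀ᵐ ω ∂μ, ∀ t : ℝ, 0 ≤ t →
      X₁ t ω = x₁ + (∫ s in (0:ℝ)..t, (if X₁ s ω ≤ X₂ s ω then g else -h)) + I₁ t ω ∧
      X₂ t ω = x₂ + (∫ s in (0:ℝ)..t, (if X₁ s ω ≤ X₂ s ω then -h else g)) + I₂ t ω

/-- `(X₁, X₂)` solves the system `dX = Σ(X) dU + G(X) dt` of (eq:xSigma), where
`Σ(x) = Σ₊ 1{x₁ > x₂} + Σ₋ 1{x₁ ≤ x₂}`. -/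
def SolvesGen (μ : Measure Ω) (F : ℝ → MeasurableSpace Ω) (g h : ℝ)
    (Sp Sm : Matrix (Fin 2) (Fin 2) ℝ) (x₁ x₂ : ℝ)
    (U₁ U₂ X₁ X₂ : ℝ → Ω → ℝ) : Prop :=
  (∀ t : ℝ, 0 ≤ t →
    MeasurableSpace.comap (fun ω => (X₁ t ω, X₂ t ω)) inferInstance ≤ F t) ∧
  (∀ᵐ ω ∂μ, Continuous (fun t => X₁ t ω) ∧ Continuous (fun t => X₂ t ω)) ∧
  ∃ I₁ I₂ : ℝ → Ω → ℝ,
    IsSI2 μ (fun s ω => if X₁ s ω ≤ X₂ s ω then Sm 0 0 else Sp 0 0) U₁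
            (fun s ω => if X₁ s ω ≤ X₂ s ω then Sm 0 1 else Sp 0 1) U₂ I₁ ∧
    IsSI2 μ (fun s ω => if X₁ s ω ≤ X₂ s ω then Sm 1 0 else Sp 1 0) U₁
            (fun s ω => if X₁ s ω ≤ X₂ s ω then Sm 1 1 else Sp 1 1) U₂ I₂ ∧
    ∀ᵐ ω ∂μ, ∀ t : ℝ, 0 ≤ t →
      X₁ t ω = x₁ + (∫ s in (0:ℝ)..t, (if X₁ s ω ≤ X₂ s ω then g else -h)) + I₁ t ω ∧
      X₂ t ω = x₂ + (∫ s in (0:ℝ)..t, (if X₁ s ω ≤ X₂ s ω then -h else g)) + I₂ t ω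


/-! ### Completeness tools -/

def Cpl {Ω : Type*} [mΩ : MeasurableSpace Ω] (μ : Measure Ω) (G : MeasurableSpace Ω) : Prop :=
  ∀ A : Set Ω, μ A = 0 → MeasurableSet[G] A

lemma cpl_natFilt {Ω : Type*} [mΩ : MeasurableSpace Ω] (μ : Measure Ω) {E : Type*}
    [MeasurableSpace E] (X : ℝ → Ω → E) (t : ℝ) : Cpl μ (natFilt μ X t) := by
  intro A hA
  have h1 : MeasurableSpace.generateFrom {A : Set Ω | μ A = 0} ≤ natFilt μ X t := le_sup_right
  exact h1 A (MeasurableSpace.measurableSet_generateFrom hA)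

lemma meas_natFilt {Ω : Type*} [mΩ : MeasurableSpace Ω] (μ : Measure Ω) {E : Type*}
    [MeasurableSpace E] (X : ℝ → Ω → E) {s t : ℝ} (hs : s ∈ Icc 0 t) :
    @Measurable Ω E (natFilt μ X t) _ (X s) := by
  have h1 : MeasurableSpace.comap (X s) inferInstance ≤ natFilt μ X t := by
    refine le_trans ?_ (le_sup_left : natSA X t ≤ natFilt μ X t)
    exact le_iSup₂ (f := fun s (_ : s ∈ Icc (0:ℝ) t) => MeasurableSpace.comap (X s) inferInstance) s hs
  exact Measurable.mono (comap_measurable (X s)) h1 le_rfl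

lemma natFilt_le {Ω : Type*} {G : MeasurableSpace Ω} [mΩ : MeasurableSpace Ω] {μ : Measure Ω} {E : Type*}
    [MeasurableSpace E] {X : ℝ → Ω → E} {t : ℝ} (hG : Cpl μ G)
    (h : ∀ s ∈ Icc 0 t, @Measurable Ω E G _ (X s)) : natFilt μ X t ≤ G := by
  refine sup_le (iSup₂_le fun s hs => (h s hs).comap_le) ?_
  exact MeasurableSpace.generateFrom_le fun A hA => hG A hA

lemma meas_of_ae_eq {Ω : Type*} {G : MeasurableSpace Ω} [mΩ : MeasurableSpace Ω] {μ : Measure Ω} {E : Type*}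
    [MeasurableSpace E] (hG : Cpl μ G) {f g : Ω → E}
    (hf : @Measurable Ω E G _ f) (hfg : f =ᵐ[μ] g) : @Measurable Ω E G _ g := by
  intro B hB
  have hN : μ {ω | ¬ f ω = g ω} = 0 := hfg
  have : g ⁻¹' B = (f ⁻¹' B ∩ {ω | ¬ f ω = g ω}ᶜ) ∪ (g ⁻¹' B ∩ {ω | ¬ f ω = g ω}) := by
    ext ω
    by_cases h : f ω = g ω <;> simp [h]
  rw [this]
  refine @MeasurableSet.union _ G _ _ (@MeasurableSet.inter _ G _ _ (hf hB)
    (@MeasurableSet.compl _ _ G (hG _ hN))) (hG _ (measure_mono_null inter_subset_right hN))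

lemma meas_of_tendsto_ae {Ω : Type*} {G : MeasurableSpace Ω} [mΩ : MeasurableSpace Ω] {μ : Measure Ω}
    (hG : Cpl μ G) {f : ℕ → Ω → ℝ} {g : Ω → ℝ}
    (hf : ∀ n, @Measurable Ω ℝ G _ (f n))
    (hfg : ∀ᵐ ω ∂μ, Tendsto (fun n => f n ω) atTop (nhds (g ω))) : @Measurable Ω ℝ G _ g := by
  have h1 : @Measurable Ω ℝ G _ (fun ω => limsup (fun n => f n ω) atTop) :=
    @Measurable.limsup ℝ Ω _ _ _ G _ _ _ _ hf
  refine meas_of_ae_eq hG h1 ?_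
  filter_upwards [hfg] with ω h using h.limsup_eq

lemma meas_of_tim {Ω : Type*} {G : MeasurableSpace Ω} [mΩ : MeasurableSpace Ω] {μ : Measure Ω}
    (hG : Cpl μ G) {f : ℕ → Ω → ℝ} {g : Ω → ℝ}
    (hf : ∀ n, @Measurable Ω ℝ G _ (f n))
    (hfg : TendstoInMeasure μ f atTop g) : @Measurable Ω ℝ G _ g := by
  obtain ⟨ns, -, h⟩ := hfg.exists_seq_tendsto_ae
  exact meas_of_tendsto_ae hG (fun n => hf (ns n)) h

lemma measurable_psgn : Measurable psgn := by
  unfold psgn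
  exact Measurable.ite measurableSet_Ioi measurable_const measurable_const

lemma abs_psgn (x : ℝ) : |psgn x| = 1 := by
  unfold psgn; split_ifs <;> simp

lemma psgn_sq (x : ℝ) : psgn x * psgn x = 1 := by
  unfold psgn; split_ifs <;> simp

lemma psgn_mul_self (x : ℝ) : psgn x * x = |x| := by
  unfold psgn; split_ifs with h
  · simp [abs_of_pos h]
  · simp [abs_of_nonpos (not_lt.mp h)]

lemma psgn_neg {x : ℝ} (hx : x ≠ 0) : psgn (-x) = - psgn x := by
  unfold psgn
  rcases lt_or_gt_of_ne hx with h | h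
  · simp [h, not_lt.mpr h.le]
  · simp [h, not_lt.mpr h.le]

lemma psgn_mono (x y : ℝ) : 0 ≤ (x - y) * (psgn x - psgn y) := by
  unfold psgn
  split_ifs <;> nlinarith

lemma psgn_sub_le (x y : ℝ) : |psgn x - psgn y| ≤ 2 := by
  unfold psgn
  split_ifs <;> norm_num

lemma tendsto_psgn {u : ℕ → ℝ} {x : ℝ} (hx : x ≠ 0) (hu : Tendsto u atTop (nhds x)) :
    Tendsto (fun n => psgn (u n)) atTop (nhds (psgn x)) := by
  refine tendsto_const_nhds.congr' ?_
  rcases lt_or_gt_of_ne hx with h | h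
  · filter_upwards [hu.eventually (gt_mem_nhds h)] with n hn
    simp [psgn, not_lt.mpr h.le, not_lt.mpr hn.le]
  · filter_upwards [hu.eventually (lt_mem_nhds h)] with n hn
    simp [psgn, h, hn]

lemma psgn_intervalIntegrable {Y : ℝ → ℝ} {T a b : ℝ} (hY : ContinuousOn Y (Icc 0 T))
    (ha : 0 ≤ a) (hab : a ≤ b) (hb : b ≤ T) :
    IntervalIntegrable (fun s => psgn (Y s)) volume a b := by
  rw [intervalIntegrable_iff_integrableOn_Icc_of_le hab]
  have h1 : AEStronglyMeasurable Y (volume.restrict (Icc a b)) :=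
    (hY.mono (Icc_subset_Icc ha hb)).aestronglyMeasurable measurableSet_Icc
  have h2 : AEStronglyMeasurable (fun s => psgn (Y s)) (volume.restrict (Icc a b)) :=
    (measurable_psgn.comp_aemeasurable h1.aemeasurable).aestronglyMeasurable
  refine Integrable.of_bound h2 1 ?_
  filter_upwards with s
  simp [abs_psgn]

/-! ### Euler scheme -/

def euler (lam y T : ℝ) (n : ℕ) (w : ℝ → ℝ) : ℕ → ℝ
  | 0 => y
  | k + 1 => euler lam y T n w k - lam * (T / 2 ^ n) * psgn (euler lam y T n w k)
      + (w (T * (k + 1) / 2 ^ n) - w (T * k / 2 ^ n))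

lemma euler_step {lam y T : ℝ} (hl : 0 ≤ lam) {Y w : ℝ → ℝ}
    (hY : ContinuousOn Y (Icc 0 T))
    (heq : ∀ t ∈ Icc 0 T, Y t = y - lam * (∫ s in (0:ℝ)..t, psgn (Y s)) + w t)
    {a b η e : ℝ} (ha : 0 ≤ a) (hab : a ≤ b) (hb : b ≤ T)
    (hη : ∀ s ∈ Icc a b, |Y a - Y s| ≤ η) :
    (Y b - (e - lam * (b - a) * psgn e + (w b - w a))) ^ 2 ≤
      (Y a - e) ^ 2 + (4 * lam * (b - a) * η + 4 * lam ^ 2 * (b - a) ^ 2) := by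
  have hIa := psgn_intervalIntegrable hY le_rfl ha (hab.trans hb)
  have hIab := psgn_intervalIntegrable hY ha hab hb
  have h1 : Y b - Y a = - lam * (∫ s in a..b, psgn (Y s)) + (w b - w a) := by
    rw [heq b ⟨ha.trans hab, hb⟩, heq a ⟨ha, hab.trans hb⟩,
      ← intervalIntegral.integral_add_adjacent_intervals hIa hIab]
    ring
  set q := ∫ s in a..b, (psgn (Y s) - psgn e) with hq
  have hq1 : q = (∫ s in a..b, psgn (Y s)) - (b - a) * psgn e := by
    rw [hq, intervalIntegral.integral_sub hIab (by simp)]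
    simp
  have hq2 : |q| ≤ 2 * (b - a) := by
    have := intervalIntegral.norm_integral_le_of_norm_le_const (a := a) (b := b) (C := 2)
      (f := fun s => psgn (Y s) - psgn e) (fun s _ => psgn_sub_le _ _)
    rwa [abs_of_nonneg (sub_nonneg.mpr hab)] at this
  have hq3 : - (2 * η) * (b - a) ≤ (Y a - e) * q := by
    rw [hq, ← intervalIntegral.integral_const_mul]
    have : ∫ s in a..b, (- (2 * η)) ≤ ∫ s in a..b, (Y a - e) * (psgn (Y s) - psgn e) := by
      refine intervalIntegral.integral_mono_on hab (by simp) ((hIab.sub (by simp)).const_mul _) ?_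
      intro s hs
      have h3 := psgn_mono (Y s) e
      have h4 : |(Y a - Y s) * (psgn (Y s) - psgn e)| ≤ η * 2 := by
        rw [abs_mul]
        exact mul_le_mul (hη s hs) (psgn_sub_le _ _) (abs_nonneg _)
          ((abs_nonneg _).trans (hη s hs))
      have h5 := (abs_le.mp h4).1
      nlinarith
    rw [intervalIntegral.integral_const, smul_eq_mul] at this
    linarith
  have h6 : Y b - (e - lam * (b - a) * psgn e + (w b - w a)) = (Y a - e) - lam * q := by
    rw [hq1]; linarith
  have h7 : q ^ 2 ≤ (2 * (b - a)) ^ 2 := sq_le_sq' (abs_le.mp hq2).1 (abs_le.mp hq2).2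
  rw [h6]
  nlinarith [mul_le_mul_of_nonneg_left hq3 hl, mul_le_mul_of_nonneg_left h7 (sq_nonneg lam)]

lemma grid_mem {T : ℝ} (hT : 0 ≤ T) {n k : ℕ} (hk : k ≤ 2 ^ n) :
    T * (k : ℝ) / 2 ^ n ∈ Icc 0 T := by
  have h2 : (0:ℝ) < 2 ^ n := by positivity
  have h3 : (k : ℝ) ≤ 2 ^ n := by exact_mod_cast hk
  refine ⟨by positivity, ?_⟩
  rw [div_le_iff₀ h2]
  exact mul_le_mul_of_nonneg_left h3 hT

lemma euler_conv {lam y T : ℝ} (hl : 0 ≤ lam) (hT : 0 ≤ T) {Y w : ℝ → ℝ}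
    (hY : ContinuousOn Y (Icc 0 T)) (hw0 : w 0 = 0)
    (heq : ∀ t ∈ Icc 0 T, Y t = y - lam * (∫ s in (0:ℝ)..t, psgn (Y s)) + w t) :
    Tendsto (fun n => euler lam y T n w (2 ^ n)) atTop (nhds (Y T)) := by
  have huc : UniformContinuousOn Y (Icc 0 T) :=
    isCompact_Icc.uniformContinuousOn_of_continuous hY
  have hstep : ∀ η > 0, ∀ᶠ n : ℕ in atTop,
      (Y T - euler lam y T n w (2 ^ n)) ^ 2 ≤ 4 * lam * T * η + 4 * lam ^ 2 * T ^ 2 / 2 ^ n := by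
    intro η hη
    obtain ⟨δ, hδ, hYδ⟩ := Metric.uniformContinuousOn_iff.mp huc η hη
    have hlim : Tendsto (fun n : ℕ => T / (2:ℝ) ^ n) atTop (nhds 0) :=
      tendsto_const_nhds.div_atTop (tendsto_pow_atTop_atTop_of_one_lt (by norm_num))
    filter_upwards [hlim.eventually (gt_mem_nhds hδ)] with n hn
    have h2 : (0:ℝ) < 2 ^ n := by positivity
    have key : ∀ k : ℕ, k ≤ 2 ^ n → (Y (T * k / 2 ^ n) - euler lam y T n w k) ^ 2 ≤
        k * (4 * lam * (T / 2 ^ n) * η + 4 * lam ^ 2 * (T / 2 ^ n) ^ 2) := by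
      intro k
      induction k with
      | zero =>
        intro _
        have := heq 0 ⟨le_rfl, hT⟩
        simp only [intervalIntegral.integral_same, hw0] at this
        simp [euler, this]
      | succ k ih =>
        intro hk
        have ih' := ih (by omega)
        have ma := grid_mem hT (n := n) (k := k) (by omega)
        have mb := grid_mem hT (n := n) (k := k + 1) hk
        push_cast at mb ⊢
        have hd : T * ((k:ℝ) + 1) / 2 ^ n - T * k / 2 ^ n = T / 2 ^ n := by ring
        have hab : T * (k:ℝ) / 2 ^ n ≤ T * ((k:ℝ) + 1) / 2 ^ n := by
          have : 0 ≤ T / 2 ^ n := by positivity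
          linarith
        have := euler_step hl hY heq (e := euler lam y T n w k) (η := η) ma.1 hab mb.2 (by
          intro s hs
          have : dist (T * (k:ℝ) / 2 ^ n) s < δ := by
            rw [dist_comm, Real.dist_eq, abs_of_nonneg (by linarith [hs.1])]
            linarith [hs.2]
          have := hYδ _ ma s ⟨ma.1.trans hs.1, hs.2.trans mb.2⟩ this
          rw [Real.dist_eq] at this
          exact this.le)
        rw [hd] at this
        rw [euler]
        linarith
    have := key (2 ^ n) le_rfl
    push_cast at this
    have e1 : T * 2 ^ n / 2 ^ n = T := by field_simp
    rw [e1] at this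
    refine this.trans (le_of_eq ?_)
    field_simp
  have hsq : Tendsto (fun n => (Y T - euler lam y T n w (2 ^ n)) ^ 2) atTop (nhds 0) := by
    rw [Metric.tendsto_atTop']
    intro ε hε
    have hlim : Tendsto (fun n : ℕ => 4 * lam ^ 2 * T ^ 2 / (2:ℝ) ^ n) atTop (nhds 0) :=
      tendsto_const_nhds.div_atTop (tendsto_pow_atTop_atTop_of_one_lt (by norm_num))
    have hpos : 0 < 4 * lam * T + 1 := by positivity
    have hη : 0 < ε / 2 / (4 * lam * T + 1) := by positivity
    have hev := (hstep _ hη).and (hlim.eventually (gt_mem_nhds (half_pos hε)))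
    obtain ⟨N, hN⟩ := eventually_atTop.mp hev
    refine ⟨N, fun n hn => ?_⟩
    obtain ⟨h1, h2⟩ := hN n hn.le
    rw [Real.dist_eq, sub_zero, abs_of_nonneg (sq_nonneg _)]
    have h3 : 4 * lam * T * (ε / 2 / (4 * lam * T + 1)) ≤ ε / 2 := by
      rw [mul_div_assoc', div_le_iff₀ hpos]
      nlinarith
    linarith
  have habs : Tendsto (fun n => |Y T - euler lam y T n w (2 ^ n)|) atTop (nhds 0) := by
    have := hsq.sqrt
    simpa [Real.sqrt_sq_eq_abs] using this
  have h0 := (tendsto_zero_iff_abs_tendsto_zero _).mpr habs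
  have := (tendsto_const_nhds (x := Y T)).sub h0
  simpa using this

lemma measurable_euler {Ω : Type*} (G : MeasurableSpace Ω) {lam y T : ℝ} {n : ℕ}
    {W : ℝ → Ω → ℝ} {N : ℕ}
    (hW : ∀ k : ℕ, k ≤ N → Measurable (W (T * k / 2 ^ n))) :
    ∀ k ≤ N, Measurable (fun ω => euler lam y T n (fun u => W u ω) k) := by
  intro k
  induction k with
  | zero => intro _; simp only [euler]; exact measurable_const
  | succ k ih =>
    intro hk
    have h1 := ih (by omega)
    have h2 := hW k (by omega)
    have h3 := hW (k + 1) hk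
    push_cast at h3
    simp only [euler]
    exact (h1.sub ((measurable_psgn.comp h1).const_mul _)).add (h3.sub h2)

/-! ### The process does not charge zero at fixed positive times -/

/-- The working hypotheses on `(Y, W)`. -/
structure Ctx {Ω : Type*} [mΩ : MeasurableSpace Ω] (μ : Measure Ω) (F : ℝ → MeasurableSpace Ω)
    (Y W : ℝ → Ω → ℝ) (y lam : ℝ) : Prop where
  bm : IsBM μ F W
  lam0 : 0 ≤ lam
  adapt : ∀ t : ℝ, 0 ≤ t → @Measurable Ω ℝ (F t) _ (Y t)
  cont : ∀ᵐ ω ∂μ, Continuous fun t => Y t ω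
  eq : ∀ᵐ ω ∂μ, ∀ t : ℝ, 0 ≤ t → Y t ω = y - lam * (∫ s in (0:ℝ)..t, psgn (Y s ω)) + W t ω

lemma IsBM.meas {Ω : Type*} [mΩ : MeasurableSpace Ω] {μ : Measure Ω} {F : ℝ → MeasurableSpace Ω}
    {W : ℝ → Ω → ℝ} (h : IsBM μ F W) {s t : ℝ} (hs : 0 ≤ s) (hst : s ≤ t) :
    @Measurable Ω ℝ (F t) _ (W s) :=
  Measurable.mono (comap_measurable (W s)) ((h.adapted s hs).trans (h.mono hst)) le_rfl

lemma IsBM.measm {Ω : Type*} [mΩ : MeasurableSpace Ω] {μ : Measure Ω} {F : ℝ → MeasurableSpace Ω}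
    {W : ℝ → Ω → ℝ} (h : IsBM μ F W) {s : ℝ} (hs : 0 ≤ s) : Measurable (W s) :=
  Measurable.mono (h.meas hs le_rfl) (h.le s) le_rfl

lemma IsBM.indepFun {Ω : Type*} [mΩ : MeasurableSpace Ω] {μ : Measure Ω}
    {F : ℝ → MeasurableSpace Ω} {E : Type*} [MeasurableSpace E]
    {W : ℝ → Ω → ℝ} (h : IsBM μ F W) {s t : ℝ} (hs : 0 ≤ s) (hst : s ≤ t) {Z : Ω → E}
    (hZ : @Measurable Ω E (F s) _ Z) : IndepFun Z (fun ω => W t ω - W s ω) μ := by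
  have h1 := (h.indep s t hs hst).symm
  rw [IndepFun_iff_Indep]
  exact indep_of_indep_of_le_left h1 hZ.comap_le

lemma gauss_interval (v : NNReal) (hv : v ≠ 0) (x c : ℝ) (hc : 0 ≤ c) :
    gaussianReal 0 v {z : ℝ | |x + z| ≤ c} ≤
      ENNReal.ofReal (2 * c * (Real.sqrt (2 * Real.pi * v))⁻¹) := by
  have hset : {z : ℝ | |x + z| ≤ c} = Icc (-x - c) (-x + c) := by
    ext z
    simp only [Set.mem_ofPred_eq, abs_le, mem_Icc]
    constructor
    · rintro ⟨h1, h2⟩; constructor <;> linarith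
    · rintro ⟨h1, h2⟩; constructor <;> linarith
  rw [hset, gaussianReal_of_var_ne_zero _ hv, withDensity_apply _ measurableSet_Icc]
  have hle : ∀ z, gaussianPDF 0 v z ≤ ENNReal.ofReal ((Real.sqrt (2 * Real.pi * v))⁻¹) := by
    intro z
    unfold gaussianPDF gaussianPDFReal
    apply ENNReal.ofReal_le_ofReal
    apply mul_le_of_le_one_right (by positivity)
    rw [Real.exp_le_one_iff]
    have : 0 ≤ (z - 0) ^ 2 / (2 * (v:ℝ)) := by positivity
    rw [neg_div]; linarith
  calc ∫⁻ z in Icc (-x - c) (-x + c), gaussianPDF 0 v z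
      ≤ ∫⁻ z in Icc (-x - c) (-x + c), ENNReal.ofReal ((Real.sqrt (2 * Real.pi * v))⁻¹) :=
        lintegral_mono fun z => hle z
    _ = ENNReal.ofReal (2 * c * (Real.sqrt (2 * Real.pi * v))⁻¹) := by
        rw [setLIntegral_const, Real.volume_Icc, ← ENNReal.ofReal_mul (by positivity)]
        congr 1
        ring

lemma drift_bound {Y w : ℝ → ℝ} {y lam : ℝ} (hl : 0 ≤ lam) (hY : Continuous Y)
    (heq : ∀ t : ℝ, 0 ≤ t → Y t = y - lam * (∫ s in (0:ℝ)..t, psgn (Y s)) + w t)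
    {a b : ℝ} (ha : 0 ≤ a) (hab : a ≤ b) :
    |Y b - Y a - (w b - w a)| ≤ lam * (b - a) := by
  have hIa := psgn_intervalIntegrable (T := b) hY.continuousOn le_rfl ha hab
  have hIab := psgn_intervalIntegrable (T := b) hY.continuousOn ha hab le_rfl
  have h1 : Y b - Y a - (w b - w a) = - lam * (∫ s in a..b, psgn (Y s)) := by
    rw [heq b (ha.trans hab), heq a ha,
      ← intervalIntegral.integral_add_adjacent_intervals hIa hIab]
    ring
  rw [h1, abs_mul, abs_neg, abs_of_nonneg hl]
  refine mul_le_mul_of_nonneg_left ?_ hl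
  have := intervalIntegral.norm_integral_le_of_norm_le_const (a := a) (b := b) (C := 1)
      (f := fun s => psgn (Y s)) (fun s _ => (abs_psgn _).le)
  rwa [abs_of_nonneg (sub_nonneg.mpr hab), one_mul] at this

lemma Ctx.measm {Ω : Type*} [mΩ : MeasurableSpace Ω] {μ : Measure Ω}
    {F : ℝ → MeasurableSpace Ω} {Y W : ℝ → Ω → ℝ} {y lam : ℝ} (h : Ctx μ F Y W y lam)
    {s : ℝ} (hs : 0 ≤ s) : Measurable (Y s) :=
  Measurable.mono (h.adapt s hs) (h.bm.le s) le_rfl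

lemma Ctx.zero_null {Ω : Type*} [mΩ : MeasurableSpace Ω] {μ : Measure Ω} [IsProbabilityMeasure μ]
    {F : ℝ → MeasurableSpace Ω} {Y W : ℝ → Ω → ℝ} {y lam : ℝ} (h : Ctx μ F Y W y lam)
    {s : ℝ} (hs : 0 < s) : ∀ᵐ ω ∂μ, Y s ω ≠ 0 := by
  have hbound : ∀ v : ℝ, 0 < v → v ≤ s →
      μ {ω | Y s ω = 0} ≤ ENNReal.ofReal (2 * lam * Real.sqrt v) := by
    intro v hv hvs
    have hr : 0 ≤ s - v := by linarith
    have hind := h.bm.indepFun hr (by linarith : s - v ≤ s) (h.adapt _ hr)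
    have hmW : Measurable (fun ω => W s ω - W (s - v) ω) :=
      (h.bm.measm hs.le).sub (h.bm.measm hr)
    have hmY := h.measm hr
    have hlaw := (indepFun_iff_map_prod_eq_prod_map_map hmY.aemeasurable hmW.aemeasurable).mp hind
    rw [h.bm.law _ _ hr (by linarith)] at hlaw
    have hvv : s - (s - v) = v := by ring
    rw [hvv] at hlaw
    set S : Set (ℝ × ℝ) := {p | |p.1 + p.2| ≤ lam * v} with hS
    have hSm : MeasurableSet S := by
      apply measurableSet_le
      · fun_prop
      · fun_prop
    have h1 : μ {ω | Y s ω = 0} ≤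
        (μ.map (fun ω => (Y (s - v) ω, W s ω - W (s - v) ω))) S := by
      rw [Measure.map_apply (hmY.prodMk hmW) hSm]
      apply measure_mono_ae
      filter_upwards [h.cont, h.eq] with ω hc he h0
      have := drift_bound h.lam0 hc he hr (by linarith : s - v ≤ s)
      have h0' : Y s ω = 0 := h0
      rw [h0', hvv] at this
      change |Y (s - v) ω + (W s ω - W (s - v) ω)| ≤ lam * v
      rw [← abs_neg]
      convert this using 2
      ring
    refine h1.trans ?_
    rw [hlaw, Measure.prod_apply hSm]
    have hv0 : v.toNNReal ≠ 0 := by simpa using hv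
    have : IsProbabilityMeasure (μ.map (Y (s - v))) := Measure.isProbabilityMeasure_map hmY.aemeasurable
    calc ∫⁻ x, gaussianReal 0 v.toNNReal (Prod.mk x ⁻¹' S) ∂(μ.map (Y (s - v)))
        ≤ ∫⁻ x, ENNReal.ofReal (2 * lam * Real.sqrt v) ∂(μ.map (Y (s - v))) := by
          refine lintegral_mono fun x => ?_
          refine (gauss_interval v.toNNReal hv0 x (lam * v) (mul_nonneg h.lam0 hv.le)).trans ?_
          apply ENNReal.ofReal_le_ofReal
          rw [Real.coe_toNNReal _ hv.le, ← div_eq_mul_inv,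
            div_le_iff₀ (by positivity)]
          have e1 : Real.sqrt v * Real.sqrt (2 * Real.pi * v) = Real.sqrt (2 * Real.pi) * v := by
            rw [Real.sqrt_mul (by positivity), mul_comm, mul_assoc, Real.mul_self_sqrt hv.le]
          have e2 : 1 ≤ Real.sqrt (2 * Real.pi) := by
            rw [Real.one_le_sqrt]; nlinarith [Real.pi_gt_three]
          rw [mul_assoc (2 * lam), e1]
          have := h.lam0
          have : 0 ≤ lam * v := by positivity
          nlinarith
      _ = _ := by simp
  have h0 : μ {ω | Y s ω = 0} = 0 := by
    have hlim : Tendsto (fun v : ℝ => ENNReal.ofReal (2 * lam * Real.sqrt v))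
        (nhdsWithin 0 (Ioi 0)) (nhds 0) := by
      have : ContinuousAt (fun v : ℝ => ENNReal.ofReal (2 * lam * Real.sqrt v)) 0 := by
        exact (ENNReal.continuous_ofReal.comp (by fun_prop)).continuousAt
      have := this.tendsto
      simp only [Real.sqrt_zero, mul_zero, ENNReal.ofReal_zero] at this
      exact this.mono_left nhdsWithin_le_nhds
    refine le_antisymm (ge_of_tendsto hlim ?_) bot_le
    have : Ioc (0:ℝ) s ∈ nhdsWithin 0 (Ioi 0) := Ioc_mem_nhdsGT hs
    filter_upwards [this] with v hv using hbound v hv.1 hv.2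
  have : {ω | ¬ Y s ω ≠ 0} = {ω | Y s ω = 0} := by ext; simp
  rw [ae_iff, this, h0]

/-! ### Elementary integrals and the Ito isometry -/

lemma IsBM.memLp {Ω : Type*} [mΩ : MeasurableSpace Ω] {μ : Measure Ω} {F : ℝ → MeasurableSpace Ω}
    {M : ℝ → Ω → ℝ} (h : IsBM μ F M) {s t : ℝ} (hs : 0 ≤ s) (hst : s ≤ t) :
    MemLp (fun ω => M t ω - M s ω) 2 μ := by
  have hm : Measurable (fun ω => M t ω - M s ω) := (h.measm (hs.trans hst)).sub (h.measm hs)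
  have h1 : MemLp id 2 (μ.map (fun ω => M t ω - M s ω)) := by
    rw [h.law s t hs hst]; exact_mod_cast memLp_id_gaussianReal 2
  exact (memLp_map_measure_iff h1.1 hm.aemeasurable).mp h1

lemma IsBM.integral_zero {Ω : Type*} [mΩ : MeasurableSpace Ω] {μ : Measure Ω}
    {F : ℝ → MeasurableSpace Ω}
    {M : ℝ → Ω → ℝ} (h : IsBM μ F M) {s t : ℝ} (hs : 0 ≤ s) (hst : s ≤ t) :
    ∫ ω, (M t ω - M s ω) ∂μ = 0 := by
  have hm : Measurable (fun ω => M t ω - M s ω) := (h.measm (hs.trans hst)).sub (h.measm hs)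
  have := integral_map (μ := μ) hm.aemeasurable (f := fun x : ℝ => x) aestronglyMeasurable_id
  rw [← this, h.law s t hs hst, integral_id_gaussianReal]

lemma IsBM.integral_sq {Ω : Type*} [mΩ : MeasurableSpace Ω] {μ : Measure Ω}
    {F : ℝ → MeasurableSpace Ω}
    {M : ℝ → Ω → ℝ} (h : IsBM μ F M) {s t : ℝ} (hs : 0 ≤ s) (hst : s ≤ t) :
    ∫ ω, (M t ω - M s ω) ^ 2 ∂μ = t - s := by
  have hm : Measurable (fun ω => M t ω - M s ω) := (h.measm (hs.trans hst)).sub (h.measm hs)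
  have := integral_map (μ := μ) hm.aemeasurable (f := fun x : ℝ => x ^ 2)
    (by fun_prop)
  rw [← this, h.law s t hs hst]
  have h2 := variance_of_integral_eq_zero (X := id) (μ := gaussianReal 0 ((t - s).toNNReal))
    aemeasurable_id (by simp)
  rw [variance_id_gaussianReal, Real.coe_toNNReal _ (sub_nonneg.mpr hst)] at h2
  simpa using h2.symm

lemma IsBM.mul_zero {Ω : Type*} [mΩ : MeasurableSpace Ω] {μ : Measure Ω}
    {F : ℝ → MeasurableSpace Ω}
    {M : ℝ → Ω → ℝ} (h : IsBM μ F M) {s t : ℝ} (hs : 0 ≤ s) (hst : s ≤ t) {Z : Ω → ℝ}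
    (hZ : @Measurable Ω ℝ (F s) _ Z) :
    ∫ ω, Z ω * (M t ω - M s ω) ∂μ = 0 := by
  have hm : Measurable (fun ω => M t ω - M s ω) := (h.measm (hs.trans hst)).sub (h.measm hs)
  have hZm : Measurable Z := Measurable.mono hZ (h.le s) le_rfl
  rw [(h.indepFun hs hst hZ).integral_fun_mul_eq_mul_integral hZm.aestronglyMeasurable
    hm.aestronglyMeasurable, h.integral_zero hs hst, MulZeroClass.mul_zero]

lemma IsBM.mul_sq {Ω : Type*} [mΩ : MeasurableSpace Ω] {μ : Measure Ω}
    {F : ℝ → MeasurableSpace Ω}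
    {M : ℝ → Ω → ℝ} (h : IsBM μ F M) {s t : ℝ} (hs : 0 ≤ s) (hst : s ≤ t) {Z : Ω → ℝ}
    (hZ : @Measurable Ω ℝ (F s) _ Z) :
    ∫ ω, Z ω * (M t ω - M s ω) ^ 2 ∂μ = (t - s) * ∫ ω, Z ω ∂μ := by
  have hm : Measurable (fun ω => M t ω - M s ω) := (h.measm (hs.trans hst)).sub (h.measm hs)
  have hZm : Measurable Z := Measurable.mono hZ (h.le s) le_rfl
  have hi : IndepFun Z (fun ω => (M t ω - M s ω) ^ 2) μ :=
    (h.indepFun hs hst hZ).comp (φ := id) (ψ := fun x : ℝ => x ^ 2) measurable_id (by fun_prop)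
  rw [hi.integral_fun_mul_eq_mul_integral hZm.aestronglyMeasurable
    (hm.pow_const 2).aestronglyMeasurable, h.integral_sq hs hst, mul_comm]

lemma integrable_bdd_mul {Ω : Type*} [mΩ : MeasurableSpace Ω] {μ : Measure Ω}
    {d f g : Ω → ℝ} (hd : Measurable d) {C : ℝ} (hC : ∀ ω, |d ω| ≤ C)
    (hf : MemLp f 2 μ) (hg : MemLp g 2 μ) : Integrable (fun ω => d ω * f ω * g ω) μ := by
  have h1 : Integrable (fun ω => f ω * g ω) μ := hf.integrable_mul hg
  have := h1.bdd_mul (c := C) hd.aestronglyMeasurable (Eventually.of_forall fun ω => by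
    simpa using hC ω)
  refine this.congr (Eventually.of_forall fun ω => ?_)
  simp [mul_assoc]

lemma IsBM.cov_aux {Ω : Type*} [mΩ : MeasurableSpace Ω] {μ : Measure Ω}
    {F : ℝ → MeasurableSpace Ω}
    {M : ℝ → Ω → ℝ} (h : IsBM μ F M) {a b b' : ℝ} (ha : 0 ≤ a) (hab : a ≤ b) (hbb : b ≤ b')
    {d : Ω → ℝ} {C : ℝ} (hd : @Measurable Ω ℝ (F a) _ d) (hC : ∀ ω, |d ω| ≤ C) :
    ∫ ω, d ω * (M b ω - M a ω) * (M b' ω - M a ω) ∂μ = (b - a) * ∫ ω, d ω ∂μ := by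
  have hdm : Measurable d := Measurable.mono hd (h.le a) le_rfl
  have e : ∀ ω, d ω * (M b ω - M a ω) * (M b' ω - M a ω) =
      d ω * (M b ω - M a ω) * (M b ω - M a ω) + d ω * (M b ω - M a ω) * (M b' ω - M b ω) := by
    intro ω; ring
  simp_rw [e]
  rw [integral_add (integrable_bdd_mul hdm hC (h.memLp ha hab) (h.memLp ha hab))
    (integrable_bdd_mul hdm hC (h.memLp ha hab) (h.memLp (ha.trans hab) hbb))]
  have hb0 := ha.trans hab
  have h1 : @Measurable Ω ℝ (F b) _ (fun ω => d ω * (M b ω - M a ω)) :=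
    (Measurable.mono hd (h.mono hab) le_rfl).mul
      ((h.meas hb0 le_rfl).sub (h.meas ha hab))
  rw [h.mul_zero hb0 hbb h1, add_zero, ← h.mul_sq ha hab hd]
  congr 1; ext ω; ring

lemma IsBM.cov {Ω : Type*} [mΩ : MeasurableSpace Ω] {μ : Measure Ω}
    {F : ℝ → MeasurableSpace Ω}
    {M : ℝ → Ω → ℝ} (h : IsBM μ F M) {a b a' b' : ℝ} (ha : 0 ≤ a) (hab : a ≤ b)
    (hab' : a' ≤ b') (haa : a ≤ a')
    {d : Ω → ℝ} {C : ℝ} (hd : @Measurable Ω ℝ (F a') _ d) (hC : ∀ ω, |d ω| ≤ C) :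
    ∫ ω, d ω * (M b ω - M a ω) * (M b' ω - M a' ω) ∂μ =
      max (min b b' - a') 0 * ∫ ω, d ω ∂μ := by
  have hdm : Measurable d := Measurable.mono hd (h.le a') le_rfl
  have ha' := ha.trans haa
  rcases le_total b a' with hb | hb
  · have h1 : @Measurable Ω ℝ (F a') _ (fun ω => d ω * (M b ω - M a ω)) :=
      hd.mul ((h.meas (ha.trans hab) hb).sub (h.meas ha haa))
    rw [h.mul_zero ha' hab' h1, max_eq_right, zero_mul]
    have := min_le_left b b'
    linarith
  · have e : ∀ ω, d ω * (M b ω - M a ω) * (M b' ω - M a' ω) =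
        d ω * (M a' ω - M a ω) * (M b' ω - M a' ω) +
        d ω * (M b ω - M a' ω) * (M b' ω - M a' ω) := by
      intro ω; ring
    simp_rw [e]
    rw [integral_add (integrable_bdd_mul hdm hC (h.memLp ha haa) (h.memLp ha' hab'))
      (integrable_bdd_mul hdm hC (h.memLp ha' hb) (h.memLp ha' hab'))]
    have h1 : @Measurable Ω ℝ (F a') _ (fun ω => d ω * (M a' ω - M a ω)) :=
      hd.mul ((h.meas ha' le_rfl).sub (h.meas ha haa))
    rw [h.mul_zero ha' hab' h1, zero_add, max_eq_left (sub_nonneg.mpr (le_min hb hab'))]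
    rcases le_total b b' with hbb | hbb
    · rw [h.cov_aux ha' hb hbb hd hC, min_eq_left hbb]
    · rw [min_eq_right hbb, ← h.cov_aux ha' hab' hbb hd hC]
      congr 1; ext ω; ring

/-- Elementary integrand. -/
def KI {Ω : Type*} (a b : ℝ) (c : Ω → ℝ) (q : ℝ × Ω) : ℝ :=
  (Ioc a b).indicator (fun _ => (1:ℝ)) q.1 * c q.2

lemma integral_KI {Ω : Type*} [mΩ : MeasurableSpace Ω] {μ : Measure Ω} [IsProbabilityMeasure μ]
    {a b a' b' : ℝ} (haa : a ≤ a') (c c' : Ω → ℝ) :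
    ∫ q, KI a b c q * KI a' b' c' q ∂((volume : Measure ℝ).prod μ) =
      max (min b b' - a') 0 * ∫ ω, c ω * c' ω ∂μ := by
  have e : ∀ q : ℝ × Ω, KI a b c q * KI a' b' c' q =
      (Ioc a' (min b b')).indicator (fun _ => (1:ℝ)) q.1 * (c q.2 * c' q.2) := by
    intro q
    have : (Ioc a b).indicator (fun _ => (1:ℝ)) q.1 * (Ioc a' b').indicator (fun _ => (1:ℝ)) q.1 =
        (Ioc a' (min b b')).indicator (fun _ => (1:ℝ)) q.1 := by
      simp only [indicator, mem_Ioc, le_min_iff]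
      grind
    unfold KI
    rw [← this]; ring
  simp_rw [e]
  rw [integral_prod_mul (μ := volume) (ν := μ)
    (fun x => (Ioc a' (min b b')).indicator (fun _ => (1:ℝ)) x) (fun ω => c ω * c' ω)]
  congr 1
  rw [integral_indicator measurableSet_Ioc]
  simp [Measure.real, ENNReal.toReal_ofReal']

lemma KI_memLp {Ω : Type*} [mΩ : MeasurableSpace Ω] {μ : Measure Ω} [IsProbabilityMeasure μ]
    {a b : ℝ} {c : Ω → ℝ} (hc : Measurable c) {C : ℝ} (hC : ∀ ω, |c ω| ≤ C) :
    MemLp (KI a b c) 2 ((volume : Measure ℝ).prod μ) := by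
  have h1 : MemLp ((Ioc a b ×ˢ (univ : Set Ω)).indicator (fun _ => C)) 2
      ((volume : Measure ℝ).prod μ) := by
    refine memLp_indicator_const 2 (measurableSet_Ioc.prod MeasurableSet.univ) C (Or.inr ?_)
    rw [Measure.prod_prod]
    simp
  have hm : Measurable (KI a b c) := by
    unfold KI
    exact ((measurable_const.indicator measurableSet_Ioc).comp measurable_fst).mul
      (hc.comp measurable_snd)
  refine h1.mono hm.aestronglyMeasurable (Eventually.of_forall fun q => ?_)
  by_cases hq : q.1 ∈ Ioc a b
  · simpa [KI, indicator, hq] using (hC q.2).trans (le_abs_self C)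
  · simp [KI, indicator, hq]

/-- Elementary pairs (integrand, integral). -/
def Gen {Ω : Type*} [mΩ : MeasurableSpace Ω] (μ : Measure Ω) (F : ℝ → MeasurableSpace Ω)
    (M : ℝ → Ω → ℝ) : Set (Lp ℝ 2 ((volume : Measure ℝ).prod μ) × Lp ℝ 2 μ) :=
  {p | ∃ (a b : ℝ) (c : Ω → ℝ) (C : ℝ), 0 ≤ a ∧ a ≤ b ∧ @Measurable Ω ℝ (F a) _ c ∧
    (∀ ω, |c ω| ≤ C) ∧ p.1 =ᵐ[(volume : Measure ℝ).prod μ] KI a b c ∧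
    p.2 =ᵐ[μ] fun ω => c ω * (M b ω - M a ω)}

lemma gen_inner {Ω : Type*} [mΩ : MeasurableSpace Ω] {μ : Measure Ω} [IsProbabilityMeasure μ]
    {F : ℝ → MeasurableSpace Ω} {M : ℝ → Ω → ℝ} (h : IsBM μ F M)
    {p p' : Lp ℝ 2 ((volume : Measure ℝ).prod μ) × Lp ℝ 2 μ}
    (hp : p ∈ Gen μ F M) (hp' : p' ∈ Gen μ F M) :
    inner ℝ p.1 p'.1 = inner ℝ p.2 p'.2 := by
  obtain ⟨a, b, c, C, ha, hab, hc, hC, h1, h2⟩ := hp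
  obtain ⟨a', b', c', C', ha', hab', hc', hC', h1', h2'⟩ := hp'
  have hCC : ∀ ω, |c ω * c' ω| ≤ C * C' := fun ω => by
    rw [abs_mul]
    exact mul_le_mul (hC ω) (hC' ω) (abs_nonneg _) ((abs_nonneg _).trans (hC ω))
  rw [L2.inner_def, L2.inner_def]
  have e1 : ∫ q, inner ℝ (p.1 q) (p'.1 q) ∂((volume : Measure ℝ).prod μ) =
      ∫ q, KI a b c q * KI a' b' c' q ∂((volume : Measure ℝ).prod μ) := by
    apply integral_congr_ae
    filter_upwards [h1, h1'] with q hq hq'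
    rw [hq, hq']; simp [mul_comm]
  have e2 : ∫ ω, inner ℝ (p.2 ω) (p'.2 ω) ∂μ =
      ∫ ω, (c ω * c' ω) * (M b ω - M a ω) * (M b' ω - M a' ω) ∂μ := by
    apply integral_congr_ae
    filter_upwards [h2, h2'] with q hq hq'
    rw [hq, hq']; simp; ring
  rw [e1, e2]
  rcases le_total a a' with haa | haa
  · rw [integral_KI haa, h.cov ha hab hab' haa (d := fun ω => c ω * c' ω)
      ((Measurable.mono hc (h.mono haa) le_rfl).mul hc') hCC]
  · have e3 : ∀ q, KI a b c q * KI a' b' c' q = KI a' b' c' q * KI a b c q := fun q => mul_comm _ _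
    have e4 : ∀ ω, (c ω * c' ω) * (M b ω - M a ω) * (M b' ω - M a' ω) =
      (c ω * c' ω) * (M b' ω - M a' ω) * (M b ω - M a ω) := fun ω => by ring
    simp_rw [e3, e4]
    rw [integral_KI haa, h.cov ha' hab' hab haa (d := fun ω => c ω * c' ω)
      (hc.mul (Measurable.mono hc' (h.mono haa) le_rfl)) hCC]
    simp_rw [mul_comm (c' _)]

/-- The closed graph of the Ito integral. -/
def SIG {Ω : Type*} [mΩ : MeasurableSpace Ω] (μ : Measure Ω) (F : ℝ → MeasurableSpace Ω)
    (M : ℝ → Ω → ℝ) : Submodule ℝ (Lp ℝ 2 ((volume : Measure ℝ).prod μ) × Lp ℝ 2 μ) :=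
  (Submodule.span ℝ (Gen μ F M)).topologicalClosure

lemma sig_norm {Ω : Type*} [mΩ : MeasurableSpace Ω] {μ : Measure Ω} [IsProbabilityMeasure μ]
    {F : ℝ → MeasurableSpace Ω} {M : ℝ → Ω → ℝ} (h : IsBM μ F M)
    {p : Lp ℝ 2 ((volume : Measure ℝ).prod μ) × Lp ℝ 2 μ} (hp : p ∈ SIG μ F M) :
    ‖p.1‖ = ‖p.2‖ := by
  have hspan : ∀ p ∈ Submodule.span ℝ (Gen μ F M), ∀ p' ∈ Submodule.span ℝ (Gen μ F M),
      inner ℝ p.1 p'.1 = inner ℝ p.2 p'.2 := by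
    intro p hp p' hp'
    induction hp, hp' using Submodule.span_induction₂ with
    | mem_mem x y hx hy => exact gen_inner h hx hy
    | zero_left y hy => simp
    | zero_right x hx => simp
    | add_left x y z hx hy hz h1 h2 => simp [inner_add_left, h1, h2]
    | add_right x y z hx hy hz h1 h2 => simp [inner_add_right, h1, h2]
    | smul_left r x y hx hy h1 => simp [inner_smul_left, h1]
    | smul_right r x y hx hy h1 => simp [inner_smul_right, h1]
  have hcl : IsClosed {p : Lp ℝ 2 ((volume : Measure ℝ).prod μ) × Lp ℝ 2 μ | ‖p.1‖ = ‖p.2‖} :=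
    isClosed_eq (continuous_fst.norm) (continuous_snd.norm)
  have hsub : (Submodule.span ℝ (Gen μ F M) : Set _) ⊆
      {p : Lp ℝ 2 ((volume : Measure ℝ).prod μ) × Lp ℝ 2 μ | ‖p.1‖ = ‖p.2‖} := by
    intro p hp
    have := hspan p hp p hp
    rw [real_inner_self_eq_norm_sq, real_inner_self_eq_norm_sq] at this
    exact (sq_eq_sq₀ (norm_nonneg _) (norm_nonneg _)).mp this
  exact closure_minimal hsub hcl hp

/-- `ξ = ∫ K dM`. -/
def SI {Ω : Type*} [mΩ : MeasurableSpace Ω] (μ : Measure Ω) (F : ℝ → MeasurableSpace Ω)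
    (M : ℝ → Ω → ℝ) (K : ℝ × Ω → ℝ) (ξ : Ω → ℝ) : Prop :=
  ∃ (hK : MemLp K 2 ((volume : Measure ℝ).prod μ)) (hξ : MemLp ξ 2 μ),
    (hK.toLp K, hξ.toLp ξ) ∈ SIG μ F M

lemma SI.gen {Ω : Type*} [mΩ : MeasurableSpace Ω] {μ : Measure Ω} [IsProbabilityMeasure μ]
    {F : ℝ → MeasurableSpace Ω} {M : ℝ → Ω → ℝ} (h : IsBM μ F M) {a b : ℝ} (ha : 0 ≤ a)
    (hab : a ≤ b) {c : Ω → ℝ} (hc : @Measurable Ω ℝ (F a) _ c) {C : ℝ} (hC : ∀ ω, |c ω| ≤ C) :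
    SI μ F M (KI a b c) (fun ω => c ω * (M b ω - M a ω)) := by
  have hcm : Measurable c := Measurable.mono hc (h.le a) le_rfl
  have h1 : MemLp (KI a b c) 2 ((volume : Measure ℝ).prod μ) := KI_memLp hcm hC
  have h2 : MemLp (fun ω => c ω * (M b ω - M a ω)) 2 μ := by
    have hm : Measurable (fun ω => c ω * (M b ω - M a ω)) :=
      hcm.mul ((h.measm (ha.trans hab)).sub (h.measm ha))
    refine ((h.memLp ha hab).const_mul C).mono hm.aestronglyMeasurable
      (Eventually.of_forall fun ω => ?_)
    simp only [norm_mul, Real.norm_eq_abs]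
    exact mul_le_mul_of_nonneg_right ((hC ω).trans (le_abs_self C)) (abs_nonneg _)
  refine ⟨h1, h2, Submodule.le_topologicalClosure _ (Submodule.subset_span ?_)⟩
  exact ⟨a, b, c, C, ha, hab, hc, hC, h1.coeFn_toLp, h2.coeFn_toLp⟩

lemma SI.add {Ω : Type*} [mΩ : MeasurableSpace Ω] {μ : Measure Ω}
    {F : ℝ → MeasurableSpace Ω} {M : ℝ → Ω → ℝ} {K K' : ℝ × Ω → ℝ} {ξ ξ' : Ω → ℝ}
    (h : SI μ F M K ξ) (h' : SI μ F M K' ξ') : SI μ F M (K + K') (ξ + ξ') := by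
  obtain ⟨h1, h2, h3⟩ := h
  obtain ⟨h1', h2', h3'⟩ := h'
  exact ⟨h1.add h1', h2.add h2', add_mem h3 h3'⟩

lemma SI.sub {Ω : Type*} [mΩ : MeasurableSpace Ω] {μ : Measure Ω}
    {F : ℝ → MeasurableSpace Ω} {M : ℝ → Ω → ℝ} {K K' : ℝ × Ω → ℝ} {ξ ξ' : Ω → ℝ}
    (h : SI μ F M K ξ) (h' : SI μ F M K' ξ') : SI μ F M (K - K') (ξ - ξ') := by
  obtain ⟨h1, h2, h3⟩ := h
  obtain ⟨h1', h2', h3'⟩ := h'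
  exact ⟨h1.sub h1', h2.sub h2', sub_mem h3 h3'⟩

lemma SI.zero {Ω : Type*} [mΩ : MeasurableSpace Ω] {μ : Measure Ω}
    {F : ℝ → MeasurableSpace Ω} {M : ℝ → Ω → ℝ} : SI μ F M 0 0 :=
  ⟨MemLp.zero, MemLp.zero, zero_mem _⟩

lemma SI.sum {Ω : Type*} [mΩ : MeasurableSpace Ω] {μ : Measure Ω}
    {F : ℝ → MeasurableSpace Ω} {M : ℝ → Ω → ℝ} {ι : Type*} (s : Finset ι)
    {K : ι → ℝ × Ω → ℝ} {ξ : ι → Ω → ℝ}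
    (h : ∀ i ∈ s, SI μ F M (K i) (ξ i)) : SI μ F M (∑ i ∈ s, K i) (∑ i ∈ s, ξ i) := by
  classical
  induction s using Finset.induction_on with
  | empty => simpa using SI.zero
  | insert i s hi ih =>
    rw [Finset.sum_insert hi, Finset.sum_insert hi]
    exact (h i (Finset.mem_insert_self _ _)).add (ih fun j hj => h j (Finset.mem_insert_of_mem hj))

lemma SI.congr {Ω : Type*} [mΩ : MeasurableSpace Ω] {μ : Measure Ω}
    {F : ℝ → MeasurableSpace Ω} {M : ℝ → Ω → ℝ} {K K' : ℝ × Ω → ℝ} {ξ ξ' : Ω → ℝ}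
    (h : SI μ F M K ξ) (hK : K =ᵐ[(volume : Measure ℝ).prod μ] K') (hξ : ξ =ᵐ[μ] ξ') :
    SI μ F M K' ξ' := by
  obtain ⟨h1, h2, h3⟩ := h
  refine ⟨h1.ae_eq hK, h2.ae_eq hξ, ?_⟩
  rwa [← MemLp.toLp_congr h1 _ hK, ← MemLp.toLp_congr h2 _ hξ]

lemma SI.norm {Ω : Type*} [mΩ : MeasurableSpace Ω] {μ : Measure Ω} [IsProbabilityMeasure μ]
    {F : ℝ → MeasurableSpace Ω} {M : ℝ → Ω → ℝ} (hM : IsBM μ F M) {K : ℝ × Ω → ℝ} {ξ : Ω → ℝ}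
    (h : SI μ F M K ξ) :
    eLpNorm K 2 ((volume : Measure ℝ).prod μ) = eLpNorm ξ 2 μ := by
  obtain ⟨h1, h2, h3⟩ := h
  have := sig_norm hM h3
  simp only [Lp.norm_toLp] at this
  exact (ENNReal.toReal_eq_toReal_iff' h1.2.ne h2.2.ne).mp this

lemma SI.tendsto {Ω : Type*} [mΩ : MeasurableSpace Ω] {μ : Measure Ω} [IsProbabilityMeasure μ]
    {F : ℝ → MeasurableSpace Ω} {M : ℝ → Ω → ℝ} (hM : IsBM μ F M)
    {K : ℕ → ℝ × Ω → ℝ} {ξ : ℕ → Ω → ℝ} {K' : ℝ × Ω → ℝ} {ξ' : Ω → ℝ}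
    (h : ∀ n, SI μ F M (K n) (ξ n)) (h' : SI μ F M K' ξ')
    (hlim : Tendsto (fun n => eLpNorm (K n - K') 2 ((volume : Measure ℝ).prod μ)) atTop (nhds 0)) :
    Tendsto (fun n => eLpNorm (ξ n - ξ') 2 μ) atTop (nhds 0) := by
  refine hlim.congr fun n => ((h n).sub h').norm hM

lemma SI.of_tendsto {Ω : Type*} [mΩ : MeasurableSpace Ω] {μ : Measure Ω} [IsProbabilityMeasure μ]
    {F : ℝ → MeasurableSpace Ω} {M : ℝ → Ω → ℝ} (hM : IsBM μ F M)
    {K : ℕ → ℝ × Ω → ℝ} {ξ : ℕ → Ω → ℝ} {K' : ℝ × Ω → ℝ} {ξ' : Ω → ℝ}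
    (h : ∀ n, SI μ F M (K n) (ξ n)) (hK' : MemLp K' 2 ((volume : Measure ℝ).prod μ))
    (hlim : Tendsto (fun n => eLpNorm (K n - K') 2 ((volume : Measure ℝ).prod μ)) atTop (nhds 0))
    (hξ : TendstoInMeasure μ ξ atTop ξ') : SI μ F M K' ξ' := by
  choose h1 h2 h3 using h
  have hKlim := (Lp.tendsto_Lp_iff_tendsto_eLpNorm'' K h1 K' hK').mpr hlim
  have hcau : CauchySeq (fun n => (h2 n).toLp (ξ n)) := by
    have hc := hKlim.cauchySeq
    rw [Metric.cauchySeq_iff] at hc ⊢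
    intro ε hε
    obtain ⟨N, hN⟩ := hc ε hε
    refine ⟨N, fun m hm n hn => ?_⟩
    have := hN m hm n hn
    rw [dist_eq_norm] at this ⊢
    have e := sig_norm hM (sub_mem (h3 m) (h3 n))
    simp only [Prod.fst_sub, Prod.snd_sub] at e
    rwa [← e]
  obtain ⟨η, hη⟩ := cauchySeq_tendsto_of_complete hcau
  have hm1 := tendstoInMeasure_of_tendsto_Lp hη
  have hm2 : TendstoInMeasure μ ξ atTop η :=
    hm1.congr_left fun n => (h2 n).coeFn_toLp
  have hae : η =ᵐ[μ] ξ' := tendstoInMeasure_ae_unique hm2 hξ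
  refine ⟨hK', (Lp.memLp η).ae_eq hae, ?_⟩
  have e2 : ((Lp.memLp η).ae_eq hae).toLp ξ' = η := by
    calc ((Lp.memLp η).ae_eq hae).toLp ξ' = (Lp.memLp η).toLp η :=
          (MemLp.toLp_eq_toLp_iff _ _).mpr hae.symm
      _ = η := Lp.toLp_coeFn η _
  rw [e2]
  exact (Submodule.isClosed_topologicalClosure _).mem_of_tendsto (hKlim.prodMk_nhds hη)
    (Eventually.of_forall h3)

lemma tendsto_eLpNorm_dom {α : Type*} [MeasurableSpace α] {ν : Measure α} {f : ℕ → α → ℝ}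
    {bd : α → ℝ} (hf : ∀ n, AEStronglyMeasurable (f n) ν) (hbd : MemLp bd 2 ν)
    (hle : ∀ n, ∀ᵐ q ∂ν, |f n q| ≤ bd q)
    (hlim : ∀ᵐ q ∂ν, Tendsto (fun n => f n q) atTop (nhds 0)) :
    Tendsto (fun n => eLpNorm (f n) 2 ν) atTop (nhds 0) := by
  have h2 : ∀ g : α → ℝ, eLpNorm g 2 ν = (∫⁻ q, ‖g q‖ₑ ^ (2:ℝ) ∂ν) ^ (1 / (2:ℝ)) := by
    intro g
    rw [eLpNorm_eq_lintegral_rpow_enorm_toReal (by norm_num) (by norm_num)]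
    simp
  simp_rw [h2]
  have hfin : ∫⁻ q, ‖bd q‖ₑ ^ (2:ℝ) ∂ν ≠ ⊤ := by
    have := lintegral_rpow_enorm_lt_top_of_eLpNorm_lt_top (by norm_num) (by norm_num) hbd.2
    simpa using this.ne
  have := tendsto_lintegral_of_dominated_convergence' (μ := ν)
    (F := fun n q => ‖f n q‖ₑ ^ (2:ℝ)) (f := fun _ => 0) (fun q => ‖bd q‖ₑ ^ (2:ℝ))
    (fun n => (hf n).enorm.pow_const _) (fun n => by
      filter_upwards [hle n] with q hq
      refine ENNReal.rpow_le_rpow ?_ (by norm_num)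
      rw [enorm_le_iff_norm_le]
      simpa using hq.trans (le_abs_self _)) hfin (by
      filter_upwards [hlim] with q hq
      have h3 := (hq.enorm).ennrpow_const 2
      simpa using h3)
  have h4 := this.ennrpow_const (1/2)
  simpa using h4

/-! ### Consistency of integrals -/

lemma Ctx.tilde {Ω : Type*} [mΩ : MeasurableSpace Ω] {μ : Measure Ω} [IsProbabilityMeasure μ]
    {F : ℝ → MeasurableSpace Ω} {Y W : ℝ → Ω → ℝ} {y lam : ℝ} (h : Ctx μ F Y W y lam) :
    ∃ Z : ℝ × Ω → ℝ, Measurable Z ∧ ∀ᵐ ω ∂μ, ∀ u, 0 ≤ u → Z (u, ω) = Y u ω := by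
  classical
  set N : Set Ω := toMeasurable μ {ω | ¬ Continuous fun t => Y t ω} with hN
  have hN0 : μ N = 0 := by rw [hN, measure_toMeasurable]; exact h.cont
  have hNm : MeasurableSet N := measurableSet_toMeasurable _ _
  have hNc : ∀ ω, ω ∉ N → Continuous fun t => Y t ω := fun ω hω => by
    by_contra hc
    exact hω (subset_toMeasurable _ _ hc)
  refine ⟨Function.uncurry (fun u ω => if ω ∈ N then 0 else Y |u| ω), ?_, ?_⟩
  · apply measurable_uncurry_of_continuous_of_measurable
    · intro ω
      by_cases hω : ω ∈ N
      · simp [hω, continuous_const]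
      · simp only [hω, if_false]
        exact (hNc ω hω).comp continuous_abs
    · intro u
      exact Measurable.ite hNm measurable_const (h.measm (abs_nonneg u))
  · have : ∀ᵐ ω ∂μ, ω ∉ N := by rw [ae_iff]; simpa using hN0
    filter_upwards [this] with ω hω u hu
    simp [Function.uncurry, hω, abs_of_nonneg hu]

lemma Ctx.ae_prod {Ω : Type*} [mΩ : MeasurableSpace Ω] {μ : Measure Ω} [IsProbabilityMeasure μ]
    {F : ℝ → MeasurableSpace Ω} {Y W : ℝ → Ω → ℝ} {y lam : ℝ} (h : Ctx μ F Y W y lam) :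
    ∀ᵐ q ∂((volume : Measure ℝ).prod μ), 0 < q.1 → Y q.1 q.2 ≠ 0 := by
  obtain ⟨Z, hZm, hZ⟩ := h.tilde
  have hS : MeasurableSet {q : ℝ × Ω | 0 < q.1 ∧ Z q = 0} :=
    (measurableSet_lt measurable_const measurable_fst).inter
      (measurableSet_eq_fun hZm measurable_const)
  have h0 : ((volume : Measure ℝ).prod μ) {q : ℝ × Ω | 0 < q.1 ∧ Z q = 0} = 0 := by
    rw [Measure.measure_prod_null hS]
    refine Eventually.of_forall fun u => ?_
    simp only [Pi.zero_apply]
    by_cases hu : 0 < u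
    · have : ∀ᵐ ω ∂μ, ω ∉ (Prod.mk u ⁻¹' {q : ℝ × Ω | 0 < q.1 ∧ Z q = 0}) := by
        filter_upwards [h.zero_null hu, hZ] with ω h1 h2 h3
        exact h1 (by rw [← h2 u hu.le]; exact h3.2)
      rw [ae_iff] at this
      simpa using this
    · simp [hu]
  have h1 : ∀ᵐ q ∂((volume : Measure ℝ).prod μ), ¬ (0 < q.1 ∧ Z q = 0) := by
    rw [ae_iff]; simpa using h0
  filter_upwards [h1, (Measure.quasiMeasurePreserving_snd (μ := (volume : Measure ℝ)) (ν := μ)).ae hZ]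
    with q hq1 hq2 hq3 hq4
  exact hq1 ⟨hq3, by rw [← hq4, ← hq2 q.1 hq3.le]⟩

lemma Ctx.ae_leb {Ω : Type*} [mΩ : MeasurableSpace Ω] {μ : Measure Ω} [IsProbabilityMeasure μ]
    {F : ℝ → MeasurableSpace Ω} {Y W : ℝ → Ω → ℝ} {y lam : ℝ} (h : Ctx μ F Y W y lam) :
    ∀ᵐ ω ∂μ, ∀ᵐ u ∂(volume : Measure ℝ), 0 < u → Y u ω ≠ 0 := by
  have h1 := (Measure.measurePreserving_swap (μ := μ)
    (ν := (volume : Measure ℝ))).quasiMeasurePreserving.ae h.ae_prod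
  exact Measure.ae_ae_of_ae_prod h1

/-- Bounded functions continuous off zero. -/
structure Sg (φ : ℝ → ℝ) : Prop where
  meas : Measurable φ
  bdd : ∃ C, ∀ x, |φ x| ≤ C
  cont : ∀ (u : ℕ → ℝ) (x : ℝ), x ≠ 0 → Tendsto u atTop (nhds x) →
    Tendsto (fun n => φ (u n)) atTop (nhds (φ x))

lemma sg_psgn : Sg psgn :=
  ⟨measurable_psgn, ⟨1, fun x => (abs_psgn x).le⟩, fun _ _ hx hu => tendsto_psgn hx hu⟩

lemma sg_const (a : ℝ) : Sg (fun _ => a) :=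
  ⟨measurable_const, ⟨|a|, fun _ => le_rfl⟩, fun _ _ _ _ => tendsto_const_nhds⟩

lemma Sg.mul {φ ψ : ℝ → ℝ} (h : Sg φ) (h' : Sg ψ) : Sg (fun x => ψ x * φ x) := by
  obtain ⟨C, hC⟩ := h.bdd
  obtain ⟨C', hC'⟩ := h'.bdd
  refine ⟨h'.meas.mul h.meas, ⟨C' * C, fun x => ?_⟩, fun u x hx hu =>
    (h'.cont u x hx hu).mul (h.cont u x hx hu)⟩
  rw [abs_mul]
  exact mul_le_mul (hC' x) (hC x) (abs_nonneg _) ((abs_nonneg _).trans (hC' x))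

lemma Sg.add {φ ψ : ℝ → ℝ} (h : Sg φ) (h' : Sg ψ) : Sg (fun x => φ x + ψ x) := by
  obtain ⟨C, hC⟩ := h.bdd
  obtain ⟨C', hC'⟩ := h'.bdd
  exact ⟨h.meas.add h'.meas, ⟨C + C', fun x => (abs_add_le _ _).trans (add_le_add (hC x) (hC' x))⟩,
    fun u x hx hu => (h.cont u x hx hu).add (h'.cont u x hx hu)⟩

/-- Dyadic grid points of `[a, b]`. -/
def gp (a b : ℝ) (n i : ℕ) : ℝ := a + (b - a) * i / 2 ^ n

lemma gp_zero (a b : ℝ) (n : ℕ) : gp a b n 0 = a := by simp [gp]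

lemma gp_last (a b : ℝ) (n : ℕ) : gp a b n (2 ^ n) = b := by simp [gp]

lemma gp_succ (a b : ℝ) (n i : ℕ) : gp a b n (i + 1) = gp a b n i + (b - a) / 2 ^ n := by
  simp only [gp]; push_cast; ring

lemma gp_mono {a b : ℝ} (hab : a ≤ b) (n : ℕ) : Monotone (gp a b n) := by
  refine monotone_nat_of_le_succ fun i => ?_
  rw [gp_succ]
  have : 0 ≤ (b - a) / 2 ^ n := div_nonneg (sub_nonneg.mpr hab) (by positivity)
  linarith

lemma gp_ge {a b : ℝ} (hab : a ≤ b) (n i : ℕ) : a ≤ gp a b n i := by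
  have := gp_mono hab n (Nat.zero_le i)
  rwa [gp_zero] at this

lemma gp_le {a b : ℝ} (hab : a ≤ b) {n i : ℕ} (hi : i ≤ 2 ^ n) : gp a b n i ≤ b := by
  have := gp_mono hab n hi
  rwa [gp_last] at this

lemma gp_find {a b u : ℝ} (hu : u ∈ Ioc a b) (n : ℕ) :
    ∃ j < 2 ^ n, u ∈ Ioc (gp a b n j) (gp a b n (j + 1)) := by
  have hex : ∃ k, u ≤ gp a b n k := ⟨2 ^ n, by rw [gp_last]; exact hu.2⟩
  classical
  have h1 := Nat.find_spec hex
  have h2 : Nat.find hex ≠ 0 := by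
    intro h0
    rw [h0, gp_zero] at h1
    exact absurd hu.1 (not_lt.mpr h1)
  obtain ⟨j, hj⟩ := Nat.exists_eq_succ_of_ne_zero h2
  have h3 : Nat.find hex ≤ 2 ^ n := Nat.find_min' hex (by rw [gp_last]; exact hu.2)
  refine ⟨j, by omega, ?_, ?_⟩
  · exact not_le.mp (Nat.find_min hex (by omega : j < Nat.find hex))
  · rw [hj] at h1; exact h1

lemma gp_sum {a b u : ℝ} (hab : a ≤ b) {n j : ℕ} (hj : j < 2 ^ n)
    (hu : u ∈ Ioc (gp a b n j) (gp a b n (j + 1))) (f : ℕ → ℝ) :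
    ∑ i ∈ Finset.range (2 ^ n), (Ioc (gp a b n i) (gp a b n (i + 1))).indicator (fun _ => (1:ℝ)) u * f i
      = f j := by
  rw [Finset.sum_eq_single j]
  · simp [indicator, hu]
  · intro i _ hij
    have : u ∉ Ioc (gp a b n i) (gp a b n (i + 1)) := by
      intro hi
      rcases lt_or_gt_of_ne hij with h | h
      · have := gp_mono hab n (Nat.succ_le_of_lt h)
        exact absurd (hu.1.trans_le hi.2) (not_lt.mpr this)
      · have := gp_mono hab n (Nat.succ_le_of_lt h)
        exact absurd (hi.1.trans_le hu.2) (not_lt.mpr this)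
    simp only [indicator, this, if_false, zero_mul]
  · intro h; exact absurd (Finset.mem_range.mpr hj) h

lemma gp_sum_out {a b u : ℝ} (hab : a ≤ b) {n : ℕ} (hu : u ∉ Ioc a b) (f : ℕ → ℝ) :
    ∑ i ∈ Finset.range (2 ^ n), (Ioc (gp a b n i) (gp a b n (i + 1))).indicator (fun _ => (1:ℝ)) u * f i
      = 0 := by
  refine Finset.sum_eq_zero fun i hi => ?_
  have : u ∉ Ioc (gp a b n i) (gp a b n (i + 1)) := fun h =>
    hu ⟨(gp_ge hab n i).trans_lt h.1, h.2.trans (gp_le hab (Finset.mem_range.mp hi))⟩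
  simp only [indicator, this, if_false, zero_mul]

/-- The integrand `1_{(a,b]} c H`. -/
def KH {Ω : Type*} (a b : ℝ) (c : Ω → ℝ) (H : ℝ → Ω → ℝ) (q : ℝ × Ω) : ℝ :=
  (Ioc a b).indicator (fun _ => (1:ℝ)) q.1 * (c q.2 * H q.1 q.2)

lemma Ctx.KH_memLp {Ω : Type*} [mΩ : MeasurableSpace Ω] {μ : Measure Ω} [IsProbabilityMeasure μ]
    {F : ℝ → MeasurableSpace Ω} {Y W : ℝ → Ω → ℝ} {y lam : ℝ} (h : Ctx μ F Y W y lam)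
    {φ : ℝ → ℝ} (hφ : Sg φ) {a b : ℝ} (ha : 0 ≤ a) {c : Ω → ℝ} (hc : Measurable c) {C : ℝ}
    (hC : ∀ ω, |c ω| ≤ C) :
    MemLp (KH a b c (fun s ω => φ (Y s ω))) 2 ((volume : Measure ℝ).prod μ) := by
  obtain ⟨Z, hZm, hZ⟩ := h.tilde
  obtain ⟨D, hD⟩ := hφ.bdd
  have h1 : MemLp ((Ioc a b ×ˢ (univ : Set Ω)).indicator (fun _ => C * D)) 2
      ((volume : Measure ℝ).prod μ) := by
    refine memLp_indicator_const 2 (measurableSet_Ioc.prod MeasurableSet.univ) (C * D) (Or.inr ?_)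
    rw [Measure.prod_prod]
    simp
  have hm : Measurable (fun q : ℝ × Ω => (Ioc a b).indicator (fun _ => (1:ℝ)) q.1 *
      (c q.2 * φ (Z q))) :=
    ((measurable_const.indicator measurableSet_Ioc).comp measurable_fst).mul
      ((hc.comp measurable_snd).mul (hφ.meas.comp hZm))
  have hm' : AEStronglyMeasurable (KH a b c (fun s ω => φ (Y s ω))) ((volume : Measure ℝ).prod μ) := by
    refine hm.aestronglyMeasurable.congr ?_
    filter_upwards [(Measure.quasiMeasurePreserving_snd (μ := (volume : Measure ℝ)) (ν := μ)).ae hZ]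
      with q hq
    by_cases hq1 : q.1 ∈ Ioc a b
    · simp only [KH]
      rw [← hq q.1 (ha.trans hq1.1.le)]
    · simp [KH, indicator, hq1]
  refine h1.mono hm' (Eventually.of_forall fun q => ?_)
  by_cases hq : q.1 ∈ Ioc a b
  · have : |c q.2 * φ (Y q.1 q.2)| ≤ C * D := by
      rw [abs_mul]
      exact mul_le_mul (hC _) (hD _) (abs_nonneg _) ((abs_nonneg _).trans (hC q.2))
    simpa [KH, indicator, hq, abs_mul] using this.trans (le_abs_self _)
  · simp [KH, indicator, hq]

lemma Ctx.grid_lim {Ω : Type*} [mΩ : MeasurableSpace Ω] {μ : Measure Ω} [IsProbabilityMeasure μ]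
    {F : ℝ → MeasurableSpace Ω} {Y W : ℝ → Ω → ℝ} {y lam : ℝ} (h : Ctx μ F Y W y lam)
    {φ ψ : ℝ → ℝ} (hφ : Sg φ) (hψ : Sg ψ) {a b : ℝ} (ha : 0 ≤ a) (hab : a ≤ b) {c : Ω → ℝ}
    (hc : Measurable c) {C : ℝ} (hC : ∀ ω, |c ω| ≤ C) :
    Tendsto (fun n : ℕ => eLpNorm ((∑ i ∈ Finset.range (2 ^ n), KH (gp a b n i) (gp a b n (i + 1))
        (fun ω => c ω * ψ (Y (gp a b n i) ω)) (fun s ω => φ (Y s ω)))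
        - KH a b c (fun s ω => ψ (Y s ω) * φ (Y s ω))) 2 ((volume : Measure ℝ).prod μ))
      atTop (nhds 0) := by
  obtain ⟨D, hD⟩ := hφ.bdd
  obtain ⟨E, hE⟩ := hψ.bdd
  have hbd : MemLp ((Ioc a b ×ˢ (univ : Set Ω)).indicator (fun _ => 2 * (C * E * D))) 2
      ((volume : Measure ℝ).prod μ) := by
    refine memLp_indicator_const 2 (measurableSet_Ioc.prod MeasurableSet.univ) _ (Or.inr ?_)
    rw [Measure.prod_prod]
    simp
  have hb3 : ∀ ω x x', |c ω * ψ x * φ x'| ≤ C * E * D := fun ω x x' => by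
    have hC0 := (abs_nonneg _).trans (hC ω)
    have hE0 := (abs_nonneg _).trans (hE x)
    rw [abs_mul, abs_mul]
    exact mul_le_mul (mul_le_mul (hC _) (hE _) (abs_nonneg _) hC0) (hD _) (abs_nonneg _)
      (mul_nonneg hC0 hE0)
  have hev : ∀ (n : ℕ) (q : ℝ × Ω), (∑ i ∈ Finset.range (2 ^ n), KH (gp a b n i) (gp a b n (i + 1))
        (fun ω => c ω * ψ (Y (gp a b n i) ω)) (fun s ω => φ (Y s ω))) q =
      ∑ i ∈ Finset.range (2 ^ n), (Ioc (gp a b n i) (gp a b n (i + 1))).indicator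
        (fun _ => (1:ℝ)) q.1 * (c q.2 * ψ (Y (gp a b n i) q.2) * φ (Y q.1 q.2)) := by
    intro n q
    rw [Finset.sum_apply]
    rfl
  refine tendsto_eLpNorm_dom (fun n => ?_) hbd (fun n => Eventually.of_forall fun q => ?_) ?_
  · refine AEStronglyMeasurable.sub ?_ (h.KH_memLp (hφ.mul hψ) ha hc hC).1
    refine Finset.aestronglyMeasurable_sum _ fun i hi => ?_
    have hg := ha.trans (gp_ge hab n i)
    refine (h.KH_memLp hφ hg (hc.mul (hψ.meas.comp (h.measm hg))) (C := C * E) fun ω => ?_).1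
    rw [Pi.mul_apply, abs_mul]
    exact mul_le_mul (hC _) (hE _) (abs_nonneg _) ((abs_nonneg _).trans (hC ω))
  · rw [Pi.sub_apply, hev]
    by_cases hq : q.1 ∈ Ioc a b
    · obtain ⟨j, hj, hu⟩ := gp_find hq n
      rw [gp_sum hab hj hu (fun i => c q.2 * ψ (Y (gp a b n i) q.2) * φ (Y q.1 q.2))]
      have h1 := hb3 q.2 (Y (gp a b n j) q.2) (Y q.1 q.2)
      have h2 := hb3 q.2 (Y q.1 q.2) (Y q.1 q.2)
      have h3 : (Ioc a b ×ˢ (univ : Set Ω)).indicator (fun _ => 2 * (C * E * D)) q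
          = 2 * (C * E * D) := by simp [indicator, hq]
      have h4 : KH a b c (fun s ω => ψ (Y s ω) * φ (Y s ω)) q =
          c q.2 * ψ (Y q.1 q.2) * φ (Y q.1 q.2) := by
        simp only [KH, indicator, hq, if_true]; ring
      rw [h3, h4]
      refine (abs_sub _ _).trans ?_
      linarith
    · rw [gp_sum_out hab hq (fun i => c q.2 * ψ (Y (gp a b n i) q.2) * φ (Y q.1 q.2))]
      simp [KH, indicator, hq]
  · filter_upwards [h.ae_prod, (Measure.quasiMeasurePreserving_snd (μ := (volume : Measure ℝ))
      (ν := μ)).ae h.cont] with q hq1 hq2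
    simp only [Pi.sub_apply, hev]
    by_cases hq : q.1 ∈ Ioc a b
    · choose j hj hu using gp_find hq
      have h4 : KH a b c (fun s ω => ψ (Y s ω) * φ (Y s ω)) q =
          c q.2 * ψ (Y q.1 q.2) * φ (Y q.1 q.2) := by
        simp only [KH, indicator, hq, if_true]; ring
      have h5 : ∀ n, ∑ i ∈ Finset.range (2 ^ n), (Ioc (gp a b n i) (gp a b n (i + 1))).indicator
        (fun _ => (1:ℝ)) q.1 * (c q.2 * ψ (Y (gp a b n i) q.2) * φ (Y q.1 q.2)) =
          c q.2 * ψ (Y (gp a b n (j n)) q.2) * φ (Y q.1 q.2) := fun n =>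
        gp_sum hab (hj n) (hu n) (fun i => c q.2 * ψ (Y (gp a b n i) q.2) * φ (Y q.1 q.2))
      simp_rw [h5, h4]
      have h6 : Tendsto (fun n => gp a b n (j n)) atTop (nhds q.1) := by
        have hz : Tendsto (fun n : ℕ => q.1 - (b - a) / 2 ^ n) atTop (nhds q.1) := by
          have : Tendsto (fun n : ℕ => (b - a) / (2:ℝ) ^ n) atTop (nhds 0) :=
            tendsto_const_nhds.div_atTop (tendsto_pow_atTop_atTop_of_one_lt (by norm_num))
          simpa using tendsto_const_nhds.sub this
        refine tendsto_of_tendsto_of_tendsto_of_le_of_le hz tendsto_const_nhds (fun n => ?_)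
          fun n => (hu n).1.le
        have := (hu n).2
        rw [gp_succ] at this
        simp only
        linarith
      have h7 := hψ.cont _ _ (hq1 (ha.trans_lt hq.1)) ((hq2.tendsto q.1).comp h6)
      have h8 := ((h7.const_mul (c q.2)).mul_const (φ (Y q.1 q.2))).sub_const
        (c q.2 * ψ (Y q.1 q.2) * φ (Y q.1 q.2))
      simpa using h8
    · have h5 : ∀ n, ∑ i ∈ Finset.range (2 ^ n), (Ioc (gp a b n i) (gp a b n (i + 1))).indicator
        (fun _ => (1:ℝ)) q.1 * (c q.2 * ψ (Y (gp a b n i) q.2) * φ (Y q.1 q.2)) = 0 := fun n =>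
        gp_sum_out hab hq (fun i => c q.2 * ψ (Y (gp a b n i) q.2) * φ (Y q.1 q.2))
      simp_rw [h5]
      simp [KH, indicator, hq]

/-- Grid sums on `[a, b]`. -/
def gsum {Ω : Type*} (H X : ℝ → Ω → ℝ) (a b : ℝ) (n : ℕ) (ω : Ω) : ℝ :=
  ∑ i ∈ Finset.range (2 ^ n),
    H (gp a b n i) ω * (X (gp a b n (i + 1)) ω - X (gp a b n i) ω)

lemma rsum_eq {Ω : Type*} (H X : ℝ → Ω → ℝ) (t : ℝ) (n : ℕ) :
    rsum H X t n = gsum H X 0 t n := by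
  funext ω
  simp [rsum, gsum, gp]

lemma Ctx.si_grid {Ω : Type*} [mΩ : MeasurableSpace Ω] {μ : Measure Ω} [IsProbabilityMeasure μ]
    {F : ℝ → MeasurableSpace Ω} {Y W : ℝ → Ω → ℝ} {y lam : ℝ} (h : Ctx μ F Y W y lam)
    {M : ℝ → Ω → ℝ} (hM : IsBM μ F M)
    {ψ : ℝ → ℝ} (hψ : Sg ψ) {a b : ℝ} (ha : 0 ≤ a) (hab : a ≤ b) {c : Ω → ℝ}
    (hc : @Measurable Ω ℝ (F a) _ c) {C : ℝ} (hC : ∀ ω, |c ω| ≤ C) (n : ℕ) :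
    SI μ F M (∑ i ∈ Finset.range (2 ^ n), KH (gp a b n i) (gp a b n (i + 1))
        (fun ω => c ω * ψ (Y (gp a b n i) ω)) (fun _ _ => (1:ℝ)))
      (fun ω => c ω * gsum (fun s ω => ψ (Y s ω)) M a b n ω) := by
  obtain ⟨E, hE⟩ := hψ.bdd
  have h1 : SI μ F M (∑ i ∈ Finset.range (2 ^ n), KI (gp a b n i) (gp a b n (i + 1))
        (fun ω => c ω * ψ (Y (gp a b n i) ω)))
      (∑ i ∈ Finset.range (2 ^ n), fun ω => c ω * ψ (Y (gp a b n i) ω) *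
        (M (gp a b n (i + 1)) ω - M (gp a b n i) ω)) := by
    refine SI.sum _ fun i _ => ?_
    have hg := ha.trans (gp_ge hab n i)
    refine SI.gen hM hg (gp_mono hab n (Nat.le_succ i)) (C := C * E) ?_ fun ω => ?_
    · exact (Measurable.mono hc (hM.mono (gp_ge hab n i)) le_rfl).mul
        (hψ.meas.comp (h.adapt _ hg))
    · rw [abs_mul]
      exact mul_le_mul (hC _) (hE _) (abs_nonneg _) ((abs_nonneg _).trans (hC ω))
  refine h1.congr (EventuallyEq.of_eq ?_) (EventuallyEq.of_eq ?_)
  · refine Finset.sum_congr rfl fun i _ => ?_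
    funext q
    simp [KI, KH]
  · funext ω
    simp only [Finset.sum_apply, gsum, Finset.mul_sum]
    refine Finset.sum_congr rfl fun i _ => ?_
    ring

lemma Ctx.si_zero {Ω : Type*} [mΩ : MeasurableSpace Ω] {μ : Measure Ω} [IsProbabilityMeasure μ]
    {F : ℝ → MeasurableSpace Ω} {Y W : ℝ → Ω → ℝ} {y lam : ℝ} (h : Ctx μ F Y W y lam)
    {M I : ℝ → Ω → ℝ} (hM : IsBM μ F M)
    {ψ : ℝ → ℝ} (hψ : Sg ψ) (hI : IsSI μ (fun s ω => ψ (Y s ω)) M I) {b : ℝ} (hb : 0 ≤ b) :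
    SI μ F M (KH 0 b (fun _ => 1) (fun s ω => ψ (Y s ω))) (I b) := by
  have h1 := h.si_grid hM hψ le_rfl hb (c := fun _ => 1) measurable_const (C := 1) (by simp)
  have h2 := h.grid_lim (sg_const 1) hψ le_rfl hb (c := fun _ => (1:ℝ)) measurable_const (C := 1)
    (by simp)
  have h3 := h.KH_memLp hψ (a := 0) (b := b) le_rfl (c := fun _ => (1:ℝ)) measurable_const (C := 1)
    (by simp)
  simp only [mul_one] at h2
  refine SI.of_tendsto hM h1 h3 h2 ?_
  have := hI.2 b hb
  simp_rw [rsum_eq] at this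
  simpa using this

lemma Ctx.si_incr {Ω : Type*} [mΩ : MeasurableSpace Ω] {μ : Measure Ω} [IsProbabilityMeasure μ]
    {F : ℝ → MeasurableSpace Ω} {Y W : ℝ → Ω → ℝ} {y lam : ℝ} (h : Ctx μ F Y W y lam)
    {M I : ℝ → Ω → ℝ} (hM : IsBM μ F M)
    {ψ : ℝ → ℝ} (hψ : Sg ψ) (hI : IsSI μ (fun s ω => ψ (Y s ω)) M I) {a b : ℝ} (ha : 0 ≤ a)
    (hab : a ≤ b) :
    SI μ F M (KH a b (fun _ => 1) (fun s ω => ψ (Y s ω))) (fun ω => I b ω - I a ω) := by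
  refine ((h.si_zero hM hψ hI (ha.trans hab)).sub (h.si_zero hM hψ hI ha)).congr
    (EventuallyEq.of_eq ?_) (EventuallyEq.of_eq rfl)
  funext q
  simp only [Pi.sub_apply, KH, indicator, mem_Ioc, one_mul]
  by_cases h1 : q.1 ≤ a
  · have : ¬ a < q.1 := not_lt.mpr h1
    have h2 := h1.trans hab
    simp [h1, h2, this]
  · have h3 := not_le.mp h1
    have := ha.trans_lt h3
    simp [h1, h3, this]

lemma Ctx.gsum_lim {Ω : Type*} [mΩ : MeasurableSpace Ω] {μ : Measure Ω} [IsProbabilityMeasure μ]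
    {F : ℝ → MeasurableSpace Ω} {Y W : ℝ → Ω → ℝ} {y lam : ℝ} (h : Ctx μ F Y W y lam)
    {M I : ℝ → Ω → ℝ} (hM : IsBM μ F M)
    {ψ : ℝ → ℝ} (hψ : Sg ψ) (hI : IsSI μ (fun s ω => ψ (Y s ω)) M I) {a b : ℝ} (ha : 0 ≤ a)
    (hab : a ≤ b) :
    Tendsto (fun n => eLpNorm (gsum (fun s ω => ψ (Y s ω)) M a b n - fun ω => I b ω - I a ω) 2 μ)
      atTop (nhds 0) := by
  have h1 := h.si_grid hM hψ ha hab (c := fun _ => 1) measurable_const (C := 1) (by simp)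
  have h2 := h.grid_lim (sg_const 1) hψ ha hab (c := fun _ => (1:ℝ)) measurable_const (C := 1)
    (by simp)
  simp only [mul_one] at h2
  have := SI.tendsto hM h1 (h.si_incr hM hψ hI ha hab) h2
  simpa using this

lemma Ctx.gsum_meas {Ω : Type*} [mΩ : MeasurableSpace Ω] {μ : Measure Ω}
    {F : ℝ → MeasurableSpace Ω} {Y W : ℝ → Ω → ℝ} {y lam : ℝ} (h : Ctx μ F Y W y lam)
    {M : ℝ → Ω → ℝ} (hM : IsBM μ F M)
    {ψ : ℝ → ℝ} (hψ : Sg ψ) {a b : ℝ} (ha : 0 ≤ a) (hab : a ≤ b) (n : ℕ) :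
    Measurable (gsum (fun s ω => ψ (Y s ω)) M a b n) := by
  unfold gsum
  refine Finset.measurable_fun_sum _ fun i _ => ?_
  have hg := ha.trans (gp_ge hab n i)
  have hg' := ha.trans (gp_ge hab n (i + 1))
  exact (hψ.meas.comp (h.measm hg)).mul ((hM.measm hg').sub (hM.measm hg))

lemma Ctx.gsum_tim {Ω : Type*} [mΩ : MeasurableSpace Ω] {μ : Measure Ω} [IsProbabilityMeasure μ]
    {F : ℝ → MeasurableSpace Ω} {Y W : ℝ → Ω → ℝ} {y lam : ℝ} (h : Ctx μ F Y W y lam)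
    {M I : ℝ → Ω → ℝ} (hM : IsBM μ F M)
    {ψ : ℝ → ℝ} (hψ : Sg ψ) (hI : IsSI μ (fun s ω => ψ (Y s ω)) M I) {a b : ℝ} (ha : 0 ≤ a)
    (hab : a ≤ b) :
    TendstoInMeasure μ (fun n => gsum (fun s ω => ψ (Y s ω)) M a b n) atTop
      (fun ω => I b ω - I a ω) := by
  obtain ⟨_, h2, _⟩ := h.si_incr hM hψ hI ha hab
  exact tendstoInMeasure_of_tendsto_eLpNorm (by norm_num)
    (fun n => (h.gsum_meas hM hψ ha hab n).aestronglyMeasurable) h2.1 (h.gsum_lim hM hψ hI ha hab)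

lemma Ctx.si_mul {Ω : Type*} [mΩ : MeasurableSpace Ω] {μ : Measure Ω} [IsProbabilityMeasure μ]
    {F : ℝ → MeasurableSpace Ω} {Y W : ℝ → Ω → ℝ} {y lam : ℝ} (h : Ctx μ F Y W y lam)
    {M I : ℝ → Ω → ℝ} (hM : IsBM μ F M)
    {ψ : ℝ → ℝ} (hψ : Sg ψ) (hI : IsSI μ (fun s ω => ψ (Y s ω)) M I) {a b : ℝ} (ha : 0 ≤ a)
    (hab : a ≤ b) {c : Ω → ℝ}
    (hc : @Measurable Ω ℝ (F a) _ c) {C : ℝ} (hC : ∀ ω, |c ω| ≤ C) :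
    SI μ F M (KH a b c (fun s ω => ψ (Y s ω))) (fun ω => c ω * (I b ω - I a ω)) := by
  have hcm : Measurable c := Measurable.mono hc (hM.le a) le_rfl
  have h1 := h.si_grid hM hψ ha hab hc hC
  have h2 := h.grid_lim (sg_const 1) hψ ha hab hcm hC
  have h3 := h.KH_memLp hψ (b := b) ha hcm hC
  simp only [mul_one] at h2
  refine SI.of_tendsto hM h1 h3 h2 ?_
  obtain ⟨_, h4, _⟩ := h.si_incr hM hψ hI ha hab
  refine tendstoInMeasure_of_tendsto_eLpNorm (p := 2) (by norm_num)
    (fun n => (hcm.mul (h.gsum_meas hM hψ ha hab n)).aestronglyMeasurable)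
    (hcm.aestronglyMeasurable.mul h4.1) ?_
  have h5 := ENNReal.Tendsto.const_mul (a := ENNReal.ofReal C) (h.gsum_lim hM hψ hI ha hab)
    (Or.inr ENNReal.ofReal_ne_top)
  rw [MulZeroClass.mul_zero] at h5
  refine tendsto_of_tendsto_of_tendsto_of_le_of_le tendsto_const_nhds h5 (fun _ => bot_le)
    fun n => ?_
  refine eLpNorm_le_mul_eLpNorm_of_ae_le_mul (Eventually.of_forall fun ω => ?_) 2
  simp only [Pi.sub_apply]
  rw [← mul_sub, norm_mul]
  exact mul_le_mul_of_nonneg_right (hC ω) (norm_nonneg _)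

/-- Associativity: integrating `χ(Y)` against `I = ∫ψ(Y)dM` gives `∫χψ(Y)dM`. -/
lemma Ctx.assoc {Ω : Type*} [mΩ : MeasurableSpace Ω] {μ : Measure Ω} [IsProbabilityMeasure μ]
    {F : ℝ → MeasurableSpace Ω} {Y W : ℝ → Ω → ℝ} {y lam : ℝ} (h : Ctx μ F Y W y lam)
    {M I : ℝ → Ω → ℝ} (hM : IsBM μ F M)
    {ψ χ : ℝ → ℝ} (hψ : Sg ψ) (hχ : Sg χ) (hI : IsSI μ (fun s ω => ψ (Y s ω)) M I) {ε : ℝ}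
    (hε : ∀ x, χ x * ψ x = ε * ψ x) {a b : ℝ} (ha : 0 ≤ a) (hab : a ≤ b) :
    TendstoInMeasure μ (fun n => gsum (fun s ω => χ (Y s ω)) I a b n) atTop
      (fun ω => ε * (I b ω - I a ω)) := by
  obtain ⟨E, hE⟩ := hχ.bdd
  have h1 : ∀ n : ℕ, SI μ F M (∑ i ∈ Finset.range (2 ^ n), KH (gp a b n i) (gp a b n (i + 1))
        (fun ω => 1 * χ (Y (gp a b n i) ω)) (fun s ω => ψ (Y s ω)))
      (∑ i ∈ Finset.range (2 ^ n), fun ω => 1 * χ (Y (gp a b n i) ω) *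
        (I (gp a b n (i + 1)) ω - I (gp a b n i) ω)) := by
    intro n
    refine SI.sum _ fun i _ => ?_
    have hg := ha.trans (gp_ge hab n i)
    refine h.si_mul hM hψ hI hg (gp_mono hab n (Nat.le_succ i)) (C := E) ?_ fun ω => ?_
    · simp only [one_mul]; exact hχ.meas.comp (h.adapt _ hg)
    · rw [one_mul]; exact hE _
  have h2 := h.grid_lim hψ hχ ha hab (c := fun _ => (1:ℝ)) measurable_const (C := 1) (by simp)
  have h3 : SI μ F M (KH a b (fun _ => 1) (fun s ω => χ (Y s ω) * ψ (Y s ω)))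
      (fun ω => ε * (I b ω - I a ω)) := by
    refine (h.si_mul hM hψ hI ha hab (c := fun _ => ε) measurable_const (C := |ε|)
      (fun _ => le_rfl)).congr (EventuallyEq.of_eq ?_) (EventuallyEq.of_eq rfl)
    funext q
    simp only [KH, hε, one_mul]
  have h4 := SI.tendsto hM h1 h3 h2
  have e : ∀ n, (∑ i ∈ Finset.range (2 ^ n), fun ω => 1 * χ (Y (gp a b n i) ω) *
        (I (gp a b n (i + 1)) ω - I (gp a b n i) ω)) = gsum (fun s ω => χ (Y s ω)) I a b n := by
    intro n; funext ω; simp [gsum]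
  simp_rw [e] at h4
  refine tendstoInMeasure_of_tendsto_eLpNorm (p := 2) (by norm_num) (fun n => ?_) ?_ h4
  · rw [← e]; exact (h1 n).choose_spec.choose.1
  · exact h3.choose_spec.choose.1

lemma riem {Y f : ℝ → ℝ} (hY : Continuous Y) (hz : ∀ᵐ u ∂(volume : Measure ℝ), 0 < u → Y u ≠ 0)
    {ψ : ℝ → ℝ} (hψ : Sg ψ) (hf : Measurable f) (hf1 : ∀ u, |f u| ≤ 1) {a b : ℝ} (ha : 0 ≤ a)
    (hab : a ≤ b) :
    Tendsto (fun n : ℕ => ∑ i ∈ Finset.range (2 ^ n),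
      ψ (Y (gp a b n i)) * ∫ u in (gp a b n i)..(gp a b n (i + 1)), f u) atTop
      (nhds (∫ u in a..b, ψ (Y u) * f u)) := by
  obtain ⟨E, hE⟩ := hψ.bdd
  set st : ℕ → ℝ → ℝ := fun n u => ∑ i ∈ Finset.range (2 ^ n),
    (Ioc (gp a b n i) (gp a b n (i + 1))).indicator (fun _ => (1:ℝ)) u * ψ (Y (gp a b n i)) with hst
  have hstm : ∀ n, Measurable (st n) := fun n => by
    refine Finset.measurable_fun_sum _ fun i _ => ?_
    exact (measurable_const.indicator measurableSet_Ioc).mul measurable_const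
  have hfint : ∀ c d, IntervalIntegrable f volume c d := fun c d => by
    refine (intervalIntegrable_const (c := (1:ℝ))).mono_fun hf.aestronglyMeasurable ?_
    exact Eventually.of_forall fun u => by simpa using hf1 u
  have key : ∀ n i, i < 2 ^ n → ∀ u ∈ uIoc (gp a b n i) (gp a b n (i + 1)),
      ψ (Y (gp a b n i)) * f u = st n u * f u := by
    intro n i hi u hu
    rw [uIoc_of_le (gp_mono hab n (Nat.le_succ i))] at hu
    rw [hst]
    simp only
    rw [gp_sum hab hi hu (fun i => ψ (Y (gp a b n i)))]
  have hsum : ∀ n : ℕ, ∑ i ∈ Finset.range (2 ^ n),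
      ψ (Y (gp a b n i)) * ∫ u in (gp a b n i)..(gp a b n (i + 1)), f u =
      ∫ u in a..b, st n u * f u := by
    intro n
    have h1 := intervalIntegral.sum_integral_adjacent_intervals (f := fun u => st n u * f u)
      (μ := volume) (a := gp a b n) (n := 2 ^ n) (fun i hi =>
        ((hfint (gp a b n i) (gp a b n (i + 1))).const_mul (ψ (Y (gp a b n i)))).congr (key n i hi))
    rw [gp_zero, gp_last] at h1
    rw [← h1]
    refine Finset.sum_congr rfl fun i hi => ?_
    rw [← intervalIntegral.integral_const_mul]
    refine intervalIntegral.integral_congr_ae (Eventually.of_forall fun u hu => ?_)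
    exact key n i (Finset.mem_range.mp hi) u hu
  simp_rw [hsum]
  refine intervalIntegral.tendsto_integral_filter_of_dominated_convergence (fun _ => E)
    (Eventually.of_forall fun n => ((hstm n).mul hf).aestronglyMeasurable)
    (Eventually.of_forall fun n => Eventually.of_forall fun u hu => ?_) intervalIntegrable_const ?_
  · rw [uIoc_of_le hab] at hu
    obtain ⟨j, hj, hu'⟩ := gp_find hu n
    have : st n u = ψ (Y (gp a b n j)) := gp_sum hab hj hu' (fun i => ψ (Y (gp a b n i)))
    rw [this, norm_mul]
    have h1 := hE (Y (gp a b n j))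
    have h2 := hf1 u
    have h0 := abs_nonneg (f u)
    simp only [Real.norm_eq_abs]
    nlinarith [abs_nonneg (ψ (Y (gp a b n j)))]
  · filter_upwards [hz] with u hu0 hu
    rw [uIoc_of_le hab] at hu
    choose j hj hu' using gp_find hu
    have h5 : ∀ n, st n u = ψ (Y (gp a b n (j n))) := fun n =>
      gp_sum hab (hj n) (hu' n) (fun i => ψ (Y (gp a b n i)))
    simp_rw [h5]
    have h6 : Tendsto (fun n => gp a b n (j n)) atTop (nhds u) := by
      have hz : Tendsto (fun n : ℕ => u - (b - a) / 2 ^ n) atTop (nhds u) := by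
        have : Tendsto (fun n : ℕ => (b - a) / (2:ℝ) ^ n) atTop (nhds 0) :=
          tendsto_const_nhds.div_atTop (tendsto_pow_atTop_atTop_of_one_lt (by norm_num))
        simpa using tendsto_const_nhds.sub this
      refine tendsto_of_tendsto_of_tendsto_of_le_of_le hz tendsto_const_nhds (fun n => ?_)
        fun n => (hu' n).1.le
      have := (hu' n).2
      rw [gp_succ] at this
      simp only
      linarith
    exact (hψ.cont _ _ (hu0 (ha.trans_lt hu.1)) ((hY.tendsto u).comp h6)).mul_const _

lemma Ctx.V_eq {Ω : Type*} [mΩ : MeasurableSpace Ω] {μ : Measure Ω} [IsProbabilityMeasure μ]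
    {F : ℝ → MeasurableSpace Ω} {Y W : ℝ → Ω → ℝ} {y lam : ℝ} (h : Ctx μ F Y W y lam)
    {V B₁ B₂ I₁ I₂ : ℝ → Ω → ℝ} (hB₁ : IsBM μ F B₁) (hB₂ : IsBM μ F B₂)
    (hV : IsSI μ (fun s ω => psgn (Y s ω)) W V)
    (hI₁ : IsSI μ (fun s ω => if Y s ω ≤ 0 then (0:ℝ) else 1) B₁ I₁)
    (hI₂ : IsSI μ (fun s ω => if Y s ω ≤ 0 then (1:ℝ) else 0) B₂ I₂)
    (hW : ∀ᵐ ω ∂μ, ∀ t, 0 ≤ t → W t ω = I₁ t ω - I₂ t ω) {t : ℝ} (ht : 0 ≤ t) :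
    ∀ᵐ ω ∂μ, V t ω = I₁ t ω + I₂ t ω := by
  have hψ₁ : Sg (fun x => if x ≤ 0 then (0:ℝ) else 1) := by
    have : (fun x => if x ≤ 0 then (0:ℝ) else 1) =
        fun x => (fun _ => (1/2 : ℝ)) x + (psgn x * (fun _ => (1/2:ℝ)) x) := by
      funext x
      by_cases hx : x ≤ 0
      · simp [psgn, hx, not_lt.mpr hx]
      · simp [psgn, hx, not_le.mp hx]; norm_num
    rw [this]
    exact (sg_const (1/2)).add ((sg_const (1/2)).mul sg_psgn)
  have hψ₂ : Sg (fun x => if x ≤ 0 then (1:ℝ) else 0) := by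
    have : (fun x => if x ≤ 0 then (1:ℝ) else 0) =
        fun x => (fun _ => (1/2 : ℝ)) x + (psgn x * (fun _ => (-1/2:ℝ)) x) := by
      funext x
      by_cases hx : x ≤ 0
      · simp [psgn, hx, not_lt.mpr hx]; norm_num
      · simp [psgn, hx, not_le.mp hx]; norm_num
    rw [this]
    exact (sg_const (1/2)).add ((sg_const (-1/2)).mul sg_psgn)
  have h1 := h.assoc hB₁ hψ₁ sg_psgn hI₁ (ε := 1) (fun x => by
    by_cases hx : x ≤ 0
    · simp [psgn, hx]
    · simp [psgn, hx, not_le.mp hx]) le_rfl ht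
  have h2 := h.assoc hB₂ hψ₂ sg_psgn hI₂ (ε := -1) (fun x => by
    by_cases hx : x ≤ 0
    · simp [psgn, hx]
    · simp [psgn, hx, not_le.mp hx]) le_rfl ht
  have h3 := hV.2 t ht
  obtain ⟨n1, hn1, hc1⟩ := h1.exists_seq_tendsto_ae
  have h2' := h2.comp hn1.tendsto_atTop
  obtain ⟨n2, hn2, hc2⟩ := h2'.exists_seq_tendsto_ae
  have h3' := (h3.comp hn1.tendsto_atTop).comp hn2.tendsto_atTop
  obtain ⟨n3, hn3, hc3⟩ := h3'.exists_seq_tendsto_ae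
  filter_upwards [hc1, hc2, hc3, hW, hI₁.1, hI₂.1] with ω k1 k2 k3 hw i1 i2
  have k1' := k1.comp (hn2.comp hn3).tendsto_atTop
  have k2' := k2.comp hn3.tendsto_atTop
  have k4 := k1'.sub k2'
  refine tendsto_nhds_unique k3 ?_
  have e : I₁ t ω + I₂ t ω = 1 * (I₁ t ω - I₁ 0 ω) - -1 * (I₂ t ω - I₂ 0 ω) := by
    rw [i1, i2]; ring
  rw [e]
  refine k4.congr fun n => ?_
  simp only [Function.comp, rsum_eq]
  simp only [gsum]
  rw [← Finset.sum_sub_distrib]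
  refine Finset.sum_congr rfl fun i _ => ?_
  rw [hw _ (gp_ge ht _ _), hw _ (gp_ge ht _ _)]
  ring

lemma Ctx.tanaka_pair {Ω : Type*} [mΩ : MeasurableSpace Ω] {μ : Measure Ω} [IsProbabilityMeasure μ]
    {F : ℝ → MeasurableSpace Ω} {Y W : ℝ → Ω → ℝ} {y lam : ℝ} (h : Ctx μ F Y W y lam)
    {V : ℝ → Ω → ℝ} (hV : IsSI μ (fun s ω => psgn (Y s ω)) W V) {a b : ℝ} (ha : 0 ≤ a)
    (hab : a ≤ b) :
    ∀ᵐ ω ∂μ, V b ω - V a ω ≤ |Y b ω| - |Y a ω| + lam * (b - a) ∧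
      ((∀ u ∈ Icc a b, Y u ω ≠ 0) → V b ω - V a ω = |Y b ω| - |Y a ω| + lam * (b - a)) := by
  have h1 := h.gsum_tim h.bm sg_psgn hV ha hab
  obtain ⟨n1, hn1, hc1⟩ := h1.exists_seq_tendsto_ae
  filter_upwards [hc1, h.cont, h.eq, h.ae_leb] with ω k1 hc he hz
  have k2 := (riem hc hz sg_psgn (f := fun u => psgn (Y u ω)) (measurable_psgn.comp hc.measurable)
    (fun u => (abs_psgn _).le) ha hab).comp hn1.tendsto_atTop
  have e1 : ∫ u in a..b, psgn (Y u ω) * psgn (Y u ω) = b - a := by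
    simp_rw [psgn_sq]; simp
  rw [e1] at k2
  have k3 := k1.sub (k2.const_mul lam)
  have hincr : ∀ n i, W (gp a b n (i + 1)) ω - W (gp a b n i) ω =
      Y (gp a b n (i + 1)) ω - Y (gp a b n i) ω + lam *
        ∫ u in (gp a b n i)..(gp a b n (i + 1)), psgn (Y u ω) := by
    intro n i
    have hg := ha.trans (gp_ge hab n i)
    have hm := gp_mono hab n (Nat.le_succ i)
    have hIa := psgn_intervalIntegrable (T := gp a b n (i + 1)) hc.continuousOn le_rfl hg hm
    have hIab := psgn_intervalIntegrable (T := gp a b n (i + 1)) hc.continuousOn hg hm le_rfl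
    rw [he _ (hg.trans hm), he _ hg,
      ← intervalIntegral.integral_add_adjacent_intervals hIa hIab]
    simp only [Nat.succ_eq_add_one]
    ring
  have e2 : ∀ n, gsum (fun s ω => psgn (Y s ω)) W a b n ω - lam * ∑ i ∈ Finset.range (2 ^ n),
      psgn (Y (gp a b n i) ω) * ∫ u in (gp a b n i)..(gp a b n (i + 1)), psgn (Y u ω) =
      |Y b ω| - |Y a ω| - ∑ i ∈ Finset.range (2 ^ n),
        (|Y (gp a b n (i + 1)) ω| - psgn (Y (gp a b n i) ω) * Y (gp a b n (i + 1)) ω) := by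
    intro n
    have e3 : |Y b ω| - |Y a ω| = ∑ i ∈ Finset.range (2 ^ n),
        (|Y (gp a b n (i + 1)) ω| - |Y (gp a b n i) ω|) := by
      rw [Finset.sum_range_sub (fun i => |Y (gp a b n i) ω|), gp_zero, gp_last]
    rw [e3, gsum, Finset.mul_sum, ← Finset.sum_sub_distrib, ← Finset.sum_sub_distrib]
    refine Finset.sum_congr rfl fun i _ => ?_
    rw [hincr, ← psgn_mul_self (Y (gp a b n i) ω)]
    ring
  constructor
  · have : V b ω - V a ω - lam * (b - a) ≤ |Y b ω| - |Y a ω| := by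
      refine le_of_tendsto k3 (Eventually.of_forall fun n => ?_)
      simp only [Function.comp]
      rw [e2]
      have : 0 ≤ ∑ i ∈ Finset.range (2 ^ (n1 n)),
        (|Y (gp a b (n1 n) (i + 1)) ω| - psgn (Y (gp a b (n1 n) i) ω) * Y (gp a b (n1 n) (i + 1)) ω) := by
        refine Finset.sum_nonneg fun i _ => sub_nonneg.mpr ?_
        refine (le_abs_self _).trans ?_
        rw [abs_mul, abs_psgn, one_mul]
      linarith
    linarith
  · intro hne
    have hsgn : ∀ u ∈ Icc a b, ∀ v ∈ Icc a b, u ≤ v → psgn (Y u ω) = psgn (Y v ω) := by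
      intro u hu v hv huv
      have hivt := intermediate_value_uIcc (a := u) (b := v) (f := fun s => Y s ω) hc.continuousOn
      have hnot : (0:ℝ) ∉ uIcc (Y u ω) (Y v ω) := by
        intro h0
        obtain ⟨s, hs, hs0⟩ := hivt h0
        rw [uIcc_of_le huv] at hs
        exact hne s ⟨hu.1.trans hs.1, hs.2.trans hv.2⟩ hs0
      rw [mem_uIcc] at hnot
      push Not at hnot
      simp only [psgn]
      have hu0 := hne u hu
      have hv0 := hne v hv
      rcases lt_or_gt_of_ne hu0 with h1 | h1 <;> rcases lt_or_gt_of_ne hv0 with h2 | h2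
      · simp [not_lt.mpr h1.le, not_lt.mpr h2.le]
      · exact absurd (hnot.1 h1.le) (not_lt.mpr h2.le)
      · exact absurd (hnot.2 h2.le) (not_lt.mpr h1.le)
      · simp [h1, h2]
    have : V b ω - V a ω - lam * (b - a) = |Y b ω| - |Y a ω| := by
      refine tendsto_nhds_unique k3 (tendsto_const_nhds.congr fun n => ?_)
      simp only [Function.comp]
      rw [e2, Finset.sum_eq_zero, sub_zero]
      intro i hi
      have hi' := Finset.mem_range.mp hi
      rw [hsgn _ ⟨gp_ge hab _ i, gp_le hab hi'.le⟩ _ ⟨gp_ge hab _ (i + 1), gp_le hab hi'⟩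
        (gp_mono hab _ (Nat.le_succ i)), psgn_mul_self, sub_self]
    linarith

/-- Clamped rational multiples of `t`. -/
def clampt (t : ℝ) (r : ℝ) : ℝ := t * max 0 (min 1 r)

lemma clampt_mem {t : ℝ} (ht : 0 ≤ t) (r : ℝ) : clampt t r ∈ Icc 0 t := by
  have h1 : 0 ≤ max 0 (min 1 r) := le_max_left _ _
  have h2 : max 0 (min 1 r) ≤ 1 := max_le zero_le_one (min_le_left _ _)
  exact ⟨mul_nonneg ht h1, mul_le_of_le_one_right ht h2⟩

lemma continuous_clampt (t : ℝ) : Continuous (clampt t) := by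
  unfold clampt; fun_prop

lemma clampt_surj {t s : ℝ} (hs : s ∈ Icc 0 t) : ∃ r, clampt t r = s := by
  rcases eq_or_lt_of_le (hs.1.trans hs.2) with h | h
  · refine ⟨0, ?_⟩
    have : s = 0 := le_antisymm (h ▸ hs.2) hs.1
    simp [clampt, this]
  · refine ⟨s / t, ?_⟩
    have h1 : s / t ≤ 1 := (div_le_one h).mpr hs.2
    have h2 : 0 ≤ s / t := div_nonneg hs.1 h.le
    rw [clampt, min_eq_right h1, max_eq_right h2]
    field_simp

lemma skoro_flat {A Y : ℝ → ℝ} (hA : Continuous A)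
    (hflat : ∀ a b : ℚ, (0:ℝ) ≤ a → (a:ℝ) ≤ b → (∀ u ∈ Icc (a:ℝ) b, Y u ≠ 0) → A a = A b)
    {a t : ℝ} (ha : 0 ≤ a) (hat : a < t) (hne : ∀ u ∈ Ioo a t, Y u ≠ 0) : A t ≤ A a := by
  by_contra hcon
  push Not at hcon
  obtain ⟨c, hc1, hc2⟩ := exists_between hcon
  obtain ⟨δ, hδ, h1⟩ := Metric.mem_nhds_iff.mp ((hA.tendsto a).eventually (gt_mem_nhds hc1))
  obtain ⟨δ', hδ', h2⟩ := Metric.mem_nhds_iff.mp ((hA.tendsto t).eventually (lt_mem_nhds hc2))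
  obtain ⟨p, hp1, hp2⟩ := exists_rat_btwn (lt_min (lt_add_of_pos_right a hδ) hat)
  obtain ⟨q, hq1, hq2⟩ := exists_rat_btwn
    (max_lt (hp2.trans_le (min_le_right _ _)) (sub_lt_self t hδ'))
  have hpc : A p < c := h1 (by
    rw [Metric.mem_ball, Real.dist_eq, abs_of_pos (sub_pos.mpr hp1)]
    have := hp2.trans_le (min_le_left _ _)
    linarith)
  have hqc : c < A q := h2 (by
    rw [Metric.mem_ball, Real.dist_eq, abs_sub_comm, abs_of_pos (sub_pos.mpr hq2)]
    have := (le_max_right _ _).trans_lt hq1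
    linarith)
  have hpq := (le_max_left _ _).trans_lt hq1
  have := hflat p q (ha.trans hp1.le) hpq.le
    (fun u hu => hne u ⟨hp1.trans_le hu.1, hu.2.trans_lt hq2⟩)
  linarith

lemma skoro_det {Y S : ℝ → ℝ} {y lam : ℝ} (hY : Continuous Y) (hS : Continuous S)
    (hY0 : Y 0 = y) (hS0 : S 0 = 0)
    (hpair : ∀ a b : ℚ, (0:ℝ) ≤ a → (a:ℝ) ≤ b →
      S b - S a ≤ |Y b| - |Y a| + lam * (b - a) ∧
      ((∀ u ∈ Icc (a:ℝ) b, Y u ≠ 0) → S b - S a = |Y b| - |Y a| + lam * (b - a)))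
    {t : ℝ} (ht : 0 ≤ t) :
    |Y t| = |y| - lam * t + S t +
      ⨆ q : ℚ, max 0 (-(|y| - lam * clampt t q + S (clampt t q))) := by
  set A : ℝ → ℝ := fun u => |Y u| - |y| + lam * u - S u with hA
  have hAc : Continuous A := by rw [hA]; fun_prop
  have hA0 : A 0 = 0 := by simp [hA, hY0, hS0]
  have hflat : ∀ a b : ℚ, (0:ℝ) ≤ a → (a:ℝ) ≤ b → (∀ u ∈ Icc (a:ℝ) b, Y u ≠ 0) → A a = A b := by
    intro a b ha hab hne
    have := (hpair a b ha hab).2 hne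
    simp only [hA]; linarith
  have hmono : ∀ a b : ℝ, 0 ≤ a → a ≤ b → A a ≤ A b := by
    have key : ∀ p q : ℝ, A |p| ≤ A (|p| + |q|) := by
      intro p q
      refine DenseRange.induction_on₂ (p := fun p q : ℝ => A |p| ≤ A (|p| + |q|))
        (Rat.denseRange_cast (𝕜 := ℝ)) ?_ ?_ p q
      · exact isClosed_le (by fun_prop) (by fun_prop)
      · intro a b
        have := (hpair |a| (|a| + |b|) (by simp) (by simp)).1
        push_cast at this
        simp only [hA]; linarith
    intro a b ha hab
    have := key a (b - a)
    rwa [abs_of_nonneg ha, abs_of_nonneg (sub_nonneg.mpr hab), add_sub_cancel] at this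
  have hZ : ∀ u, |y| - lam * u + S u = |Y u| - A u := fun u => by simp only [hA]; ring
  simp_rw [hZ]
  have hub : ∀ s ∈ Icc 0 t, max 0 (-(|Y s| - A s)) ≤ A t := by
    intro s hs
    refine max_le ?_ ?_
    · rw [← hA0]; exact hmono _ _ le_rfl ht
    · have := hmono s t hs.1 hs.2
      have := abs_nonneg (Y s)
      linarith
  have hex : ∃ s ∈ Icc 0 t, A t ≤ max 0 (-(|Y s| - A s)) := by
    by_cases hz : ∃ u ∈ Icc 0 t, Y u = 0
    · have hcomp : IsCompact (Icc 0 t ∩ Y ⁻¹' {0}) :=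
        isCompact_Icc.inter_right (isClosed_singleton.preimage hY)
      obtain ⟨s, ⟨hs, hs0⟩, hmax⟩ := hcomp.exists_isGreatest
        (by obtain ⟨u, hu, hu0⟩ := hz; exact ⟨u, hu, hu0⟩)
      refine ⟨s, hs, le_max_of_le_right ?_⟩
      have hs0' : Y s = 0 := hs0
      rw [hs0', abs_zero, zero_sub, neg_neg]
      rcases eq_or_lt_of_le hs.2 with h | h
      · rw [h]
      · refine skoro_flat hAc hflat hs.1 h fun u hu hu0 => ?_
        exact absurd (hmax ⟨⟨hs.1.trans hu.1.le, hu.2.le⟩, hu0⟩) (not_le.mpr hu.1)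
    · push Not at hz
      refine ⟨0, ⟨le_rfl, ht⟩, le_max_of_le_left ?_⟩
      rcases eq_or_lt_of_le ht with h | h
      · rw [← h, hA0]
      · rw [← hA0]
        exact skoro_flat hAc hflat le_rfl h fun u hu => hz u ⟨hu.1.le, hu.2.le⟩
  have hbdd : BddAbove (range fun q : ℚ => max 0 (-(|Y (clampt t q)| - A (clampt t q)))) := by
    refine ⟨A t, ?_⟩
    rintro _ ⟨q, rfl⟩
    exact hub _ (clampt_mem ht _)
  have hsup : ⨆ q : ℚ, max 0 (-(|Y (clampt t q)| - A (clampt t q))) = A t := by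
    refine le_antisymm (ciSup_le fun q => hub _ (clampt_mem ht _)) ?_
    obtain ⟨s, hs, hle⟩ := hex
    refine hle.trans ?_
    obtain ⟨r, hr⟩ := clampt_surj hs
    rw [← hr]
    have hcl := continuous_clampt t
    refine DenseRange.induction_on (Rat.denseRange_cast (𝕜 := ℝ))
      (p := fun r : ℝ => max 0 (-(|Y (clampt t r)| - A (clampt t r))) ≤
        ⨆ q : ℚ, max 0 (-(|Y (clampt t q)| - A (clampt t q)))) r ?_ ?_
    · exact isClosed_le (by fun_prop) continuous_const
    · intro q; exact le_ciSup hbdd q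
  rw [hsup]; ring

lemma Ctx.init {Ω : Type*} [mΩ : MeasurableSpace Ω] {μ : Measure Ω}
    {F : ℝ → MeasurableSpace Ω} {Y W : ℝ → Ω → ℝ} {y lam : ℝ} (h : Ctx μ F Y W y lam) :
    ∀ᵐ ω ∂μ, Y 0 ω = y := by
  filter_upwards [h.eq, h.bm.init] with ω h1 h2
  rw [h1 0 le_rfl, h2]; simp

lemma Ctx.skoro {Ω : Type*} [mΩ : MeasurableSpace Ω] {μ : Measure Ω} [IsProbabilityMeasure μ]
    {F : ℝ → MeasurableSpace Ω} {Y W : ℝ → Ω → ℝ} {y lam : ℝ} (h : Ctx μ F Y W y lam)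
    {V S : ℝ → Ω → ℝ} (hV : IsSI μ (fun s ω => psgn (Y s ω)) W V)
    (hS : ∀ᵐ ω ∂μ, Continuous fun t => S t ω) (hSV : ∀ t, 0 ≤ t → V t =ᵐ[μ] S t)
    {t : ℝ} (ht : 0 ≤ t) :
    ∀ᵐ ω ∂μ, |Y t ω| = |y| - lam * t + S t ω +
      ⨆ q : ℚ, max 0 (-(|y| - lam * clampt t q + S (clampt t q) ω)) := by
  have hp : ∀ᵐ ω ∂μ, ∀ a b : ℚ, (0:ℝ) ≤ a → (a:ℝ) ≤ b →
      S b ω - S a ω ≤ |Y b ω| - |Y a ω| + lam * (b - a) ∧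
      ((∀ u ∈ Icc (a:ℝ) b, Y u ω ≠ 0) → S b ω - S a ω = |Y b ω| - |Y a ω| + lam * (b - a)) := by
    rw [ae_all_iff]; intro a
    rw [ae_all_iff]; intro b
    by_cases ha : (0:ℝ) ≤ a
    · by_cases hab : (a:ℝ) ≤ b
      · filter_upwards [h.tanaka_pair hV ha hab, hSV a ha, hSV b (ha.trans hab)] with ω h1 h2 h3 _ _
        rw [← h2, ← h3]; exact h1
      · exact Eventually.of_forall fun ω _ h2 => absurd h2 hab
    · exact Eventually.of_forall fun ω h2 => absurd h2 ha
  filter_upwards [hp, hS, h.cont, h.init, hV.1, hSV 0 le_rfl] with ω h1 h2 h3 h4 h5 h6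
  exact skoro_det h3 h2 h4 (by rw [← h6]; exact h5) h1 ht

/-! ### Filtration identities -/

lemma Ctx.abs_le_V {Ω : Type*} {G : MeasurableSpace Ω} [mΩ : MeasurableSpace Ω] {μ : Measure Ω}
    [IsProbabilityMeasure μ]
    {F : ℝ → MeasurableSpace Ω} {Y W : ℝ → Ω → ℝ} {y lam : ℝ} (h : Ctx μ F Y W y lam)
    {V S : ℝ → Ω → ℝ} (hV : IsSI μ (fun s ω => psgn (Y s ω)) W V)
    (hS : ∀ᵐ ω ∂μ, Continuous fun t => S t ω) (hSV : ∀ t, 0 ≤ t → V t =ᵐ[μ] S t)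
    {t : ℝ} (ht : 0 ≤ t) (hG : Cpl μ G) (hm : ∀ s ∈ Icc 0 t, @Measurable Ω ℝ G _ (S s)) :
    @Measurable Ω ℝ G _ (fun ω => |Y t ω|) := by
  have h1 : @Measurable Ω ℝ G _ (fun ω => |y| - lam * t + S t ω +
      ⨆ q : ℚ, max 0 (-(|y| - lam * clampt t q + S (clampt t q) ω))) := by
    refine Measurable.add (measurable_const.add (hm t ⟨ht, le_rfl⟩)) ?_
    refine Measurable.iSup fun q => ?_
    exact measurable_const.max (measurable_const.add (hm _ (clampt_mem ht _))).neg
  refine meas_of_ae_eq hG h1 ?_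
  filter_upwards [h.skoro hV hS hSV ht] with ω h2 using h2.symm

lemma Ctx.Y_of_W {Ω : Type*} {G : MeasurableSpace Ω} [mΩ : MeasurableSpace Ω] {μ : Measure Ω}
    {F : ℝ → MeasurableSpace Ω} {Y W : ℝ → Ω → ℝ} {y lam : ℝ} (h : Ctx μ F Y W y lam)
    {t : ℝ} (ht : 0 ≤ t) (hG : Cpl μ G) (hm : ∀ s ∈ Icc 0 t, @Measurable Ω ℝ G _ (W s)) :
    @Measurable Ω ℝ G _ (Y t) := by
  refine meas_of_tendsto_ae hG (f := fun n ω => euler lam y t n (fun u => W u ω) (2 ^ n))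
    (fun n => measurable_euler G (N := 2 ^ n) (fun k hk => hm _ (grid_mem ht hk)) _ le_rfl) ?_
  filter_upwards [h.cont, h.eq, h.bm.init] with ω h1 h2 h3
  exact euler_conv h.lam0 ht h1.continuousOn h3 fun s hs => h2 s hs.1

lemma Ctx.W_of_Y {Ω : Type*} {G : MeasurableSpace Ω} [mΩ : MeasurableSpace Ω] {μ : Measure Ω}
    [IsProbabilityMeasure μ]
    {F : ℝ → MeasurableSpace Ω} {Y W : ℝ → Ω → ℝ} {y lam : ℝ} (h : Ctx μ F Y W y lam)
    {t : ℝ} (ht : 0 ≤ t) (hG : Cpl μ G) (hm : ∀ s ∈ Icc 0 t, @Measurable Ω ℝ G _ (Y s)) :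
    @Measurable Ω ℝ G _ (W t) := by
  refine meas_of_tendsto_ae hG (f := fun n ω => Y t ω - y + lam * ∑ i ∈ Finset.range (2 ^ n),
      psgn (Y (gp 0 t n i) ω) * ∫ u in (gp 0 t n i)..(gp 0 t n (i + 1)), (1:ℝ))
    (fun n => ?_) ?_
  · refine ((hm t ⟨ht, le_rfl⟩).sub measurable_const).add (Measurable.const_mul ?_ lam)
    refine Finset.measurable_fun_sum _ fun i hi => ?_
    refine Measurable.mul_const ?_ _
    exact measurable_psgn.comp (hm _ ⟨gp_ge ht _ _, gp_le ht (Finset.mem_range.mp hi).le⟩)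
  · filter_upwards [h.cont, h.eq, h.ae_leb] with ω h1 h2 h3
    have k := riem h1 h3 sg_psgn (f := fun _ => (1:ℝ)) measurable_const (by simp) le_rfl ht
    have k2 := (k.const_mul lam).const_add (Y t ω - y)
    have e : W t ω = Y t ω - y + lam * ∫ u in (0:ℝ)..t, psgn (Y u ω) * 1 := by
      rw [h2 t ht]; simp only [mul_one]; ring
    rw [e]
    exact k2

lemma Ctx.V_of_YW {Ω : Type*} {G : MeasurableSpace Ω} [mΩ : MeasurableSpace Ω] {μ : Measure Ω}
    {Y W V : ℝ → Ω → ℝ} (hV : IsSI μ (fun s ω => psgn (Y s ω)) W V)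
    {t : ℝ} (ht : 0 ≤ t) (hG : Cpl μ G) (hm : ∀ s ∈ Icc 0 t, @Measurable Ω ℝ G _ (Y s))
    (hm' : ∀ s ∈ Icc 0 t, @Measurable Ω ℝ G _ (W s)) :
    @Measurable Ω ℝ G _ (V t) := by
  refine meas_of_tim hG (f := fun n => rsum (fun s ω => psgn (Y s ω)) W t n) (fun n => ?_)
    (hV.2 t ht)
  rw [rsum_eq]
  unfold gsum
  refine Finset.measurable_fun_sum _ fun i hi => ?_
  have h1 := (⟨gp_ge ht n i, gp_le ht (Finset.mem_range.mp hi).le⟩ : gp 0 t n i ∈ Icc 0 t)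
  have h2 := (⟨gp_ge ht n (i + 1), gp_le ht (Finset.mem_range.mp hi)⟩ : gp 0 t n (i + 1) ∈ Icc 0 t)
  exact (measurable_psgn.comp (hm _ h1)).mul ((hm' _ h2).sub (hm' _ h1))

/-! ### Laws of processes with independent Gaussian increments -/

def ex (x : ℝ) : ℂ := Complex.exp (x * Complex.I)

lemma ex_add (x y : ℝ) : ex (x + y) = ex x * ex y := by
  simp [ex, add_mul, Complex.exp_add]

lemma ex_zero : ex 0 = 1 := by simp [ex]

lemma norm_ex (x : ℝ) : ‖ex x‖ = 1 := by
  simp [ex, Complex.norm_exp_ofReal_mul_I]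

lemma continuous_ex : Continuous ex := by unfold ex; fun_prop

lemma measurable_ex : Measurable ex := continuous_ex.measurable

structure Inc {Ω : Type*} [mΩ : MeasurableSpace Ω] (μ : Measure Ω) (F : ℝ → MeasurableSpace Ω)
    (U : ℝ → Ω → ℝ) : Prop where
  le : ∀ t, F t ≤ mΩ
  mono : Monotone F
  meas : ∀ t : ℝ, 0 ≤ t → @Measurable Ω ℝ (F t) _ (U t)
  init : ∀ᵐ ω ∂μ, U 0 ω = 0
  id : ∀ a b : ℝ, 0 ≤ a → a ≤ b → ∀ (c : ℝ) (Z : Ω → ℂ), @Measurable Ω ℂ (F a) _ Z →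
    (∀ ω, ‖Z ω‖ ≤ 1) →
    ∫ ω, Z ω * ex (c * (U b ω - U a ω)) ∂μ =
      (∫ ω, Z ω ∂μ) * Complex.exp (-((b - a) * c ^ 2 / 2 : ℝ))

lemma IsBM.ident {Ω : Type*} [mΩ : MeasurableSpace Ω] {μ : Measure Ω} {F : ℝ → MeasurableSpace Ω}
    {W : ℝ → Ω → ℝ} (h : IsBM μ F W) {a b : ℝ} (ha : 0 ≤ a) (hab : a ≤ b) (c : ℝ) {Z : Ω → ℂ}
    (hZ : @Measurable Ω ℂ (F a) _ Z) :
    ∫ ω, Z ω * ex (c * (W b ω - W a ω)) ∂μ =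
      (∫ ω, Z ω ∂μ) * Complex.exp (-((b - a) * c ^ 2 / 2 : ℝ)) := by
  have hm : Measurable (fun ω => W b ω - W a ω) := (h.measm (ha.trans hab)).sub (h.measm ha)
  have h1 : IndepFun Z (fun ω => ex (c * (W b ω - W a ω))) μ :=
    (h.indepFun ha hab hZ).comp measurable_id
      (measurable_ex.comp (measurable_id.const_mul c) : Measurable fun x : ℝ => ex (c * x))
  rw [h1.integral_fun_mul_eq_mul_integral (Measurable.mono hZ (h.le a) le_rfl).aestronglyMeasurable
    ((measurable_ex.comp (hm.const_mul c)).aestronglyMeasurable)]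
  congr 1
  have h2 : charFun (μ.map (fun ω => W b ω - W a ω)) c = ∫ ω, ex (c * (W b ω - W a ω)) ∂μ := by
    rw [charFun_apply_real, integral_map hm.aemeasurable]
    · simp [ex]
    · exact Continuous.aestronglyMeasurable (by fun_prop)
  rw [← h2, h.law a b ha hab, charFun_gaussianReal]
  congr 1
  have : ((b - a).toNNReal : ℝ) = b - a := Real.coe_toNNReal _ (by linarith)
  push_cast [this]
  simp [this]

lemma IsBM.inc {Ω : Type*} [mΩ : MeasurableSpace Ω] {μ : Measure Ω} {F : ℝ → MeasurableSpace Ω}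
    {W : ℝ → Ω → ℝ} (h : IsBM μ F W) : Inc μ F W where
  le := h.le
  mono := h.mono
  meas t ht := h.meas ht le_rfl
  init := h.init
  id a b ha hab c Z hZ _ := h.ident ha hab c hZ

lemma IsBM.sign {Ω : Type*} [mΩ : MeasurableSpace Ω] {μ : Measure Ω} [IsProbabilityMeasure μ]
    {F : ℝ → MeasurableSpace Ω}
    {W : ℝ → Ω → ℝ} (h : IsBM μ F W) {a b : ℝ} (ha : 0 ≤ a) (hab : a ≤ b) (c : ℝ) {Z : Ω → ℂ}
    (hZ : @Measurable Ω ℂ (F a) _ Z) (hb : ∀ ω, ‖Z ω‖ ≤ 1) {A : Set Ω}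
    (hA : MeasurableSet[F a] A) {e : Ω → ℝ} (he : ∀ ω ∈ A, e ω = -1) (he' : ∀ ω ∉ A, e ω = 1) :
    ∫ ω, Z ω * ex (c * (e ω * (W b ω - W a ω))) ∂μ =
      (∫ ω, Z ω ∂μ) * Complex.exp (-((b - a) * c ^ 2 / 2 : ℝ)) := by
  have hm : Measurable (fun ω => W b ω - W a ω) := (h.measm (ha.trans hab)).sub (h.measm ha)
  have hZ1 : @Measurable Ω ℂ (F a) _ (A.indicator Z) := Measurable.indicator hZ hA
  have hZ2 : @Measurable Ω ℂ (F a) _ (Aᶜ.indicator Z) :=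
    Measurable.indicator hZ (@MeasurableSet.compl _ _ (F a) hA)
  have i1 := h.ident ha hab (-c) hZ1
  have i2 := h.ident ha hab c hZ2
  have bd : ∀ (S : Set Ω) ω, ‖S.indicator Z ω‖ ≤ 1 := fun S ω =>
    (norm_indicator_le_norm_self _ _).trans (hb ω)
  have int1 : ∀ S : Set Ω, @Measurable Ω ℂ (F a) _ (S.indicator Z) →
      Integrable (S.indicator Z) μ := fun S hS =>
    Integrable.of_bound (Measurable.mono hS (h.le a) le_rfl).aestronglyMeasurable 1
      (Eventually.of_forall (bd S))
  have int2 : ∀ (S : Set Ω) (d : ℝ), @Measurable Ω ℂ (F a) _ (S.indicator Z) →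
      Integrable (fun ω => S.indicator Z ω * ex (d * (W b ω - W a ω))) μ := fun S d hS =>
    Integrable.of_bound ((Measurable.mono hS (h.le a) le_rfl).mul
      (measurable_ex.comp (hm.const_mul d))).aestronglyMeasurable 1
      (Eventually.of_forall fun ω => by rw [norm_mul, norm_ex, mul_one]; exact bd S ω)
  have e1 : (fun ω => Z ω * ex (c * (e ω * (W b ω - W a ω)))) = fun ω =>
      A.indicator Z ω * ex (-c * (W b ω - W a ω)) + Aᶜ.indicator Z ω * ex (c * (W b ω - W a ω)) := by
    funext ω
    by_cases hω : ω ∈ A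
    · simp only [he ω hω, indicator_of_mem hω, mem_compl_iff, hω, not_true_eq_false,
        not_false_eq_true, indicator_of_notMem, zero_mul, add_zero]
      congr 2
      ring
    · simp [hω, he' ω hω]
  have e2 : Z = fun ω => A.indicator Z ω + Aᶜ.indicator Z ω := by
    funext ω
    by_cases hω : ω ∈ A <;> simp [hω]
  rw [e1, integral_add (int2 A (-c) hZ1) (int2 Aᶜ c hZ2), i1, i2]
  conv_rhs => rw [e2]
  rw [integral_add (int1 A hZ1) (int1 Aᶜ hZ2)]
  rw [neg_sq]
  ring

lemma IsBM.gsign {Ω : Type*} [mΩ : MeasurableSpace Ω] {μ : Measure Ω} [IsProbabilityMeasure μ]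
    {F : ℝ → MeasurableSpace Ω}
    {W : ℝ → Ω → ℝ} (h : IsBM μ F W) {a b : ℝ} (ha : 0 ≤ a) (hab : a ≤ b) (c : ℝ) {Z : Ω → ℂ}
    (hZ : @Measurable Ω ℂ (F a) _ Z) (hb : ∀ ω, ‖Z ω‖ ≤ 1) {A : ℝ → Set Ω}
    (hA : ∀ u, 0 ≤ u → MeasurableSet[F u] (A u)) {e : ℝ → Ω → ℝ} (he : ∀ u, ∀ ω ∈ A u, e u ω = -1)
    (he' : ∀ u, ∀ ω ∉ A u, e u ω = 1) (n : ℕ) :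
    ∫ ω, Z ω * ex (c * gsum e W a b n ω) ∂μ =
      (∫ ω, Z ω ∂μ) * Complex.exp (-((b - a) * c ^ 2 / 2 : ℝ)) := by
  have key : ∀ k ≤ 2 ^ n,
      let S := fun ω => ∑ i ∈ Finset.range k,
        e (gp a b n i) ω * (W (gp a b n (i + 1)) ω - W (gp a b n i) ω)
      @Measurable Ω ℝ (F (gp a b n k)) _ S ∧
      ∫ ω, Z ω * ex (c * S ω) ∂μ =
      (∫ ω, Z ω ∂μ) * Complex.exp (-((gp a b n k - a) * c ^ 2 / 2 : ℝ)) := by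
    intro k
    induction k with
    | zero =>
      intro _
      refine ⟨?_, ?_⟩
      · simp
      · simp [ex_zero, gp_zero]
    | succ k ih =>
      intro hk
      obtain ⟨h1, h2⟩ := ih (by omega)
      have hk0 : 0 ≤ gp a b n k := ha.trans (gp_ge hab n k)
      have hkk : gp a b n k ≤ gp a b n (k + 1) := gp_mono hab n (Nat.le_succ k)
      have hFm := h.mono hkk
      have hem : @Measurable Ω ℝ (F (gp a b n k)) _ (e (gp a b n k)) := by
        classical
        have : e (gp a b n k) = (A (gp a b n k)).piecewise (fun _ => (-1:ℝ)) (fun _ => 1) := by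
          funext ω
          by_cases hω : ω ∈ A (gp a b n k)
          · simp [hω, he _ ω hω]
          · simp [hω, he' _ ω hω]
        rw [this]
        exact Measurable.piecewise (hA _ hk0)
          (@measurable_const _ _ _ (F (gp a b n k)) _) (@measurable_const _ _ _ (F (gp a b n k)) _)
      refine ⟨?_, ?_⟩
      · simp only [Finset.sum_range_succ]
        refine Measurable.add (Measurable.mono h1 hFm le_rfl) ?_
        exact Measurable.mul (Measurable.mono hem hFm le_rfl)
          ((h.meas (hk0.trans hkk) le_rfl).sub (h.meas hk0 hkk))
      · have h3 := h.sign hk0 hkk c (Z := fun ω => Z ω * ex (c * ∑ i ∈ Finset.range k,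
            e (gp a b n i) ω * (W (gp a b n (i + 1)) ω - W (gp a b n i) ω)))
          (Measurable.mul (Measurable.mono hZ (h.mono (gp_ge hab n k)) le_rfl)
            (measurable_ex.comp (Measurable.const_mul h1 c)))
          (fun ω => by rw [norm_mul, norm_ex, mul_one]; exact hb ω) (hA _ hk0)
          (he _) (he' _)
        rw [h2, mul_assoc, ← Complex.exp_add] at h3
        simp only [Finset.sum_range_succ, mul_add, ex_add]
        simp only [mul_assoc] at h3 ⊢
        rw [h3]
        congr 2
        push_cast
        ring
  have := (key (2 ^ n) le_rfl).2
  rw [gp_last] at this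
  exact this

lemma inc_charfun {Ω : Type*} [mΩ : MeasurableSpace Ω] {μ : Measure Ω} 
    {F : ℝ → MeasurableSpace Ω} {U U' : ℝ → Ω → ℝ} (h : Inc μ F U) (h' : Inc μ F U')
    (s : Finset NNReal) : ∀ c : NNReal → ℝ,
    ∫ ω, ex (∑ u ∈ s, c u * U u ω) ∂μ = ∫ ω, ex (∑ u ∈ s, c u * U' u ω) ∂μ := by
  induction s using Finset.induction_on_max with
  | empty => intro c; simp
  | insert b s hb ih =>
    intro c
    have hbs : b ∉ s := fun hh => lt_irrefl _ (hb b hh)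
    rcases s.eq_empty_or_nonempty with rfl | hne
    · have key : ∀ {X : ℝ → Ω → ℝ}, Inc μ F X → ∫ ω, ex (∑ u ∈ insert b (∅ : Finset NNReal), c u * X u ω) ∂μ
          = (∫ ω, (1:ℂ) ∂μ) * Complex.exp (-(((b:ℝ) - 0) * (c b) ^ 2 / 2 : ℝ)) := by
        intro X hX
        rw [← hX.id 0 b le_rfl b.2 (c b) (fun _ => 1) measurable_const (by simp)]
        refine integral_congr_ae ?_
        filter_upwards [hX.init] with ω hω
        simp [hω]
      rw [key h, key h']
    · set a := s.max' hne with hadef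
      have has : a ∈ s := s.max'_mem hne
      have hab : (a:ℝ) ≤ b := (hb a has).le
      set c' : NNReal → ℝ := fun u => c u + if u = a then c b else 0 with hc'
      have key : ∀ {X : ℝ → Ω → ℝ}, Inc μ F X → ∫ ω, ex (∑ u ∈ insert b s, c u * X u ω) ∂μ
          = (∫ ω, ex (∑ u ∈ s, c' u * X u ω) ∂μ) *
            Complex.exp (-(((b:ℝ) - a) * (c b) ^ 2 / 2 : ℝ)) := by
        intro X hX
        rw [← hX.id a b a.2 hab (c b) (fun ω => ex (∑ u ∈ s, c' u * X u ω)) ?_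
          (fun ω => (norm_ex _).le)]
        · congr 1
          funext ω
          rw [← ex_add]
          congr 1
          rw [Finset.sum_insert hbs]
          simp only [hc', add_mul, Finset.sum_add_distrib, ite_mul, zero_mul, Finset.sum_ite_eq',
            has, if_true]
          ring
        · refine measurable_ex.comp (Finset.measurable_fun_sum _ fun u hu => ?_)
          refine Measurable.const_mul (Measurable.mono (hX.meas u u.2) (hX.mono ?_) le_rfl) _
          exact_mod_cast s.le_max' u hu
      rw [key h, key h', ih]

lemma inc_law {Ω : Type*} [mΩ : MeasurableSpace Ω] {μ : Measure Ω} [IsProbabilityMeasure μ]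
    {F : ℝ → MeasurableSpace Ω} {U U' : ℝ → Ω → ℝ} (h : Inc μ F U) (h' : Inc μ F U') :
    μ.map (fun ω (u : NNReal) => U u ω) = μ.map (fun ω (u : NNReal) => U' u ω) := by
  have m1 : ∀ {X : ℝ → Ω → ℝ}, Inc μ F X → ∀ u : NNReal, Measurable (X u) := fun hX u =>
    Measurable.mono (hX.meas u u.2) (hX.le _) le_rfl
  refine (map_eq_iff_forall_finset_map_restrict_eq
    (X := fun (u : NNReal) ω => U u ω) (Y := fun (u : NNReal) ω => U' u ω)
    (measurable_pi_lambda _ (m1 h)).aemeasurable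
    (measurable_pi_lambda _ (m1 h')).aemeasurable).mpr fun I => ?_
  have m2 : ∀ {X : ℝ → Ω → ℝ}, Inc μ F X → Measurable fun ω => I.restrict (fun u : NNReal => X u ω) :=
    fun hX => measurable_pi_lambda _ fun u => m1 hX u
  haveI := Measure.isProbabilityMeasure_map (μ := μ) (m2 h).aemeasurable
  haveI := Measure.isProbabilityMeasure_map (μ := μ) (m2 h').aemeasurable
  refine Measure.ext_of_charFunDual ?_
  funext L
  classical
  have key : ∀ {X : ℝ → Ω → ℝ}, Inc μ F X →
      charFunDual (μ.map fun ω => I.restrict (fun u : NNReal => X u ω)) L =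
      ∫ ω, ex (∑ u ∈ I, (if hu : u ∈ I then L (Pi.single ⟨u, hu⟩ 1) else 0) * X u ω) ∂μ := by
    intro X hX
    rw [charFunDual_apply, integral_map (m2 hX).aemeasurable
      (Continuous.aestronglyMeasurable (by fun_prop))]
    congr 1
    funext ω
    unfold ex
    congr 3
    rw [← Finset.sum_coe_sort I]
    have e1 : (I.restrict fun u : NNReal => X u ω) = ∑ u : I, (X u ω) • Pi.single u (1:ℝ) := by
      funext v
      simp [Finset.sum_apply, Pi.single_apply]
    rw [e1, map_sum]
    refine Finset.sum_congr rfl fun u _ => ?_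
    simp [mul_comm]
  rw [key h, key h']
  exact inc_charfun h h' I _

/-! ### Reflection at the first zero -/

def zhit {Ω : Type*} (Y : ℝ → Ω → ℝ) (u : ℝ) : Set Ω :=
  {ω | ∀ k : ℕ, ∃ q : ℚ, |Y (clampt u q) ω| < 1 / ((k : ℝ) + 1)}

lemma zhit_meas {Ω : Type*} [G : MeasurableSpace Ω] {Y : ℝ → Ω → ℝ} {u : ℝ}
    (hY : ∀ s ∈ Icc 0 u, Measurable (Y s)) (hu : 0 ≤ u) :
    MeasurableSet (zhit Y u) := by
  have : zhit Y u = ⋂ k : ℕ, ⋃ q : ℚ, {ω | |Y (clampt u q) ω| < 1 / ((k : ℝ) + 1)} := by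
    ext ω; simp [zhit]
  rw [this]
  refine MeasurableSet.iInter fun k => MeasurableSet.iUnion fun q => ?_
  have h1 : Measurable fun ω => |Y (clampt u q) ω| := (hY _ (clampt_mem hu _)).abs
  exact measurableSet_lt h1 measurable_const

lemma zhit_iff {Ω : Type*} {Y : ℝ → Ω → ℝ} {u : ℝ} {ω : Ω} (hc : Continuous fun t => Y t ω)
    (hu : 0 ≤ u) : ω ∈ zhit Y u ↔ ∃ s ∈ Icc 0 u, Y s ω = 0 := by
  constructor
  · intro h
    obtain ⟨s, hs, hmin⟩ := (isCompact_Icc (a := (0:ℝ)) (b := u)).exists_isMinOn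
      ⟨0, left_mem_Icc.mpr hu⟩ hc.abs.continuousOn
    refine ⟨s, hs, ?_⟩
    have h1 : ∀ k : ℕ, |Y s ω| ≤ 1 / ((k : ℝ) + 1) := fun k => by
      obtain ⟨q, hq⟩ := h k
      exact (hmin (clampt_mem hu (q:ℝ))).trans hq.le
    have h2 : |Y s ω| ≤ 0 := ge_of_tendsto' tendsto_one_div_add_atTop_nhds_zero_nat h1
    exact abs_nonpos_iff.mp h2
  · rintro ⟨s, hs, h0⟩ k
    obtain ⟨r, hr⟩ := clampt_surj hs
    have ho : IsOpen {r : ℝ | |Y (clampt u r) ω| < 1 / ((k : ℝ) + 1)} :=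
      isOpen_lt (hc.comp (continuous_clampt u)).abs continuous_const
    have hne : {r : ℝ | |Y (clampt u r) ω| < 1 / ((k : ℝ) + 1)}.Nonempty := by
      refine ⟨r, ?_⟩
      simp only [Set.mem_ofPred_eq, hr, h0, abs_zero]
      positivity
    obtain ⟨x, hx, q, rfl⟩ := (Rat.denseRange_cast (𝕜 := ℝ)).inter_open_nonempty _ ho hne
    exact ⟨q, hx⟩

open Classical in
def eps {Ω : Type*} (Y : ℝ → Ω → ℝ) (u : ℝ) (ω : Ω) : ℝ := if ω ∈ zhit Y u then -1 else 1

/-- `e` is the reflection sign with respect to the first zero `τ` of `f`, up to time `T`. -/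
def Rf (f e : ℝ → ℝ) (τ T : ℝ) : Prop :=
  τ ∈ Icc 0 T ∧ ∀ u ∈ Icc 0 T, (e u = 1 ∧ u ≤ τ) ∨ (e u = -1 ∧ τ ≤ u ∧ f τ = 0)

lemma exists_rf {Ω : Type*} {Y : ℝ → Ω → ℝ} {ω : Ω} (hc : Continuous fun t => Y t ω)
    {T : ℝ} (hT : 0 ≤ T) : ∃ τ, Rf (fun t => Y t ω) (fun t => eps Y t ω) τ T := by
  by_cases h : ∃ s ∈ Icc 0 T, Y s ω = 0
  · have hK : IsCompact (Icc 0 T ∩ {s | Y s ω = 0}) :=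
      isCompact_Icc.inter_right (isClosed_eq hc continuous_const)
    obtain ⟨τ, ⟨h1, h2⟩, h3⟩ := hK.exists_isLeast (by
      obtain ⟨s, hs, h0⟩ := h; exact ⟨s, hs, h0⟩)
    refine ⟨τ, h1, fun u hu => ?_⟩
    by_cases hz : ω ∈ zhit Y u
    · right
      refine ⟨by simp [eps, hz], ?_, h2⟩
      obtain ⟨s, hs, h0⟩ := (zhit_iff hc hu.1).mp hz
      exact (h3 ⟨⟨hs.1, hs.2.trans hu.2⟩, h0⟩).trans hs.2
    · left
      refine ⟨by simp [eps, hz], ?_⟩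
      by_contra hlt
      exact hz ((zhit_iff hc hu.1).mpr ⟨τ, ⟨h1.1, (not_le.mp hlt).le⟩, h2⟩)
  · refine ⟨T, ⟨hT, le_rfl⟩, fun u hu => Or.inl ⟨?_, hu.2⟩⟩
    have hz : ω ∉ zhit Y u := fun hz => by
      obtain ⟨s, hs, h0⟩ := (zhit_iff hc hu.1).mp hz
      exact h ⟨s, ⟨hs.1, hs.2.trans hu.2⟩, h0⟩
    simp [eps, hz]

lemma cross_sum {d : ℕ → ℝ} {p : ℕ → ℝ} (hp : Monotone p) {τ η : ℝ} (hη : 0 ≤ η) (N : ℕ)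
    (h1 : ∀ i < N, p (i + 1) ≤ τ → d i = 0) (h2 : ∀ i < N, τ < p i → d i = 0)
    (h3 : ∀ i < N, |d i| ≤ η) : |∑ i ∈ Finset.range N, d i| ≤ η := by
  have key : ∀ k ≤ N, (p k ≤ τ → ∑ i ∈ Finset.range k, d i = 0) ∧
      |∑ i ∈ Finset.range k, d i| ≤ η := by
    intro k
    induction k with
    | zero => intro _; simp [hη]
    | succ k ih =>
      intro hk
      obtain ⟨a, b⟩ := ih (by omega)
      rw [Finset.sum_range_succ]
      have hmono := hp (Nat.le_succ k)
      refine ⟨fun h => ?_, ?_⟩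
      · rw [a (hmono.trans h), h1 k hk h, add_zero]
      · rcases le_or_gt (p k) τ with h | h
        · rw [a h, zero_add]; exact h3 k hk
        · rw [h2 k hk h, add_zero]; exact b
  exact (key N le_rfl).2

lemma osc_grid {w : ℝ → ℝ} (hw : Continuous w) (T L : ℝ) {ε : ℝ} (hε : 0 < ε) :
    ∀ᶠ n : ℕ in atTop, ∀ s ∈ Icc 0 T, ∀ s' ∈ Icc 0 T, |s - s'| ≤ L / 2 ^ n → |w s - w s'| ≤ ε := by
  have hu := (isCompact_Icc (a := (0:ℝ)) (b := T)).uniformContinuousOn_of_continuous hw.continuousOn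
  obtain ⟨δ, hδ, h⟩ := Metric.uniformContinuousOn_iff.mp hu ε hε
  have ht : Tendsto (fun n : ℕ => L / (2:ℝ) ^ n) atTop (nhds 0) :=
    tendsto_const_nhds.div_atTop (tendsto_pow_atTop_atTop_of_one_lt one_lt_two)
  filter_upwards [ht.eventually (gt_mem_nhds hδ)] with n hn s hs s' hs' hd
  have := h s hs s' hs' (by rw [Real.dist_eq]; linarith)
  rw [Real.dist_eq] at this
  exact this.le

lemma min_diff_le {p q τ : ℝ} (h : p ≤ q) : |min q τ - min p τ| ≤ q - p := by
  rw [abs_of_nonneg (sub_nonneg.mpr (min_le_min_right τ h))]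
  rcases le_total p τ with h1 | h1
  · rw [min_eq_left h1]; linarith [min_le_left q τ]
  · rw [min_eq_right h1]; linarith [min_le_right q τ]

/-- The reflected path. -/
def rflp (w : ℝ → ℝ) (τ u : ℝ) : ℝ := 2 * w (min u τ) - w u

lemma cross_lim {w : ℝ → ℝ} (hw : Continuous w) {a b τ T : ℝ} (ha : 0 ≤ a) (hab : a ≤ b)
    (hb : b ≤ T) (hτ : τ ∈ Icc 0 T) {A B : ℕ → ℝ}
    {α β : ℕ → ℕ → ℝ} (hα : ∀ n i, |α n i| ≤ 1) (hβ : ∀ n i, |β n i| ≤ 1)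
    (hA : ∀ n, A n = ∑ i ∈ Finset.range (2 ^ n), α n i * (w (gp a b n (i + 1)) - w (gp a b n i)))
    (hB : ∀ n, B n = ∑ i ∈ Finset.range (2 ^ n),
      β n i * (rflp w τ (gp a b n (i + 1)) - rflp w τ (gp a b n i)))
    (h1 : ∀ n, ∀ i < 2 ^ n, gp a b n i < τ → gp a b n (i + 1) ≤ τ → α n i = β n i)
    (h2 : ∀ n, ∀ i < 2 ^ n, τ < gp a b n i → α n i = - β n i) :
    Tendsto (fun n => A n - B n) atTop (nhds 0) := by
  rw [Metric.tendsto_atTop']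
  intro ε hε
  obtain ⟨N, hN⟩ := eventually_atTop.mp (osc_grid hw T (b - a) (ε := ε / 5) (by positivity))
  refine ⟨N, fun n hn => ?_⟩
  rw [Real.dist_eq, sub_zero, hA, hB, ← Finset.sum_sub_distrib]
  have hm : ∀ i < 2 ^ n, gp a b n i ∈ Icc 0 T ∧ gp a b n (i + 1) ∈ Icc 0 T := fun i hi =>
    ⟨⟨ha.trans (gp_ge hab _ _), (gp_le hab hi.le).trans hb⟩,
      ⟨ha.trans (gp_ge hab _ _), (gp_le hab hi).trans hb⟩⟩
  have hstep : ∀ i, gp a b n (i + 1) - gp a b n i = (b - a) / 2 ^ n := fun i => by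
    rw [gp_succ]; ring
  have hmin : ∀ u ∈ Icc 0 T, min u τ ∈ Icc 0 T := fun u hu =>
    ⟨le_min hu.1 hτ.1, (min_le_left _ _).trans hu.2⟩
  refine (cross_sum (gp_mono hab n) (τ := τ) (η := 4 * (ε / 5)) (by positivity) (2 ^ n) ?_ ?_ ?_).trans_lt
    (by linarith)
  · intro i hi h
    have hle := gp_mono hab n (Nat.le_succ i)
    have e : rflp w τ (gp a b n (i + 1)) - rflp w τ (gp a b n i) =
        w (gp a b n (i + 1)) - w (gp a b n i) := by
      simp only [rflp, min_eq_left h, min_eq_left (hle.trans h)]; ring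
    rw [e]
    rcases lt_or_eq_of_le (hle.trans h) with h3 | h3
    · rw [h1 n i hi h3 h]; ring
    · have : gp a b n (i + 1) = gp a b n i := le_antisymm (h3 ▸ h) hle
      rw [this]; ring
  · intro i hi h
    have hle := gp_mono hab n (Nat.le_succ i)
    have e : rflp w τ (gp a b n (i + 1)) - rflp w τ (gp a b n i) =
        -(w (gp a b n (i + 1)) - w (gp a b n i)) := by
      simp only [rflp, min_eq_right h.le, min_eq_right (h.le.trans hle)]; ring
    rw [e, h2 n i hi h]; ring
  · intro i hi
    have hle := gp_mono hab n (Nat.le_succ i)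
    have k1 := hN n hn.le _ (hm i hi).2 _ (hm i hi).1 (by
      rw [abs_of_nonneg (sub_nonneg.mpr hle), hstep])
    have k2 := hN n hn.le _ (hmin _ (hm i hi).2) _ (hmin _ (hm i hi).1)
      ((min_diff_le hle).trans (hstep i).le)
    have k3 : |α n i * (w (gp a b n (i + 1)) - w (gp a b n i))| ≤ ε / 5 := by
      rw [abs_mul]
      calc _ ≤ 1 * (ε / 5) := mul_le_mul (hα n i) k1 (abs_nonneg _) zero_le_one
        _ = _ := one_mul _
    have k4 : |rflp w τ (gp a b n (i + 1)) - rflp w τ (gp a b n i)| ≤ 3 * (ε / 5) := by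
      unfold rflp
      rw [abs_le] at k1 k2 ⊢
      constructor <;> linarith [k1.1, k1.2, k2.1, k2.2]
    have k5 : |β n i * (rflp w τ (gp a b n (i + 1)) - rflp w τ (gp a b n i))| ≤ 3 * (ε / 5) := by
      rw [abs_mul]
      calc _ ≤ 1 * (3 * (ε / 5)) := mul_le_mul (hβ n i) k4 (abs_nonneg _) zero_le_one
        _ = _ := one_mul _
    exact (abs_sub _ _).trans (by linarith)

lemma eps_abs {Ω : Type*} (Y : ℝ → Ω → ℝ) (u : ℝ) (ω : Ω) : |eps Y u ω| ≤ 1 := by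
  unfold eps; split_ifs <;> simp

lemma gsum_refl {Ω : Type*} {Y W : ℝ → Ω → ℝ} {ω : Ω} (hW : Continuous fun t => W t ω)
    {a b τ T : ℝ} (ha : 0 ≤ a) (hab : a ≤ b) (hb : b ≤ T)
    (hR : Rf (fun t => Y t ω) (fun t => eps Y t ω) τ T) :
    Tendsto (fun n => gsum (eps Y) W a b n ω) atTop
      (nhds (rflp (fun t => W t ω) τ b - rflp (fun t => W t ω) τ a)) := by
  have h := cross_lim hW ha hab hb hR.1 (A := fun n => gsum (eps Y) W a b n ω)
    (B := fun n => rflp (fun t => W t ω) τ b - rflp (fun t => W t ω) τ a)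
    (α := fun n i => eps Y (gp a b n i) ω) (β := fun _ _ => 1)
    (fun n i => eps_abs _ _ _) (by simp) (fun n => rfl) (fun n => ?_) ?_ ?_
  · have := h.add_const (rflp (fun t => W t ω) τ b - rflp (fun t => W t ω) τ a)
    simpa using this
  · simp only [one_mul]
    rw [Finset.sum_range_sub (fun i => rflp (fun t => W t ω) τ (gp a b n i)), gp_last, gp_zero]
  · intro n i hi h3 _
    rcases hR.2 (gp a b n i) ⟨ha.trans (gp_ge hab _ _), (gp_le hab hi.le).trans hb⟩ with h | h
    · exact h.1
    · linarith [h.2.1]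
  · intro n i hi h3
    rcases hR.2 (gp a b n i) ⟨ha.trans (gp_ge hab _ _), (gp_le hab hi.le).trans hb⟩ with h | h
    · linarith [h.2]
    · exact h.1

lemma rsum_refl {Ω : Type*} {Y W Wd : ℝ → Ω → ℝ} {ω : Ω} (hW : Continuous fun t => W t ω)
    {τ T : ℝ} (hT : 0 ≤ T)
    (hR : Rf (fun t => Y t ω) (fun t => eps Y t ω) τ T)
    (hWd : ∀ u ∈ Icc 0 T, Wd u ω = rflp (fun t => W t ω) τ u)
    (hne : ∀ n i : ℕ, 0 < gp 0 T n i → Y (gp 0 T n i) ω ≠ 0) :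
    Tendsto (fun n => gsum (fun s ω => psgn (Y s ω)) W 0 T n ω -
      gsum (fun s ω => psgn (eps Y s ω * Y s ω)) Wd 0 T n ω) atTop (nhds 0) := by
  refine cross_lim hW le_rfl hT le_rfl hR.1
    (α := fun n i => psgn (Y (gp 0 T n i) ω))
    (β := fun n i => psgn (eps Y (gp 0 T n i) ω * Y (gp 0 T n i) ω))
    (fun n i => (abs_psgn _).le) (fun n i => (abs_psgn _).le) (fun n => rfl) (fun n => ?_) ?_ ?_
  · refine Finset.sum_congr rfl fun i hi => ?_
    have hi := Finset.mem_range.mp hi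
    simp only []
    rw [hWd _ ⟨gp_ge hT _ _, gp_le hT hi.le⟩, hWd _ ⟨gp_ge hT _ _, gp_le hT hi⟩]
  · intro n i hi h3 _
    rcases hR.2 (gp 0 T n i) ⟨gp_ge hT _ _, gp_le hT hi.le⟩ with h | h
    · simp only [] at h ⊢
      rw [h.1, one_mul]
    · linarith [h.2.1]
  · intro n i hi h3
    rcases hR.2 (gp 0 T n i) ⟨gp_ge hT _ _, gp_le hT hi.le⟩ with h | h
    · linarith [h.2]
    · simp only [] at h ⊢
      rw [h.1, neg_one_mul, psgn_neg (hne n i (hR.1.1.trans_lt h3)), neg_neg]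

/-- The reflected Brownian motion. -/
def Wd {Ω : Type*} (Y W : ℝ → Ω → ℝ) (u : ℝ) (ω : Ω) : ℝ :=
  limsup (fun n => gsum (eps Y) W 0 u n ω) atTop

lemma Wd_eq {Ω : Type*} {Y W : ℝ → Ω → ℝ} {ω : Ω} (hW : Continuous fun t => W t ω)
    (h0 : W 0 ω = 0) {τ T : ℝ} (hR : Rf (fun t => Y t ω) (fun t => eps Y t ω) τ T) :
    ∀ u ∈ Icc 0 T, Wd Y W u ω = rflp (fun t => W t ω) τ u := by
  intro u hu
  have := (gsum_refl hW le_rfl hu.1 hu.2 hR).limsup_eq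
  rw [Wd, this]
  simp [rflp, min_eq_left hR.1.1, h0]

lemma eps_meas {Ω : Type*} [G : MeasurableSpace Ω] {Y : ℝ → Ω → ℝ} {u : ℝ}
    (hY : ∀ s ∈ Icc 0 u, Measurable (Y s)) (hu : 0 ≤ u) : Measurable (eps Y u) := by
  unfold eps
  exact Measurable.ite (zhit_meas hY hu) measurable_const measurable_const

lemma Ctx.adapt' {Ω : Type*} [mΩ : MeasurableSpace Ω] {μ : Measure Ω}
    {F : ℝ → MeasurableSpace Ω} {Y W : ℝ → Ω → ℝ} {y lam : ℝ} (h : Ctx μ F Y W y lam)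
    {s u : ℝ} (hs : s ∈ Icc 0 u) : @Measurable Ω ℝ (F u) _ (Y s) :=
  Measurable.mono (h.adapt s hs.1) (h.bm.mono hs.2) le_rfl

lemma Ctx.inc {Ω : Type*} [mΩ : MeasurableSpace Ω] {μ : Measure Ω} [IsProbabilityMeasure μ]
    {F : ℝ → MeasurableSpace Ω} {Y W : ℝ → Ω → ℝ} {y lam : ℝ} (h : Ctx μ F Y W y lam) :
    Inc μ F (Wd Y W) where
  le := h.bm.le
  mono := h.bm.mono
  meas t ht := by
    refine Measurable.limsup fun n => ?_
    unfold gsum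
    refine Finset.measurable_fun_sum _ fun i hi => ?_
    have hi := Finset.mem_range.mp hi
    have k0 := gp_ge ht n i
    have k1 := gp_le ht hi.le
    have k2 := gp_le ht (Nat.succ_le_of_lt hi)
    refine Measurable.mul ?_ ((h.bm.meas (gp_ge ht n (i + 1)) k2).sub (h.bm.meas k0 k1))
    exact @eps_meas Ω (F t) Y _ (fun s hs => h.adapt' ⟨hs.1, hs.2.trans k1⟩) k0
  init := by
    filter_upwards [h.bm.cont, h.cont, h.bm.init] with ω h1 h2 h3
    obtain ⟨τ, hR⟩ := exists_rf h2 le_rfl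
    rw [Wd_eq h1 h3 hR 0 ⟨le_rfl, le_rfl⟩]
    simp [rflp, min_eq_left hR.1.1, h3]
  id a b ha hab c Z hZ hb := by
    have hlim : ∀ᵐ ω ∂μ, Tendsto (fun n => gsum (eps Y) W a b n ω) atTop
        (nhds (Wd Y W b ω - Wd Y W a ω)) := by
      filter_upwards [h.bm.cont, h.cont, h.bm.init] with ω h1 h2 h3
      obtain ⟨τ, hR⟩ := exists_rf h2 (ha.trans hab)
      rw [Wd_eq h1 h3 hR b ⟨ha.trans hab, le_rfl⟩, Wd_eq h1 h3 hR a ⟨ha, hab⟩]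
      exact gsum_refl h1 ha hab le_rfl hR
    have hZm : Measurable Z := Measurable.mono hZ (h.bm.le a) le_rfl
    have hgm : ∀ n, Measurable (gsum (eps Y) W a b n) := fun n => by
      unfold gsum
      refine Finset.measurable_fun_sum _ fun i hi => ?_
      have k0 := ha.trans (gp_ge hab n i)
      refine Measurable.mul ?_ ((h.bm.measm (ha.trans (gp_ge hab n (i + 1)))).sub (h.bm.measm k0))
      exact eps_meas (fun s hs => h.measm hs.1) k0
    have hT := tendsto_integral_of_dominated_convergence (μ := μ)
      (F := fun n ω => Z ω * ex (c * gsum (eps Y) W a b n ω))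
      (f := fun ω => Z ω * ex (c * (Wd Y W b ω - Wd Y W a ω))) (fun _ => (1:ℝ))
      (fun n => (hZm.mul (measurable_ex.comp ((hgm n).const_mul c))).aestronglyMeasurable)
      (integrable_const _)
      (fun n => Eventually.of_forall fun ω => by rw [norm_mul, norm_ex, mul_one]; exact hb ω)
      (by
        filter_upwards [hlim] with ω hω
        exact ((continuous_ex.tendsto _).comp (hω.const_mul c)).const_mul _)
    refine tendsto_nhds_unique hT ?_
    refine tendsto_const_nhds.congr fun n => ?_
    refine (h.bm.gsign ha hab c hZ hb (A := zhit Y)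
      (fun u hu => @zhit_meas Ω (F u) Y u (fun s hs => h.adapt' hs) hu)
      (fun u ω hω => by simp [eps, hω]) (fun u ω hω => by simp [eps, hω]) n).symm

lemma Ctx.refl_eq {Ω : Type*} [mΩ : MeasurableSpace Ω] {μ : Measure Ω} [IsProbabilityMeasure μ]
    {F : ℝ → MeasurableSpace Ω} {Y W : ℝ → Ω → ℝ} {y lam : ℝ} (h : Ctx μ F Y W y lam)
    {T : ℝ} (hT : 0 ≤ T) :
    ∀ᵐ ω ∂μ, Wd Y W 0 ω = 0 ∧ ContinuousOn (fun u => eps Y u ω * Y u ω) (Icc 0 T) ∧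
      ∀ t ∈ Icc 0 T, eps Y t ω * Y t ω =
        y - lam * (∫ s in (0:ℝ)..t, psgn (eps Y s ω * Y s ω)) + Wd Y W t ω := by
  filter_upwards [h.bm.cont, h.cont, h.bm.init, h.eq, h.ae_leb, h.inc.init] with ω h1 h2 h3 h4 h5 h6
  obtain ⟨τ, hR⟩ := exists_rf h2 hT
  have e1 : ∀ u ∈ Icc 0 T, eps Y u ω * Y u ω = 2 * Y (min u τ) ω - Y u ω := by
    intro u hu
    rcases hR.2 u hu with ⟨a, b⟩ | ⟨a, b, c⟩
    · simp only [] at a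
      rw [a, min_eq_left b]; ring
    · simp only [] at a c
      rw [a, min_eq_right b, c]; ring
  refine ⟨h6, ?_, ?_⟩
  · refine ContinuousOn.congr (f := fun u => 2 * Y (min u τ) ω - Y u ω) ?_ e1
    exact (((h2.comp (continuous_id.min continuous_const)).const_mul 2).sub h2).continuousOn
  · intro t ht
    have hmt : 0 ≤ min t τ := le_min ht.1 hR.1.1
    have hmt' : min t τ ≤ t := min_le_left _ _
    rw [Wd_eq h1 h3 hR t ht, e1 t ht, h4 t ht.1, h4 _ hmt]
    have i1 := psgn_intervalIntegrable (h2.continuousOn (s := Icc 0 T)) le_rfl hmt (hmt'.trans ht.2)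
    have i2 := psgn_intervalIntegrable (h2.continuousOn (s := Icc 0 T)) hmt hmt' ht.2
    have j1 : EqOn (fun s => psgn (Y s ω)) (fun s => psgn (eps Y s ω * Y s ω)) (Ioo 0 (min t τ)) := by
      intro s hs
      have hs' : s < τ := hs.2.trans_le (min_le_right _ _)
      rcases hR.2 s ⟨hs.1.le, (hs.2.le.trans hmt').trans ht.2⟩ with ⟨a, b⟩ | ⟨a, b, c⟩
      · simp only [] at a ⊢
        rw [a, one_mul]
      · linarith
    have j2 : ∀ᵐ s, s ∈ uIoc (min t τ) t → - psgn (Y s ω) = psgn (eps Y s ω * Y s ω) := by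
      filter_upwards [h5] with s hs hst
      rw [uIoc_of_le hmt'] at hst
      have hs0 : 0 < s := hmt.trans_lt hst.1
      have hs' : τ < s := by
        rcases min_lt_iff.mp hst.1 with h | h
        · exact absurd hst.2 (not_le.mpr h)
        · exact h
      rcases hR.2 s ⟨hs0.le, hst.2.trans ht.2⟩ with ⟨a, b⟩ | ⟨a, b, c⟩
      · linarith
      · simp only [] at a
        rw [a, neg_one_mul, psgn_neg (hs hs0)]
    have j1' : ∀ᵐ s, s ∈ uIoc 0 (min t τ) → psgn (Y s ω) = psgn (eps Y s ω * Y s ω) := by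
      have : ∀ᵐ s : ℝ, s ≠ min t τ := by
        simp [ae_iff]
      filter_upwards [this] with s hs hst
      rw [uIoc_of_le hmt] at hst
      exact j1 ⟨hst.1, lt_of_le_of_ne hst.2 hs⟩
    have i1' : IntervalIntegrable (fun s => psgn (eps Y s ω * Y s ω)) volume 0 (min t τ) :=
      i1.congr_ae ((ae_restrict_iff' measurableSet_uIoc).mpr j1')
    have i2' : IntervalIntegrable (fun s => psgn (eps Y s ω * Y s ω)) volume (min t τ) t :=
      i2.neg.congr_ae ((ae_restrict_iff' measurableSet_uIoc).mpr j2)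
    rw [← intervalIntegral.integral_add_adjacent_intervals i1 i2,
      ← intervalIntegral.integral_add_adjacent_intervals i1' i2',
      ← intervalIntegral.integral_congr_ae j1', ← intervalIntegral.integral_congr_ae j2,
      intervalIntegral.integral_neg]
    unfold rflp
    ring

/-! ### Strictness of the inclusion -/

def pth {Ω : Type*} (U : ℝ → Ω → ℝ) (ω : Ω) : NNReal → ℝ := fun u => U u ω

def Phi (lam y s : ℝ) (p : NNReal → ℝ) : ℝ :=
  limsup (fun n : ℕ => euler lam y s n (fun u => p u.toNNReal) (2 ^ n)) atTop

def rsP (lam y s : ℝ) (n : ℕ) (p : NNReal → ℝ) : ℝ :=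
  ∑ i ∈ Finset.range (2 ^ n), psgn (Phi lam y (gp 0 s n i) p) *
    (p (gp 0 s n (i + 1)).toNNReal - p (gp 0 s n i).toNNReal)

lemma measurable_Phi (lam y s : ℝ) : Measurable (Phi lam y s) := by
  refine Measurable.limsup fun n => ?_
  exact measurable_euler (Ω := NNReal → ℝ) inferInstance (W := fun u p => p u.toNNReal) (N := 2 ^ n)
    (fun k _ => measurable_pi_apply _) _ le_rfl

lemma measurable_rsP (lam y s : ℝ) (n : ℕ) : Measurable (rsP lam y s n) := by
  unfold rsP
  refine Finset.measurable_fun_sum _ fun i _ => ?_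
  exact (measurable_psgn.comp (measurable_Phi _ _ _)).mul
    ((measurable_pi_apply _).sub (measurable_pi_apply _))

lemma Phi_eq {Ω : Type*} {lam y s : ℝ} (hl : 0 ≤ lam) (hs : 0 ≤ s) {U : ℝ → Ω → ℝ} {ω : Ω} {Y : ℝ → ℝ}
    (hY : ContinuousOn Y (Icc 0 s)) (h0 : U 0 ω = 0)
    (heq : ∀ t ∈ Icc 0 s, Y t = y - lam * (∫ r in (0:ℝ)..t, psgn (Y r)) + U t ω) :
    Phi lam y s (pth U ω) = Y s := by
  refine (euler_conv hl hs hY (w := fun u => pth U ω u.toNNReal) ?_ ?_).limsup_eq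
  · simp [pth, h0]
  · intro t ht
    rw [heq t ht]
    simp [pth, Real.coe_toNNReal _ ht.1]

def CC {Ω E : Type*} [mΩ : MeasurableSpace Ω] [MeasurableSpace E] (μ : Measure Ω) (f g : Ω → E) :
    MeasurableSpace Ω where
  MeasurableSet' A := ∃ S : Set E, MeasurableSet S ∧ A =ᵐ[μ] f ⁻¹' S ∧ A =ᵐ[μ] g ⁻¹' S
  measurableSet_empty := ⟨∅, MeasurableSet.empty, by simp, by simp⟩
  measurableSet_compl := by
    rintro A ⟨S, hS, h1, h2⟩
    exact ⟨Sᶜ, hS.compl, h1.compl, h2.compl⟩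
  measurableSet_iUnion := by
    intro A hA
    choose S hS h1 h2 using hA
    refine ⟨⋃ i, S i, MeasurableSet.iUnion hS, ?_, ?_⟩
    · rw [preimage_iUnion]; exact EventuallyEq.countable_iUnion h1
    · rw [preimage_iUnion]; exact EventuallyEq.countable_iUnion h2

lemma cpl_CC {Ω E : Type*} [mΩ : MeasurableSpace Ω] [MeasurableSpace E] (μ : Measure Ω)
    (f g : Ω → E) : Cpl μ (CC μ f g) := by
  intro A hA
  refine ⟨∅, MeasurableSet.empty, ?_, ?_⟩ <;> simpa using ae_eq_empty.mpr hA

lemma meas_CC {Ω E : Type*} [mΩ : MeasurableSpace Ω] [MeasurableSpace E] {μ : Measure Ω}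
    {f g : Ω → E} {V : Ω → ℝ} {Ψ : E → ℝ} (hΨ : Measurable Ψ)
    (h1 : ∀ᵐ ω ∂μ, Ψ (f ω) = V ω) (h2 : ∀ᵐ ω ∂μ, Ψ (g ω) = V ω) :
    @Measurable Ω ℝ (CC μ f g) _ V := by
  intro B hB
  refine ⟨Ψ ⁻¹' B, hΨ hB, ?_, ?_⟩
  · filter_upwards [h1] with ω hω
    change (V ω ∈ B) = (Ψ (f ω) ∈ B)
    rw [hω]
  · filter_upwards [h2] with ω hω
    change (V ω ∈ B) = (Ψ (g ω) ∈ B)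
    rw [hω]

lemma Ctx.Phi_W {Ω : Type*} [mΩ : MeasurableSpace Ω] {μ : Measure Ω} [IsProbabilityMeasure μ]
    {F : ℝ → MeasurableSpace Ω} {Y W : ℝ → Ω → ℝ} {y lam : ℝ} (h : Ctx μ F Y W y lam)
    {s : ℝ} (hs : 0 ≤ s) : ∀ᵐ ω ∂μ, Phi lam y s (pth W ω) = Y s ω := by
  filter_upwards [h.cont, h.bm.init, h.eq] with ω h1 h2 h3
  exact Phi_eq (Y := fun t => Y t ω) h.lam0 hs h1.continuousOn h2 fun t ht => h3 t ht.1

lemma Ctx.Phi_Wd {Ω : Type*} [mΩ : MeasurableSpace Ω] {μ : Measure Ω} [IsProbabilityMeasure μ]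
    {F : ℝ → MeasurableSpace Ω} {Y W : ℝ → Ω → ℝ} {y lam : ℝ} (h : Ctx μ F Y W y lam)
    {s : ℝ} (hs : 0 ≤ s) : ∀ᵐ ω ∂μ, Phi lam y s (pth (Wd Y W) ω) = eps Y s ω * Y s ω := by
  filter_upwards [h.refl_eq hs] with ω h1
  exact Phi_eq (Y := fun t => eps Y t ω * Y t ω) h.lam0 hs h1.2.1 h1.1 h1.2.2

lemma Ctx.V_CC {Ω : Type*} [mΩ : MeasurableSpace Ω] {μ : Measure Ω} [IsProbabilityMeasure μ]
    {F : ℝ → MeasurableSpace Ω} {Y W V : ℝ → Ω → ℝ} {y lam : ℝ} (h : Ctx μ F Y W y lam)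
    (hV : IsSI μ (fun s ω => psgn (Y s ω)) W V) {s : ℝ} (hs : 0 ≤ s) :
    @Measurable Ω ℝ (CC μ (pth W) (pth (Wd Y W))) _ (V s) := by
  obtain ⟨ns, hns, hlim⟩ := (hV.2 s hs).exists_seq_tendsto_ae
  have hg : ∀ n i : ℕ, 0 ≤ gp 0 s n i := fun n i => gp_ge hs n i
  have a1 : ∀ᵐ ω ∂μ, ∀ n i : ℕ, Phi lam y (gp 0 s n i) (pth W ω) = Y (gp 0 s n i) ω :=
    ae_all_iff.mpr fun n => ae_all_iff.mpr fun i => h.Phi_W (hg n i)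
  have a2 : ∀ᵐ ω ∂μ, ∀ n i : ℕ, Phi lam y (gp 0 s n i) (pth (Wd Y W) ω) =
      eps Y (gp 0 s n i) ω * Y (gp 0 s n i) ω :=
    ae_all_iff.mpr fun n => ae_all_iff.mpr fun i => h.Phi_Wd (hg n i)
  have a3 : ∀ᵐ ω ∂μ, ∀ n i : ℕ, 0 < gp 0 s n i → Y (gp 0 s n i) ω ≠ 0 := by
    refine ae_all_iff.mpr fun n => ae_all_iff.mpr fun i => ?_
    by_cases hp : 0 < gp 0 s n i
    · filter_upwards [h.zero_null hp] with ω hω _ using hω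
    · exact Eventually.of_forall fun ω h => absurd h hp
  have b1 : ∀ᵐ ω ∂μ, Tendsto (fun k => rsP lam y s (ns k) (pth W ω)) atTop (nhds (V s ω)) := by
    filter_upwards [hlim, a1] with ω h1 h2
    refine h1.congr fun k => ?_
    rw [rsum_eq]
    simp only [gsum, rsP, h2]
    simp [pth, Real.coe_toNNReal _ (hg _ _)]
  have b2 : ∀ᵐ ω ∂μ, Tendsto (fun k => rsP lam y s (ns k) (pth (Wd Y W) ω)) atTop
      (nhds (V s ω)) := by
    filter_upwards [hlim, a2, a3, h.bm.cont, h.cont, h.bm.init] with ω h1 h2 h3 h4 h5 h6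
    obtain ⟨τ, hR⟩ := exists_rf h5 hs
    have c1 := (rsum_refl (Wd := Wd Y W) h4 hs hR (Wd_eq h4 h6 hR) h3).comp hns.tendsto_atTop
    have c2 := h1.sub c1
    rw [sub_zero] at c2
    refine c2.congr fun k => ?_
    simp only [Function.comp, rsum_eq]
    simp only [gsum, rsP, h2]
    simp [pth, Real.coe_toNNReal _ (hg _ _)]
  refine meas_CC (Ψ := fun p => limsup (fun k => rsP lam y s (ns k) p) atTop)
    (Measurable.limsup fun k => measurable_rsP _ _ _ _) ?_ ?_
  · filter_upwards [b1] with ω hω using hω.limsup_eq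
  · filter_upwards [b2] with ω hω using hω.limsup_eq

lemma Ctx.hit_pos {Ω : Type*} [mΩ : MeasurableSpace Ω] {μ : Measure Ω} [IsProbabilityMeasure μ]
    {F : ℝ → MeasurableSpace Ω} {Y W : ℝ → Ω → ℝ} {y lam : ℝ} (h : Ctx μ F Y W y lam)
    {t : ℝ} (ht : 0 < t) : ¬ ∀ᵐ ω ∂μ, ω ∉ zhit Y t := by
  intro hno
  have hlaw := h.bm.law 0 t le_rfl ht.le
  have hm : Measurable fun ω => W t ω - W 0 ω := (h.bm.measm ht.le).sub (h.bm.measm le_rfl)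
  have hv : (t - 0).toNNReal ≠ 0 := by simp [ht]
  have gpos : ∀ S : Set ℝ, MeasurableSet S → volume S ≠ 0 →
      ∃ᵐ ω ∂μ, W t ω - W 0 ω ∈ S := by
    intro S hS hvol hcon
    apply hvol
    refine gaussianReal_absolutelyContinuous' 0 hv ?_
    rw [← hlaw, Measure.map_apply hm hS]
    have : ∀ᵐ ω ∂μ, ¬ (W t ω - W 0 ω ∈ S) := hcon
    rw [ae_iff] at this
    simp only [not_not] at this
    exact this
  have good : ∀ᵐ ω ∂μ, ω ∉ zhit Y t ∧ (Continuous fun t => Y t ω) ∧ Y 0 ω = y ∧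
      |Y t ω - y - (W t ω - W 0 ω)| ≤ lam * t := by
    filter_upwards [hno, h.cont, h.eq, h.init] with ω h1 h2 h3 h4
    refine ⟨h1, h2, h4, ?_⟩
    have := drift_bound h.lam0 h2 h3 le_rfl ht.le
    rw [sub_zero, h4] at this
    exact this
  rcases le_total 0 y with hy | hy
  · obtain ⟨ω, hω, h1, h2, h3, h4⟩ := ((gpos (Iio (-y - lam * t)) measurableSet_Iio (by simp)).and_eventually good).exists
    apply h1
    rw [zhit_iff h2 ht.le]
    have hneg : Y t ω ≤ 0 := by
      have := (abs_le.mp h4).2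
      have hω' : W t ω - W 0 ω < -y - lam * t := hω
      linarith
    have := intermediate_value_Icc' ht.le h2.continuousOn (f := fun t => Y t ω)
      (show (0:ℝ) ∈ Icc (Y t ω) (Y 0 ω) from ⟨hneg, h3 ▸ hy⟩)
    obtain ⟨s, hs, hs0⟩ := this
    exact ⟨s, hs, hs0⟩
  · obtain ⟨ω, hω, h1, h2, h3, h4⟩ := ((gpos (Ioi (-y + lam * t)) measurableSet_Ioi (by simp)).and_eventually good).exists
    apply h1
    rw [zhit_iff h2 ht.le]
    have hneg : 0 ≤ Y t ω := by
      have := (abs_le.mp h4).1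
      have hω' : -y + lam * t < W t ω - W 0 ω := hω
      linarith
    have := intermediate_value_Icc ht.le h2.continuousOn (f := fun t => Y t ω)
      (show (0:ℝ) ∈ Icc (Y 0 ω) (Y t ω) from ⟨h3 ▸ hy, hneg⟩)
    obtain ⟨s, hs, hs0⟩ := this
    exact ⟨s, hs, hs0⟩

lemma Ctx.strict {Ω : Type*} [mΩ : MeasurableSpace Ω] {μ : Measure Ω} [IsProbabilityMeasure μ]
    {F : ℝ → MeasurableSpace Ω} {Y W V : ℝ → Ω → ℝ} {y lam : ℝ} (h : Ctx μ F Y W y lam)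
    (hV : IsSI μ (fun s ω => psgn (Y s ω)) W V) {t : ℝ} (ht : 0 < t) :
    ¬ @Measurable Ω ℝ (natFilt μ V t) _ (Y t) := by
  intro hcon
  have hle : natFilt μ V t ≤ CC μ (pth W) (pth (Wd Y W)) :=
    natFilt_le (cpl_CC _ _ _) fun s hs => h.V_CC hV hs.1
  obtain ⟨S, hS, h1, h2⟩ := hle _ (hcon (measurableSet_Ioi (a := (0:ℝ))))
  have hlaw : μ.map (pth W) = μ.map (pth (Wd Y W)) := inc_law h.bm.inc h.inc
  have m1 : Measurable (pth W) := measurable_pi_lambda _ fun u => h.bm.measm u.2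
  have m2 : Measurable (pth (Wd Y W)) := measurable_pi_lambda _ fun u =>
    Measurable.mono (h.inc.meas u u.2) (h.bm.le _) le_rfl
  have hQ : MeasurableSet {p | p ∈ S ↔ 0 < Phi lam y t p} :=
    MeasurableSet.iff hS (measurableSet_lt measurable_const (measurable_Phi _ _ _))
  have q1 : ∀ᵐ ω ∂μ, (pth W ω ∈ S ↔ 0 < Phi lam y t (pth W ω)) := by
    filter_upwards [h1, h.Phi_W ht.le] with ω e1 e2
    rw [e2]
    exact (iff_of_eq e1).symm
  have q2 : ∀ᵐ p ∂(μ.map (pth (Wd Y W))), (p ∈ S ↔ 0 < Phi lam y t p) := by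
    rw [← hlaw]
    exact (ae_map_iff m1.aemeasurable hQ).mpr q1
  have q3 := (ae_map_iff m2.aemeasurable hQ).mp q2
  refine h.hit_pos ht ?_
  filter_upwards [h2, h.Phi_Wd ht.le, q3, h.zero_null ht] with ω e1 e2 e3 e4 hz
  rw [e2] at e3
  have e5 : 0 < Y t ω ↔ 0 < eps Y t ω * Y t ω := (iff_of_eq e1).trans e3
  have : eps Y t ω = -1 := by simp [eps, hz]
  rw [this] at e5
  rcases lt_or_gt_of_ne e4 with hlt | hgt
  · have := e5.mpr (by linarith); linarith
  · have := e5.mp hgt; linarith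

/-- Proposition 1 of the paper. In the degenerate case `σ = 0, ρ = 1`
one has, for every `0 < t < ∞`,
`𝔉^{(R₁,R₂)}(t) = 𝔉^V(t) = 𝔉^{X₁+X₂}(t) ⊊ 𝔉^{(X₁,X₂)}(t) = 𝔉^Y(t) = 𝔉^{X₁−X₂}(t) = 𝔉^W(t)`,
where the inclusion is strict. -/
theorem degenerate_filtration_relations
    (g h : ℝ) (hg : 0 ≤ g) (hh : 0 ≤ h) (hgh : 0 < g + h) (x₁ x₂ : ℝ)
    {Ω : Type*} [mΩ : MeasurableSpace Ω] (μ : Measure Ω) [IsProbabilityMeasure μ]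
    (F : ℝ → MeasurableSpace Ω) (B₁ B₂ X₁ X₂ Y W V : ℝ → Ω → ℝ)
    (hBM : IsPlanarBM μ F B₁ B₂)
    (hsol : Solves11 μ F g h 1 0 x₁ x₂ B₁ B₂ X₁ X₂)
    (hYdef : ∀ t ω, Y t ω = X₁ t ω - X₂ t ω)
    (hW : IsBM μ F W)
    (hYeq : ∀ᵐ ω ∂μ, ∀ t : ℝ, 0 ≤ t →
      Y t ω = (x₁ - x₂) - (g + h) * (∫ s in (0:ℝ)..t, psgn (Y s ω)) + W t ω)
    (hV : IsSI μ (fun s ω => psgn (Y s ω)) W V) :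
    ∀ t : ℝ, 0 < t →
      natFilt μ (fun s ω => (max (X₁ s ω) (X₂ s ω), min (X₁ s ω) (X₂ s ω))) t =
          natFilt μ V t ∧
      natFilt μ V t = natFilt μ (fun s ω => X₁ s ω + X₂ s ω) t ∧
      natFilt μ V t < natFilt μ (fun s ω => (X₁ s ω, X₂ s ω)) t ∧
      natFilt μ (fun s ω => (X₁ s ω, X₂ s ω)) t = natFilt μ Y t ∧
      natFilt μ Y t = natFilt μ (fun s ω => X₁ s ω - X₂ s ω) t ∧
      natFilt μ (fun s ω => X₁ s ω - X₂ s ω) t = natFilt μ W t := by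
  intro t ht
  obtain ⟨hB₁, hB₂, -⟩ := hBM
  obtain ⟨hadapt, hcont, I₁, I₂, hI₁, hI₂, hX⟩ := hsol
  have hYfun : Y = fun s ω => X₁ s ω - X₂ s ω := by funext s ω; exact hYdef s ω
  have hle : ∀ s ω, X₁ s ω ≤ X₂ s ω ↔ Y s ω ≤ 0 := fun s ω => by rw [hYdef, sub_nonpos]
  have mX : ∀ s, 0 ≤ s → @Measurable Ω (ℝ × ℝ) (F s) _ (fun ω => (X₁ s ω, X₂ s ω)) := fun s hs =>
    Measurable.mono (comap_measurable _) (hadapt s hs) le_rfl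
  have ctx : Ctx μ F Y W (x₁ - x₂) (g + h) := by
    refine ⟨hW, hgh.le, fun s hs => ?_, ?_, hYeq⟩
    · rw [hYfun]
      exact (measurable_fst.comp (mX s hs)).sub (measurable_snd.comp (mX s hs))
    · filter_upwards [hcont] with ω hω
      simp only [hYdef]
      exact hω.1.sub hω.2
  simp only [hle] at hI₁ hI₂ hX
  -- the driving identities
  have hpq : ∀ᵐ ω ∂μ, ∀ s : ℝ, 0 ≤ s →
      W s ω = I₁ s ω - I₂ s ω ∧
      X₁ s ω + X₂ s ω = x₁ + x₂ + (g - h) * s + (I₁ s ω + I₂ s ω) := by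
    filter_upwards [hX, hYeq, ctx.cont] with ω h1 h2 h3 s hs
    obtain ⟨k1, k2⟩ := h1 s hs
    have k3 := h2 s hs
    have ip := psgn_intervalIntegrable (h3.continuousOn (s := Icc 0 s)) le_rfl hs le_rfl
    have e1 : (fun r => if Y r ω ≤ 0 then g else -h) =
        fun r => (g - h) / 2 + (-(g + h) / 2) * psgn (Y r ω) := by
      funext r
      unfold psgn
      by_cases hr : Y r ω ≤ 0
      · simp only [hr, if_true, not_lt.mpr hr, if_false]; ring
      · simp only [hr, not_le.mp hr, if_true, if_false]; ring
    have e2 : (fun r => if Y r ω ≤ 0 then -h else g) =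
        fun r => (g - h) / 2 + ((g + h) / 2) * psgn (Y r ω) := by
      funext r
      unfold psgn
      by_cases hr : Y r ω ≤ 0
      · simp only [hr, if_true, not_lt.mpr hr, if_false]; ring
      · simp only [hr, not_le.mp hr, if_true, if_false]; ring
    rw [e1, intervalIntegral.integral_add (by simp) (ip.const_mul _),
      intervalIntegral.integral_const_mul, intervalIntegral.integral_const] at k1
    rw [e2, intervalIntegral.integral_add (by simp) (ip.const_mul _),
      intervalIntegral.integral_const_mul, intervalIntegral.integral_const] at k2
    rw [hYdef] at k3
    simp only [smul_eq_mul] at k1 k2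
    constructor
    · linarith
    · linarith
  set S : ℝ → Ω → ℝ := fun s ω => X₁ s ω + X₂ s ω - (x₁ + x₂ + (g - h) * s) with hS
  have hSc : ∀ᵐ ω ∂μ, Continuous fun s => S s ω := by
    filter_upwards [hcont] with ω hω
    exact (hω.1.add hω.2).sub (by fun_prop)
  have hSV : ∀ s, 0 ≤ s → V s =ᵐ[μ] S s := by
    intro s hs
    filter_upwards [ctx.V_eq hB₁ hB₂ hV hI₁ hI₂
      (by filter_upwards [hpq] with ω hω r hr using (hω r hr).1) hs, hpq] with ω h1 h2
    rw [h1, hS]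
    have := (h2 s hs).2
    simp only []
    linarith
  -- the measurability facts, for every complete `G`
  have absm : ∀ {G : MeasurableSpace Ω}, @Cpl Ω mΩ μ G → ∀ {s : ℝ}, 0 ≤ s →
      (∀ r ∈ Icc 0 s, @Measurable Ω ℝ G _ (fun ω => X₁ r ω + X₂ r ω)) →
      @Measurable Ω ℝ G _ (fun ω => |Y s ω|) := by
    intro G hG s hs hm
    exact Ctx.abs_le_V (mΩ := mΩ) ctx hV hSc hSV hs hG fun r hr => (hm r hr).sub measurable_const
  have sum_of_V : ∀ {G : MeasurableSpace Ω}, @Cpl Ω mΩ μ G → ∀ {s : ℝ}, 0 ≤ s →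
      @Measurable Ω ℝ G _ (V s) → @Measurable Ω ℝ G _ (fun ω => X₁ s ω + X₂ s ω) := by
    intro G hG s hs hm
    refine meas_of_ae_eq (mΩ := mΩ) hG (Measurable.add hm
      (@measurable_const _ _ _ G (x₁ + x₂ + (g - h) * s))) ?_
    filter_upwards [hSV s hs] with ω hω
    change V s ω + (x₁ + x₂ + (g - h) * s) = X₁ s ω + X₂ s ω
    rw [hω, hS]
    ring
  have V_of_sum : ∀ {G : MeasurableSpace Ω}, @Cpl Ω mΩ μ G → ∀ {s : ℝ}, 0 ≤ s →
      @Measurable Ω ℝ G _ (fun ω => X₁ s ω + X₂ s ω) → @Measurable Ω ℝ G _ (V s) := by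
    intro G hG s hs hm
    exact meas_of_ae_eq (mΩ := mΩ) hG (Measurable.sub hm
      (@measurable_const _ _ _ G (x₁ + x₂ + (g - h) * s))) (hSV s hs).symm
  have sub0 : ∀ {s r : ℝ}, s ∈ Icc 0 t → r ∈ Icc 0 s → r ∈ Icc 0 t := fun hs hr =>
    ⟨hr.1, hr.2.trans hs.2⟩
  have E2 : natFilt μ V t = natFilt μ (fun s ω => X₁ s ω + X₂ s ω) t := by
    apply le_antisymm
    · refine natFilt_le (cpl_natFilt _ _ _) fun s hs => ?_
      exact V_of_sum (cpl_natFilt _ _ _) hs.1 (meas_natFilt μ (fun s ω => X₁ s ω + X₂ s ω) hs)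
    · refine natFilt_le (cpl_natFilt _ _ _) fun s hs => ?_
      exact sum_of_V (cpl_natFilt _ _ _) hs.1 (meas_natFilt μ V hs)
  have E1 : natFilt μ (fun s ω => (max (X₁ s ω) (X₂ s ω), min (X₁ s ω) (X₂ s ω))) t =
      natFilt μ V t := by
    apply le_antisymm
    · refine natFilt_le (cpl_natFilt _ _ _) fun s hs => ?_
      have c1 : @Measurable Ω ℝ (natFilt μ V t) _ (fun ω => X₁ s ω + X₂ s ω) :=
        sum_of_V (cpl_natFilt _ _ _) hs.1 (meas_natFilt μ V hs)
      have c2 : @Measurable Ω ℝ (natFilt μ V t) _ (fun ω => |Y s ω|) :=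
        absm (cpl_natFilt _ _ _) hs.1 fun r hr =>
          sum_of_V (cpl_natFilt _ _ _) hr.1 (meas_natFilt μ V (sub0 hs hr))
      have e1 : (fun ω => max (X₁ s ω) (X₂ s ω)) = fun ω => ((X₁ s ω + X₂ s ω) + |Y s ω|) / 2 := by
        funext ω
        rw [hYdef]
        rcases le_total (X₁ s ω) (X₂ s ω) with hc | hc
        · rw [max_eq_right hc, abs_of_nonpos (sub_nonpos.mpr hc)]; ring
        · rw [max_eq_left hc, abs_of_nonneg (sub_nonneg.mpr hc)]; ring
      have e2 : (fun ω => min (X₁ s ω) (X₂ s ω)) = fun ω => ((X₁ s ω + X₂ s ω) - |Y s ω|) / 2 := by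
        funext ω
        rw [hYdef]
        rcases le_total (X₁ s ω) (X₂ s ω) with hc | hc
        · rw [min_eq_left hc, abs_of_nonpos (sub_nonpos.mpr hc)]; ring
        · rw [min_eq_right hc, abs_of_nonneg (sub_nonneg.mpr hc)]; ring
      refine Measurable.prodMk ?_ ?_
      · rw [e1]; exact (Measurable.add c1 c2).div_const 2
      · rw [e2]; exact (Measurable.sub c1 c2).div_const 2
    · refine natFilt_le (cpl_natFilt _ _ _) fun s hs => ?_
      refine V_of_sum (cpl_natFilt _ _ _) hs.1 ?_
      have c := meas_natFilt μ (fun s ω => (max (X₁ s ω) (X₂ s ω), min (X₁ s ω) (X₂ s ω))) hs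
      have e : (fun ω => X₁ s ω + X₂ s ω) = fun ω => max (X₁ s ω) (X₂ s ω) + min (X₁ s ω) (X₂ s ω) := by
        funext ω; rw [max_add_min]
      rw [e]
      exact (measurable_fst.comp c).add (measurable_snd.comp c)
  have mY : ∀ {s : ℝ}, s ∈ Icc 0 t → @Measurable Ω ℝ (natFilt μ Y t) _ (Y s) := fun hs =>
    meas_natFilt μ Y hs
  have mW : ∀ {s : ℝ}, s ∈ Icc 0 t → @Measurable Ω ℝ (natFilt μ Y t) _ (W s) := fun hs =>
    ctx.W_of_Y hs.1 (cpl_natFilt _ _ _) fun r hr => mY (sub0 hs hr)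
  have mV : ∀ {s : ℝ}, s ∈ Icc 0 t → @Measurable Ω ℝ (natFilt μ Y t) _ (V s) := fun hs =>
    Ctx.V_of_YW hV hs.1 (cpl_natFilt _ _ _) (fun r hr => mY (sub0 hs hr))
      (fun r hr => mW (sub0 hs hr))
  have E4 : natFilt μ (fun s ω => (X₁ s ω, X₂ s ω)) t = natFilt μ Y t := by
    apply le_antisymm
    · refine natFilt_le (cpl_natFilt _ _ _) fun s hs => ?_
      have c1 := sum_of_V (cpl_natFilt μ Y t) hs.1 (mV hs)
      have c2 := mY hs
      have e1 : X₁ s = fun ω => ((X₁ s ω + X₂ s ω) + Y s ω) / 2 := by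
        funext ω; rw [hYdef]; ring
      have e2 : X₂ s = fun ω => ((X₁ s ω + X₂ s ω) - Y s ω) / 2 := by
        funext ω; rw [hYdef]; ring
      refine Measurable.prodMk ?_ ?_
      · change @Measurable Ω ℝ (natFilt μ Y t) _ (X₁ s)
        rw [e1]; exact (Measurable.add c1 c2).div_const 2
      · change @Measurable Ω ℝ (natFilt μ Y t) _ (X₂ s)
        rw [e2]; exact (Measurable.sub c1 c2).div_const 2
    · refine natFilt_le (cpl_natFilt _ _ _) fun s hs => ?_
      have c := meas_natFilt μ (fun s ω => (X₁ s ω, X₂ s ω)) hs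
      have e : Y s = fun ω => X₁ s ω - X₂ s ω := by funext ω; exact hYdef s ω
      rw [e]
      exact (measurable_fst.comp c).sub (measurable_snd.comp c)
  have E5 : natFilt μ Y t = natFilt μ (fun s ω => X₁ s ω - X₂ s ω) t := by rw [hYfun]
  have E6 : natFilt μ Y t = natFilt μ W t := by
    apply le_antisymm
    · refine natFilt_le (cpl_natFilt _ _ _) fun s hs => ?_
      exact ctx.Y_of_W hs.1 (cpl_natFilt _ _ _) fun r hr => meas_natFilt μ W (sub0 hs hr)
    · exact natFilt_le (cpl_natFilt _ _ _) fun s hs => mW hs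
  refine ⟨E1, E2, ?_, E4, E5, E5 ▸ E6⟩
  rw [E4]
  refine lt_of_le_not_ge (natFilt_le (cpl_natFilt _ _ _) fun s hs => mV hs) fun hcon => ?_
  refine ctx.strict hV ht ?_
  exact Measurable.mono (mY ⟨ht.le, le_rfl⟩) hcon le_rfl

end SDEPaper
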